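/- Let Ω be an open set in ℝ^{2n} with an almost complex structure J and let D ⊆ Ω be a domain. Then the Kobayashi–Royden infinitesimal pseudometric (p,v) ↦ K_{(D,J)}(p,v) is upper semicontinuous on D × ℝ^{2n}. -/

import Mathlib

open Metric Set Filter Topology Asymptotics

noncomputable section

/-- The standard complex structure `J_st` (multiplication by `i`) on a complex
normed space, viewed as a real-linear endomorphism. -/
def Jst (E : Type*) [NormedAddCommGroup E] [NormedSpace ℂ E] : E →L[ℝ] E :=
  ContinuousLinearMap.restrictScalars ℝ (Complex.I • ContinuousLinearMap.id ℂ E)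

variable {E F : Type*} [NormedAddCommGroup E] [NormedSpace ℂ E]
  [NormedAddCommGroup F] [NormedSpace ℂ F]

/-- `J` is an almost complex structure on the set `Ω`: a smooth field of real-linear
endomorphisms with `J x ∘ J x = -id`. -/
structure IsACS (Ω : Set E) (J : E → E →L[ℝ] E) : Prop where
  smooth : ContDiffOn ℝ (⊤ : ℕ∞) J Ω
  sq : ∀ x ∈ Ω, (J x).comp (J x) = -(ContinuousLinearMap.id ℝ E)

/-- `f` is `(J', J)`-holomorphic on `s`: `Df(x) ∘ J'(x) = J(f x) ∘ Df(x)`. -/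
def IsHolomorphicMapOn (J' : E → E →L[ℝ] E) (J : F → F →L[ℝ] F) (f : E → F)
    (s : Set E) : Prop :=
  ∀ x ∈ s, DifferentiableAt ℝ f x ∧
    (fderiv ℝ f x).comp (J' x) = (J (f x)).comp (fderiv ℝ f x)

/-- The Levi form `L^J(r)(x)(X) = -d(J⋆dr)(x)(X, J x X)` where `J⋆dr` is the 1-form
`X ↦ dr(x)(J x X)` and `dω(x)(X,Y) = (Dω(x)X)(Y) - (Dω(x)Y)(X)`. -/
def leviForm (J : E → E →L[ℝ] E) (r : E → ℝ) (x : E) (X : E) : ℝ :=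
  -((fderiv ℝ (fun y => (fderiv ℝ r y).comp (J y)) x X) (J x X)
    - (fderiv ℝ (fun y => (fderiv ℝ r y).comp (J y)) x (J x X)) X)

/-- `r` is strictly `J`-plurisubharmonic on `s`. -/
def StrictPSHOn (J : E → E →L[ℝ] E) (r : E → ℝ) (s : Set E) : Prop :=
  ∀ x ∈ s, ∀ X : E, X ≠ 0 → 0 < leviForm J r x X

/-- `r` is `J`-plurisubharmonic on `s` (nonnegative Levi form). -/
def PSHOn (J : E → E →L[ℝ] E) (r : E → ℝ) (s : Set E) : Prop :=
  ∀ x ∈ s, ∀ X : E, 0 ≤ leviForm J r x X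

/-- `C⁰` norm of `g` on `K`. -/
def c0Norm {G : Type*} [NormedAddCommGroup G] (g : E → G) (K : Set E) : ℝ :=
  ⨆ x : K, ‖g (x : E)‖

/-- `C¹` norm of `g` on `K`. -/
def c1Norm {G : Type*} [NormedAddCommGroup G] [NormedSpace ℝ G] (g : E → G) (K : Set E) : ℝ :=
  ⨆ x : K, max ‖g (x : E)‖ ‖fderiv ℝ g (x : E)‖

/-- `C¹` distance between `g` and `h` on `K`. -/
def c1Dist {G : Type*} [NormedAddCommGroup G] [NormedSpace ℝ G] (g h : E → G) (K : Set E) : ℝ :=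
  ⨆ x : K, max ‖g (x : E) - h (x : E)‖ ‖fderiv ℝ g (x : E) - fderiv ℝ h (x : E)‖

/-- `C²` distance between `g` and `h` on `K`. -/
def c2Dist {G : Type*} [NormedAddCommGroup G] [NormedSpace ℝ G] (g h : E → G) (K : Set E) : ℝ :=
  ⨆ x : K, max ‖g (x : E) - h (x : E)‖
    (max ‖fderiv ℝ g (x : E) - fderiv ℝ h (x : E)‖
      ‖fderiv ℝ (fderiv ℝ g) (x : E) - fderiv ℝ (fderiv ℝ h) (x : E)‖)

/-- A `J`-holomorphic disc in `D`: a map from the unit disc `Δ ⊂ ℂ` to `D` satisfying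
`Df(ζ) ∘ J_st = J(f ζ) ∘ Df(ζ)`. -/
def IsJDisc (J : F → F →L[ℝ] F) (D : Set F) (f : ℂ → F) : Prop :=
  MapsTo f (ball (0 : ℂ) 1) D ∧
  ∀ ζ ∈ ball (0 : ℂ) 1, DifferentiableAt ℝ f ζ ∧
    (fderiv ℝ f ζ).comp (Jst ℂ) = (J (f ζ)).comp (fderiv ℝ f ζ)

/-- The Kobayashi–Royden infinitesimal pseudometric of `(D, J)`. -/
def kobayashiMetric (J : F → F →L[ℝ] F) (D : Set F) (p : F) (v : F) : ℝ :=
  sInf {α : ℝ | 0 < α ∧ ∃ f : ℂ → F, IsJDisc J D f ∧ f 0 = p ∧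
    fderiv ℝ f 0 1 = α⁻¹ • v}

/-- The integrated Kobayashi pseudodistance of `(D, J)`. -/
def kobayashiDist (J : F → F →L[ℝ] F) (D : Set F) (p q : F) : ℝ :=
  sInf {d : ℝ | ∃ γ : ℝ → F, ContDiffOn ℝ 1 γ (Icc 0 1) ∧ MapsTo γ (Icc 0 1) D ∧
    γ 0 = p ∧ γ 1 = q ∧ d = ∫ t in (0:ℝ)..1, kobayashiMetric J D (γ t) (deriv γ t)}

/-- `f` is a smooth diffeomorphism from `s` onto `t` with inverse `g`. -/
def IsDiffeoOn (f : E → F) (g : F → E) (s : Set E) (t : Set F) : Prop :=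
  ContDiffOn ℝ (⊤ : ℕ∞) f s ∧ ContDiffOn ℝ (⊤ : ℕ∞) g t ∧ MapsTo f s t ∧ MapsTo g t s ∧
  (∀ x ∈ s, g (f x) = x) ∧ (∀ y ∈ t, f (g y) = y)

/-- The Laplacian of a real function on `ℂ ≅ ℝ²`. -/
def lapR (g : ℂ → ℝ) (ζ : ℂ) : ℝ :=
  fderiv ℝ (fun w => fderiv ℝ g w 1) ζ 1
    + fderiv ℝ (fun w => fderiv ℝ g w Complex.I) ζ Complex.I

/-- The Wirtinger derivative `∂g/∂ζ`. -/
def wirtingerD (g : ℂ → ℂ) (ζ : ℂ) : ℂ :=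
  (fderiv ℝ g ζ 1 - Complex.I * fderiv ℝ g ζ Complex.I) / 2

/-- The Wirtinger derivative `∂g/∂ζ̄`. -/
def wirtingerDbar (g : ℂ → ℂ) (ζ : ℂ) : ℂ :=
  (fderiv ℝ g ζ 1 + Complex.I * fderiv ℝ g ζ Complex.I) / 2

/-- The coordinates of a point of `ℂ²`. -/
def coord2 (z : ℂ × ℂ) : Fin 2 → ℂ := ![z.1, z.2]

abbrev E2 := EuclideanSpace ℂ (Fin 2)

/-!
If `f` is a `J`-holomorphic disc and `r < 1`, then `z ↦ f (r z)` is `J`-holomorphic on a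
neighbourhood of the closed disc, and upper semicontinuity follows once every 1-jet
`(g 0, ∂g/∂s 0)` close to its jet is the jet of a `J`-holomorphic disc.

Elliptic regularity (difference quotients, a rescaled gradient bound, and Baire's theorem because
discs are only assumed differentiable) puts the shrunk disc in the Banach space `C^{1,1/2}`. On
that space the nonlinear Cauchy–Riemann operator together with the 1-jet at `0` is strictly
differentiable, so by the surjective implicit function theorem it is enough to solve the linearised
equation with a prescribed jet. For variations `h = re v + J (im v)` along the disc this equation
becomes `∂v/∂z̄ + A v = g` with `A` real-linear. Multiplying the Cauchy kernel by an exponential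
that is entire in `z` makes Picard iteration a contraction in a Carleman-weighted sup norm, however
large `A` is; the substitution `v = z m` prescribes the derivative at `0` of a homogeneous solution
and thereby the jet.
-/

open MeasureTheory

section SqrtHolder

variable {X V : Type*} [NormedAddCommGroup X] [NormedAddCommGroup V]

/-- Hölder continuity of exponent `1/2` with constant `C` on the set `s`. -/
def SqrtHolderOn (C : ℝ) (u : X → V) (s : Set X) : Prop :=
  ∀ ⦃z⦄, z ∈ s → ∀ ⦃w⦄, w ∈ s → ‖u z - u w‖ ≤ C * √‖z - w‖

namespace SqrtHolderOn

variable {C C' : ℝ} {u v : X → V} {s : Set X}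

lemma mono_const (h : SqrtHolderOn C u s) (hC : C ≤ C') : SqrtHolderOn C' u s :=
  fun _ hz _ hw => (h hz hw).trans (by gcongr)

lemma mono {t : Set X} (h : SqrtHolderOn C u s) (ht : t ⊆ s) : SqrtHolderOn C u t :=
  fun _ hz _ hw => h (ht hz) (ht hw)

lemma add (hu : SqrtHolderOn C u s) (hv : SqrtHolderOn C' v s) :
    SqrtHolderOn (C + C') (fun z => u z + v z) s := fun z hz w hw => by
  rw [add_sub_add_comm, add_mul]
  exact norm_add_le_of_le (hu hz hw) (hv hz hw)

protected lemma continuousOn (h : SqrtHolderOn C u s) : ContinuousOn u s := fun z hz => by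
  refine tendsto_iff_norm_sub_tendsto_zero.2 (squeeze_zero' (g := fun w => C * √‖w - z‖)
    (Eventually.of_forall fun _ => norm_nonneg _)
    (eventually_mem_nhdsWithin.mono fun w hw => h hw hz) ?_)
  have : Continuous (fun w => C * √‖w - z‖) := by fun_prop
  exact (this.tendsto' z 0 (by simp)).mono_left nhdsWithin_le_nhds

protected lemma continuous (h : SqrtHolderOn C u univ) : Continuous u :=
  continuousOn_univ.1 h.continuousOn

end SqrtHolderOn

end SqrtHolder

section Kernels

lemma integrableOn_norm_sub_rpow {s : ℝ} (hs : s < 2) (R : ℝ) (z : ℂ) :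
    IntegrableOn (fun ζ : ℂ => ‖z - ζ‖ ^ (-s)) (closedBall 0 R) := by
  have h : LocallyIntegrable (fun w : ℂ => ‖w‖ ^ (-s)) :=
    locallyIntegrable_of_norm_le_rpow (C := 1) (α := s) (by simp) (by simpa using hs)
      (Eventually.of_forall fun w => by rw [one_mul, Real.norm_of_nonneg (by positivity)])
      (measurable_norm.pow_const (-s)).aestronglyMeasurable
  have h' : IntegrableOn (fun w : ℂ => ‖w‖ ^ (-s)) (closedBall z R) :=
    h.integrableOn_isCompact (isCompact_closedBall z R)
  have hpre : (fun ζ => z - ζ) ⁻¹' closedBall z R = closedBall (0 : ℂ) R := by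
    ext ζ
    simp [dist_eq_norm]
  rw [← hpre]
  exact ((Measure.measurePreserving_sub_left volume z).integrableOn_comp_preimage
    (MeasurableEquiv.subLeft z).measurableEmbedding).2 h'

lemma exists_setIntegral_norm_sub_rpow_le {s : ℝ} (hs0 : 0 ≤ s) (hs : s < 2) (R : ℝ) :
    ∃ C, 0 ≤ C ∧ ∀ z : ℂ, ∫ ζ in closedBall 0 R, ‖z - ζ‖ ^ (-s) ≤ C := by
  set N : ℂ → ℝ := (closedBall 0 1).indicator fun w => ‖w‖ ^ (-s)
  have hN : Integrable N := by
    refine (integrable_indicator_iff measurableSet_closedBall).2 ?_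
    simpa using integrableOn_norm_sub_rpow hs 1 0
  have hN0 : ∀ w, 0 ≤ N w := fun w => indicator_nonneg (fun _ _ => by positivity) w
  have hle : ∀ w, ‖w‖ ^ (-s) ≤ N w + 1 := by
    intro w
    by_cases hw : ‖w‖ ≤ 1
    · simp [N, hw]
    · have := Real.rpow_le_one_of_one_le_of_nonpos (not_le.1 hw).le (neg_nonpos.2 hs0)
      linarith [hN0 w]
  have hball : volume (closedBall (0 : ℂ) R) ≠ ⊤ := measure_closedBall_lt_top.ne
  have hint : ∀ z, IntegrableOn (fun ζ => N (z - ζ)) (closedBall 0 R) := fun z =>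
    (hN.comp_sub_left z).integrableOn
  refine ⟨(∫ w, N w) + volume.real (closedBall (0 : ℂ) R),
    add_nonneg (integral_nonneg hN0) measureReal_nonneg, fun z => ?_⟩
  calc ∫ ζ in closedBall 0 R, ‖z - ζ‖ ^ (-s)
      ≤ ∫ ζ in closedBall 0 R, (N (z - ζ) + 1) :=
        setIntegral_mono (integrableOn_norm_sub_rpow hs R z)
          ((hint z).add (integrableOn_const hball)) fun ζ => hle (z - ζ)
    _ = (∫ ζ in closedBall 0 R, N (z - ζ)) + volume.real (closedBall (0 : ℂ) R) := by
        rw [integral_add (hint z) (integrableOn_const hball)]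
        simp
    _ ≤ (∫ ζ, N (z - ζ)) + volume.real (closedBall (0 : ℂ) R) := by
        gcongr ?_ + _
        exact setIntegral_le_integral (hN.comp_sub_left z) (Eventually.of_forall fun ζ => hN0 _)
    _ = _ := by rw [integral_sub_left_eq_self N volume z]

lemma exists_circle_mul_norm_eq {h : ℂ} (hh : h ≠ 0) : ∃ u : Circle, (‖h‖ : ℂ) * u = h := by
  have hn : (‖h‖ : ℂ) ≠ 0 := Complex.ofReal_ne_zero.2 (norm_ne_zero_iff.2 hh)
  refine ⟨⟨h / ‖h‖, ?_⟩, mul_div_cancel₀ h hn⟩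
  simp [Submonoid.unitSphere, hh]

lemma integrable_comp_mul_left_complex_iff {G : Type*} [NormedAddCommGroup G] {h : ℂ} (hh : h ≠ 0)
    (f : ℂ → G) : Integrable (fun w => f (h * w)) ↔ Integrable f := by
  obtain ⟨u, hu⟩ := exists_circle_mul_norm_eq hh
  rw [← integrable_comp_smul_iff volume f (norm_ne_zero_iff.2 hh),
    ← integrable_comp (rotation u) fun w => f (‖h‖ • w)]
  simp only [Function.comp_def, rotation_apply, Complex.real_smul, ← mul_assoc, hu]

lemma integral_comp_mul_left_complex {G : Type*} [NormedAddCommGroup G] [NormedSpace ℝ G]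
    {h : ℂ} (hh : h ≠ 0) (f : ℂ → G) : ∫ w, f (h * w) = (‖h‖ ^ 2)⁻¹ • ∫ ζ, f ζ := by
  obtain ⟨u, hu⟩ := exists_circle_mul_norm_eq hh
  have key := Measure.integral_comp_smul volume f ‖h‖
  rw [← integral_comp (rotation u) fun w => f (‖h‖ • w)] at key
  simpa [Complex.real_smul, ← mul_assoc, hu] using key

lemma inv_norm_one_sub_mul_rpow_le (w : ℂ) :
    ‖1 - w‖⁻¹ * ‖w‖ ^ (-(3 / 2) : ℝ) ≤ 2 * ‖w‖ ^ (-(3 / 2) : ℝ) + 4 * ‖1 - w‖⁻¹ := by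
  rcases le_total (1 / 2) ‖1 - w‖ with h | h
  · have : ‖1 - w‖⁻¹ ≤ 2 := by simpa using inv_anti₀ (by norm_num) h
    have : ‖1 - w‖⁻¹ * ‖w‖ ^ (-(3 / 2) : ℝ) ≤ 2 * ‖w‖ ^ (-(3 / 2) : ℝ) := by gcongr
    exact this.trans (le_add_of_nonneg_right (by positivity))
  · have hw : 1 / 2 ≤ ‖w‖ := by
      have := norm_add_le (1 - w) w
      rw [sub_add_cancel, norm_one] at this
      linarith
    have : ‖w‖ ^ (-(3 / 2) : ℝ) ≤ 4 := calc
      ‖w‖ ^ (-(3 / 2) : ℝ) ≤ (1 / 2) ^ (-(3 / 2) : ℝ) :=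
        Real.rpow_le_rpow_of_nonpos (by norm_num) hw (by norm_num)
      _ = 2 ^ (3 / 2 : ℝ) := by rw [one_div, Real.inv_rpow zero_le_two, Real.rpow_neg zero_le_two,
        inv_inv]
      _ ≤ 2 ^ (2 : ℝ) := Real.rpow_le_rpow_of_exponent_le one_le_two (by norm_num)
      _ = 4 := by norm_num
    have : ‖1 - w‖⁻¹ * ‖w‖ ^ (-(3 / 2) : ℝ) ≤ 4 * ‖1 - w‖⁻¹ := by
      rw [mul_comm]
      gcongr
    exact this.trans (le_add_of_nonneg_left (by positivity))

lemma integrable_inv_norm_one_sub_mul_rpow :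
    Integrable fun w : ℂ => ‖1 - w‖⁻¹ * ‖w‖ ^ (-(3 / 2) : ℝ) := by
  have hmeas : AEStronglyMeasurable (fun w : ℂ => ‖1 - w‖⁻¹ * ‖w‖ ^ (-(3 / 2) : ℝ)) volume :=
    ((measurable_const.sub measurable_id).norm.inv.mul
      (measurable_norm.pow_const _)).aestronglyMeasurable
  have hnear : IntegrableOn (fun w : ℂ => ‖1 - w‖⁻¹ * ‖w‖ ^ (-(3 / 2) : ℝ)) (closedBall 0 2) := by
    have h₁ := integrableOn_norm_sub_rpow (s := 3 / 2) (by norm_num) 2 0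
    have h₂ := integrableOn_norm_sub_rpow (s := 1) (by norm_num) 2 1
    simp only [zero_sub, norm_neg, Real.rpow_neg_one] at h₁ h₂
    refine ((h₁.const_mul 2).add (h₂.const_mul 4)).mono' hmeas.restrict (ae_of_all _ fun w => ?_)
    rw [Real.norm_of_nonneg (by positivity)]
    exact inv_norm_one_sub_mul_rpow_le w
  have hfar : IntegrableOn (fun w : ℂ => ‖1 - w‖⁻¹ * ‖w‖ ^ (-(3 / 2) : ℝ)) (closedBall 0 2)ᶜ := by
    have h := (integrable_one_add_norm (E := ℂ) (μ := volume) (r := 5 / 2)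
      (by rw [Complex.finrank_real_complex]; norm_num)).integrableOn (s := (closedBall 0 2)ᶜ)
    refine (h.const_mul ((1 / 3) ^ (-(5 / 2) : ℝ))).mono' hmeas.restrict
      (ae_restrict_of_forall_mem measurableSet_closedBall.compl fun w hw => ?_)
    have hw : 2 < ‖w‖ := by simpa using hw
    have h₁ : 1 / 3 * (1 + ‖w‖) ≤ ‖1 - w‖ := by
      have := norm_sub_norm_le w 1
      rw [norm_one, norm_sub_rev] at this
      linarith
    have h₂ : 1 / 3 * (1 + ‖w‖) ≤ ‖w‖ := by linarith
    rw [Real.norm_of_nonneg (by positivity), ← Real.mul_rpow (by norm_num) (by positivity)]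
    calc ‖1 - w‖⁻¹ * ‖w‖ ^ (-(3 / 2) : ℝ)
        ≤ (1 / 3 * (1 + ‖w‖))⁻¹ * (1 / 3 * (1 + ‖w‖)) ^ (-(3 / 2) : ℝ) := by
          gcongr ?_ * ?_
          · exact inv_anti₀ (by positivity) h₁
          · exact Real.rpow_le_rpow_of_nonpos (by positivity) h₂ (by norm_num)
      _ = (1 / 3 * (1 + ‖w‖)) ^ (-(5 / 2) : ℝ) := by
          rw [← Real.rpow_neg_one, ← Real.rpow_add (by positivity)]
          norm_num
  simpa using hnear.union hfar

lemma rpow_neg_three_halves {a : ℝ} (ha : 0 ≤ a) : a ^ (-(3 / 2) : ℝ) = (a * √a)⁻¹ := by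
  rw [Real.rpow_neg ha, show (3 / 2 : ℝ) = 1 + 1 / 2 by norm_num,
    Real.rpow_add' ha (by norm_num), Real.rpow_one, Real.sqrt_eq_rpow]

lemma inv_sq_mul_sqrt {a : ℝ} (ha : 0 ≤ a) : (a ^ 2)⁻¹ * √a = a ^ (-(3 / 2) : ℝ) := by
  rcases ha.eq_or_lt with rfl | h
  · rw [Real.zero_rpow (by norm_num)]
    simp
  · rw [Real.sqrt_eq_rpow, ← Real.rpow_natCast, ← Real.rpow_neg ha, ← Real.rpow_add h]
    norm_num

lemma sq_mul_inv_mul_sqrt {a : ℝ} (ha : 0 ≤ a) : a ^ 2 * (√a)⁻¹ = a * √a := by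
  rcases ha.eq_or_lt with rfl | h
  · simp
  · rw [mul_inv_eq_iff_eq_mul₀ (Real.sqrt_pos.2 h).ne', mul_assoc, Real.mul_self_sqrt ha, sq]

lemma sub_remainder_kernel_eq {z z₀ : ℂ} (w : ℂ) :
    ‖z - (z₀ + (z - z₀) * w)‖⁻¹ * ‖z₀ - (z₀ + (z - z₀) * w)‖ ^ (-(3 / 2) : ℝ) =
      ‖z - z₀‖⁻¹ * ‖z - z₀‖ ^ (-(3 / 2) : ℝ) * (‖1 - w‖⁻¹ * ‖w‖ ^ (-(3 / 2) : ℝ)) := by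
  have h₁ : z - (z₀ + (z - z₀) * w) = (z - z₀) * (1 - w) := by ring
  have h₂ : z₀ - (z₀ + (z - z₀) * w) = -((z - z₀) * w) := by ring
  rw [h₁, h₂, norm_neg, norm_mul, norm_mul, mul_inv,
    Real.mul_rpow (norm_nonneg _) (norm_nonneg _)]
  ring

lemma integrable_remainder_kernel {z z₀ : ℂ} (hz : z ≠ z₀) :
    Integrable fun ζ : ℂ => ‖z - ζ‖⁻¹ * ‖z₀ - ζ‖ ^ (-(3 / 2) : ℝ) := by
  set f : ℂ → ℝ := fun ζ => ‖z - (z₀ + ζ)‖⁻¹ * ‖z₀ - (z₀ + ζ)‖ ^ (-(3 / 2) : ℝ) with hf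
  have h : Integrable f := by
    rw [← integrable_comp_mul_left_complex_iff (sub_ne_zero.2 hz)]
    simp only [hf, sub_remainder_kernel_eq]
    exact integrable_inv_norm_one_sub_mul_rpow.const_mul _
  simpa [hf, norm_sub_rev] using h.comp_sub_right z₀

lemma integral_remainder_kernel {z z₀ : ℂ} (hz : z ≠ z₀) :
    ‖z - z₀‖ ^ 2 * ∫ ζ, ‖z - ζ‖⁻¹ * ‖z₀ - ζ‖ ^ (-(3 / 2) : ℝ) =
      (∫ w : ℂ, ‖1 - w‖⁻¹ * ‖w‖ ^ (-(3 / 2) : ℝ)) * (‖z - z₀‖ * √‖z - z₀‖) := by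
  have hn : 0 < ‖z - z₀‖ := norm_pos_iff.2 (sub_ne_zero.2 hz)
  have hscale := integral_comp_mul_left_complex (sub_ne_zero.2 hz)
    fun ζ => ‖z - (z₀ + ζ)‖⁻¹ * ‖z₀ - (z₀ + ζ)‖ ^ (-(3 / 2) : ℝ)
  rw [integral_add_left_eq_self fun ζ => ‖z - ζ‖⁻¹ * ‖z₀ - ζ‖ ^ (-(3 / 2) : ℝ)] at hscale
  simp only [sub_remainder_kernel_eq, integral_const_mul, smul_eq_mul] at hscale
  rw [eq_inv_mul_iff_mul_eq₀ (by positivity)] at hscale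
  rw [← hscale, ← sq_mul_inv_mul_sqrt hn.le, rpow_neg_three_halves hn.le]
  field_simp

lemma norm_inv_sub_inv_le_of_norm_le {p q : ℂ} (hp : p ≠ 0) (hpq : ‖p‖ ≤ ‖q‖) :
    ‖p⁻¹ - q⁻¹‖ ≤ 2 * √‖p - q‖ * ‖p‖ ^ (-(3 / 2) : ℝ) := by
  have hp0 : 0 < ‖p‖ := norm_pos_iff.2 hp
  have hq0 : 0 < ‖q‖ := hp0.trans_le hpq
  have hd : √‖p - q‖ ≤ 2 * √‖q‖ := by
    refine Real.sqrt_le_iff.2 ⟨by positivity, ?_⟩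
    rw [mul_pow, Real.sq_sqrt hq0.le]
    linarith [norm_sub_le p q]
  rw [inv_sub_inv hp (norm_pos_iff.1 hq0), norm_div, norm_mul, norm_sub_rev,
    rpow_neg_three_halves hp0.le]
  calc ‖p - q‖ / (‖p‖ * ‖q‖)
      = √‖p - q‖ * √‖p - q‖ / (‖p‖ * (√‖q‖ * √‖q‖)) := by
        rw [Real.mul_self_sqrt (norm_nonneg _), Real.mul_self_sqrt (norm_nonneg _)]
    _ ≤ √‖p - q‖ * (2 * √‖q‖) / (‖p‖ * (√‖q‖ * √‖q‖)) := by gcongr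
    _ = 2 * √‖p - q‖ * (‖p‖ * √‖q‖)⁻¹ := by field_simp
    _ ≤ 2 * √‖p - q‖ * (‖p‖ * √‖p‖)⁻¹ := by gcongr

lemma norm_inv_sub_inv_le (p q : ℂ) :
    ‖p⁻¹ - q⁻¹‖ ≤ 2 * √‖p - q‖ * (‖p‖ ^ (-(3 / 2) : ℝ) + ‖q‖ ^ (-(3 / 2) : ℝ)) := by
  wlog hpq : ‖p‖ ≤ ‖q‖ generalizing p q
  · rw [norm_sub_rev, norm_sub_rev p q, add_comm]
    exact this q p (le_of_not_ge hpq)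
  by_cases hp : p = 0
  · rcases eq_or_ne q 0 with rfl | hq
    · simp [hp]
    have hq0 : 0 < ‖q‖ := norm_pos_iff.2 hq
    have : √‖q‖ * (‖q‖ * √‖q‖)⁻¹ = ‖q‖⁻¹ := by field_simp
    rw [hp, inv_zero, zero_sub, zero_sub, norm_neg, norm_neg, norm_zero,
      Real.zero_rpow (by norm_num), zero_add, rpow_neg_three_halves hq0.le, mul_assoc, this,
      norm_inv]
    linarith [inv_pos.2 hq0]
  · refine (norm_inv_sub_inv_le_of_norm_le hp hpq).trans ?_
    gcongr
    exact le_add_of_nonneg_right (by positivity)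

end Kernels

section CauchyTransform

variable {W : Type*} [NormedAddCommGroup W]

/-- A measurable density on the plane that is bounded by `A` and vanishes outside the closed disc
of radius `R` about the origin: the class on which the Cauchy transform is studied. -/
structure BddSupp (R A : ℝ) (γ : ℂ → W) : Prop where
  meas : AEStronglyMeasurable γ volume
  bound : ∀ ζ, ‖γ ζ‖ ≤ A
  supp : ∀ ζ, R < ‖ζ‖ → γ ζ = 0

namespace BddSupp

variable {R A R' A' : ℝ} {γ γ' : ℂ → W} {k : ℂ → ℂ}

lemma nonneg (h : BddSupp R A γ) : 0 ≤ A :=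
  (norm_nonneg _).trans (h.bound 0)

lemma mono (h : BddSupp R A γ) (hR : R ≤ R') (hA : A ≤ A') : BddSupp R' A' γ :=
  ⟨h.meas, fun ζ => (h.bound ζ).trans hA, fun ζ hζ => h.supp ζ (hR.trans_lt hζ)⟩

lemma sub (h : BddSupp R A γ) (h' : BddSupp R' A' γ') :
    BddSupp (max R R') (A + A') (fun ζ => γ ζ - γ' ζ) where
  meas := h.meas.sub h'.meas
  bound ζ := (norm_sub_le _ _).trans (add_le_add (h.bound ζ) (h'.bound ζ))
  supp ζ hζ := by
    rw [h.supp ζ ((le_max_left _ _).trans_lt hζ), h'.supp ζ ((le_max_right _ _).trans_lt hζ),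
      sub_zero]

variable [NormedSpace ℂ W]

lemma smul_eq_zero_of_notMem (h : BddSupp R A γ) {ζ : ℂ} (hζ : ζ ∉ closedBall (0 : ℂ) R) :
    k ζ • γ ζ = 0 := by
  rw [h.supp ζ (by simpa using hζ), smul_zero]

lemma integrable_smul (h : BddSupp R A γ) (hk : IntegrableOn k (closedBall 0 R)) :
    Integrable fun ζ => k ζ • γ ζ := by
  have hon : IntegrableOn (fun ζ => k ζ • γ ζ) (closedBall 0 R) :=
    hk.smul_bdd A h.meas.restrict (ae_of_all _ h.bound)
  exact (integrableOn_iff_integrable_of_support_subset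
    (Function.support_subset_iff'.2 fun ζ => h.smul_eq_zero_of_notMem)).1 hon

lemma norm_integral_smul_le (h : BddSupp R A γ) {b : ℂ → ℝ}
    (hb : IntegrableOn b (closedBall 0 R)) (hkb : ∀ ζ ∈ closedBall 0 R, ‖k ζ‖ ≤ b ζ) :
    ‖∫ ζ, k ζ • γ ζ‖ ≤ (∫ ζ in closedBall 0 R, b ζ) * A := by
  rw [← setIntegral_eq_integral_of_forall_compl_eq_zero fun ζ => h.smul_eq_zero_of_notMem,
    ← integral_mul_const]
  refine norm_integral_le_of_norm_le (hb.mul_const A)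
    (ae_restrict_of_forall_mem measurableSet_closedBall fun ζ hζ => ?_)
  rw [norm_smul]
  exact mul_le_mul (hkb ζ hζ) (h.bound ζ) (norm_nonneg _) ((norm_nonneg _).trans (hkb ζ hζ))

lemma integrableOn_inv_sub (z : ℂ) (R : ℝ) :
    IntegrableOn (fun ζ : ℂ => (z - ζ)⁻¹) (closedBall 0 R) := by
  refine (integrable_norm_iff (by fun_prop)).1 ?_
  simpa [IntegrableOn, Real.rpow_neg_one] using
    integrableOn_norm_sub_rpow (s := 1) (by norm_num) R z

lemma integrable_cauchy (h : BddSupp R A γ) (z : ℂ) : Integrable fun ζ => (z - ζ)⁻¹ • γ ζ :=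
  h.integrable_smul (integrableOn_inv_sub z R)

end BddSupp

variable [NormedSpace ℂ W]

/-- The Cauchy transform of a density on the plane: the solution operator of `∂̄`, given by
convolution with the fundamental solution `1 / (π z)`. -/
def cauchyT (γ : ℂ → W) (z : ℂ) : W :=
  (Real.pi : ℂ)⁻¹ • ∫ ζ, (z - ζ)⁻¹ • γ ζ

lemma cauchyT_sub {R A R' A' : ℝ} {γ γ' : ℂ → W} (h : BddSupp R A γ) (h' : BddSupp R' A' γ')
    (z : ℂ) : cauchyT (fun ζ => γ ζ - γ' ζ) z = cauchyT γ z - cauchyT γ' z := by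
  simp only [cauchyT, smul_sub]
  rw [← smul_sub, ← integral_sub (h.integrable_cauchy z) (h'.integrable_cauchy z)]

theorem exists_sqrtHolderOn_cauchyT (R : ℝ) :
    ∃ C, 0 ≤ C ∧ ∀ (A : ℝ) (γ : ℂ → W), BddSupp R A γ →
      SqrtHolderOn (C * A) (cauchyT γ) univ := by
  obtain ⟨C, hC0, hC⟩ :=
    exists_setIntegral_norm_sub_rpow_le (s := 3 / 2) (by norm_num) (by norm_num) R
  have hint := integrableOn_norm_sub_rpow (s := 3 / 2) (by norm_num) R
  refine ⟨‖(Real.pi : ℂ)⁻¹‖ * (2 * (C + C)), by positivity, fun A γ h z _ w _ => ?_⟩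
  have hA := h.nonneg
  have key := h.norm_integral_smul_le (k := fun ζ => (z - ζ)⁻¹ - (w - ζ)⁻¹)
    (((hint z).add (hint w)).const_mul (2 * √‖z - w‖)) fun ζ _ => by
      simpa using norm_inv_sub_inv_le (z - ζ) (w - ζ)
  rw [integral_const_mul, integral_add' (hint z) (hint w)] at key
  calc ‖cauchyT γ z - cauchyT γ w‖
      = ‖(Real.pi : ℂ)⁻¹‖ * ‖∫ ζ, ((z - ζ)⁻¹ - (w - ζ)⁻¹) • γ ζ‖ := by
        simp only [cauchyT, sub_smul]
        rw [← smul_sub, norm_smul, integral_sub (h.integrable_cauchy z) (h.integrable_cauchy w)]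
    _ ≤ ‖(Real.pi : ℂ)⁻¹‖ * (2 * √‖z - w‖ * (C + C) * A) := by
        gcongr
        refine key.trans ?_
        gcongr
        exacts [hC z, hC w]
    _ = _ := by ring

end CauchyTransform

section CauchyPompeiu

variable {W : Type*} [NormedAddCommGroup W] [NormedSpace ℂ W]

/-- The operator `∂̄`, acting on the real differential `ℓ` of a map from the plane. It is the
antilinear part of `ℓ`, evaluated at `1`. -/
def dbarL (ℓ : ℂ →L[ℝ] W) : W := (1 / 2 : ℂ) • (ℓ 1 + Complex.I • ℓ Complex.I)

lemma apply_eq_re_im (ℓ : ℂ →L[ℝ] W) (z : ℂ) : ℓ z = z.re • ℓ 1 + z.im • ℓ Complex.I := by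
  rw [← map_smul, ← map_smul, ← map_add]
  congr 1
  simp

lemma inv_smul_dbarL (ℓ : ℂ →L[ℝ] W) (e : ℂ) (he : ‖e‖ = 1) :
    e⁻¹ • dbarL ℓ = (1 / 2 : ℂ) • (ℓ e + Complex.I • ℓ (Complex.I * e)) := by
  have hinv : e⁻¹ = (e.re : ℂ) - e.im * Complex.I := by
    rw [Complex.inv_def, Complex.normSq_eq_norm_sq, he]
    apply Complex.ext <;> simp
  rw [apply_eq_re_im ℓ e, apply_eq_re_im ℓ (Complex.I * e), dbarL, hinv]
  simp only [← Complex.coe_smul, Complex.mul_re, Complex.mul_im, Complex.I_re, Complex.I_im]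
  push_cast
  match_scalars
  · ring
  · linear_combination ((-1 : ℂ) / 2 * e.im) * Complex.I_mul_I

lemma norm_dbarL_le (ℓ : ℂ →L[ℝ] W) : ‖dbarL ℓ‖ ≤ ‖ℓ‖ := by
  have h₁ : ‖ℓ 1‖ ≤ ‖ℓ‖ := by simpa using ℓ.le_opNorm 1
  have hI : ‖Complex.I • ℓ Complex.I‖ ≤ ‖ℓ‖ := by
    simpa [norm_smul] using ℓ.le_opNorm Complex.I
  have := norm_add_le_of_le h₁ hI
  rw [dbarL, norm_smul, show ‖(1 / 2 : ℂ)‖ = 1 / 2 by norm_num]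
  linarith

lemma integrableOn_of_norm_le_of_eq_zero {X G : Type*} [MeasurableSpace X] [NormedAddCommGroup G]
    {μ : Measure X} {f : X → G} {s t : Set X} {M : ℝ} (ht : μ t ≠ ⊤) (hs : MeasurableSet s)
    (hf : AEStronglyMeasurable f μ) (hM : ∀ x, ‖f x‖ ≤ M) (h0 : ∀ x ∈ s, x ∉ t → f x = 0) :
    IntegrableOn f s μ :=
  (Measure.integrableOn_of_bounded ht hf (ae_of_all _ hM)).of_forall_sdiff_eq_zero hs
    fun x hx => h0 x hx.1 hx.2

lemma hasDerivAt_circleMap_radius (z : ℂ) (r θ : ℝ) :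
    HasDerivAt (fun r : ℝ => circleMap z r θ) (Complex.exp (θ * Complex.I)) r := by
  simpa [circleMap] using
    ((hasDerivAt_id r).ofReal_comp.mul_const (Complex.exp (θ * Complex.I))).const_add z

lemma le_norm_circleMap_add_norm (z : ℂ) (r θ : ℝ) : r ≤ ‖circleMap z r θ‖ + ‖z‖ := calc
  r ≤ ‖circleMap z r θ - z‖ := by simpa [circleMap] using le_abs_self r
  _ ≤ _ := norm_sub_le _ _

lemma polar_smul_dbarL (ℓ : ℂ →L[ℝ] W) {r : ℝ} (hr : r ≠ 0) (z : ℂ) (θ : ℝ) :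
    r • ((z - circleMap z r θ)⁻¹ • dbarL ℓ) = (-1 / 2 : ℂ) •
      (ℓ (Complex.exp (θ * Complex.I)) +
        Complex.I • ℓ (Complex.I * Complex.exp (θ * Complex.I))) := by
  have hr' : (r : ℂ) ≠ 0 := Complex.ofReal_ne_zero.2 hr
  have hinv : (z - circleMap z r θ)⁻¹ = -(r : ℂ)⁻¹ * (Complex.exp (θ * Complex.I))⁻¹ := by
    rw [circleMap, sub_add_cancel_left, inv_neg, mul_inv, neg_mul]
  rw [hinv, mul_smul, inv_smul_dbarL _ _ (Complex.norm_exp_ofReal_mul_I θ), ← Complex.coe_smul,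
    smul_smul, smul_smul]
  congr 1
  field_simp

variable {V : ℂ → W} {V' : ℂ → ℂ →L[ℝ] W} {M R : ℝ}

lemma hasFDerivAt_eq_zero_of_eq_zero (hV : ∀ z, HasFDerivAt V (V' z) z)
    (hR : ∀ z, R < ‖z‖ → V z = 0) {z : ℂ} (hz : R < ‖z‖) : V' z = 0 := by
  have hzero : V =ᶠ[𝓝 z] fun _ => 0 := by
    filter_upwards [(isOpen_lt continuous_const continuous_norm).mem_nhds hz] with w hw
      using hR w hw
  exact (hV z).unique ((hasFDerivAt_const (0 : W) z).congr_of_eventuallyEq hzero)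

lemma norm_apply_le_of_norm_eq_one (hM : ∀ z, ‖V' z‖ ≤ M) {c : ℂ} (hc : ‖c‖ = 1) (z : ℂ) :
    ‖V' z c‖ ≤ M := by
  simpa [hc] using (V' z).le_of_opNorm_le (hM z) c

lemma circleMap_eq_zero_of_lt (h : ∀ z, R < ‖z‖ → V' z = 0) {z : ℂ} {r : ℝ} (hr : R + ‖z‖ < r)
    (θ : ℝ) : V' (circleMap z r θ) = 0 :=
  h _ (by linarith [le_norm_circleMap_add_norm z r θ])

variable [CompleteSpace W]

lemma stronglyMeasurable_hasFDerivAt_apply_const (hV : ∀ z, HasFDerivAt V (V' z) z) (y : ℂ) :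
    StronglyMeasurable fun z => V' z y := by
  have hcont : Continuous V := continuous_iff_continuousAt.2 fun z => (hV z).continuousAt
  have hline : Continuous (fun (z : ℂ) (t : ℝ) => V (z + t * y)).uncurry := by
    simp only [Function.uncurry_def]
    fun_prop
  have hderiv : ∀ z, deriv (fun t : ℝ => V (z + t * y)) 0 = V' z y := fun z => by
    have hpath : HasDerivAt (fun t : ℝ => z + t * y) y 0 := by
      simpa using ((hasDerivAt_id (0 : ℝ)).ofReal_comp.mul_const y).const_add z
    exact ((by simpa using hV z : HasFDerivAt V (V' z) (z + (0 : ℝ) * y)).comp_hasDerivAt 0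
      hpath).deriv
  have := (stronglyMeasurable_deriv_with_param hline).comp_measurable
    (measurable_prodMk_right (y := (0 : ℝ)))
  simpa only [Function.comp_def, hderiv] using this

lemma stronglyMeasurable_hasFDerivAt_comp_apply {X : Type*} [TopologicalSpace X]
    [MeasurableSpace X] [OpensMeasurableSpace X] (hV : ∀ z, HasFDerivAt V (V' z) z)
    {P c : X → ℂ} (hP : Continuous P) (hc : Continuous c) :
    StronglyMeasurable fun x => V' (P x) (c x) := by
  simp only [apply_eq_re_im (V' _) (c _)]
  have hconst := fun y =>
    (stronglyMeasurable_hasFDerivAt_apply_const hV y).comp_measurable hP.measurable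
  exact ((Complex.continuous_re.comp hc).stronglyMeasurable.smul (hconst 1)).add
    ((Complex.continuous_im.comp hc).stronglyMeasurable.smul (hconst Complex.I))

lemma integral_radial_derivative (hV : ∀ z, HasFDerivAt V (V' z) z) (hM : ∀ z, ‖V' z‖ ≤ M)
    (hR : ∀ z, R < ‖z‖ → V z = 0) (z : ℂ) (θ : ℝ) :
    ∫ r in Ioi (0 : ℝ), V' (circleMap z r θ) (Complex.exp (θ * Complex.I)) = -V z := by
  have hV'0 : ∀ w, R < ‖w‖ → V' w = 0 := fun w => hasFDerivAt_eq_zero_of_eq_zero hV hR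
  have hcont : Continuous fun r : ℝ => circleMap z r θ := by
    unfold circleMap
    fun_prop
  have hint : IntegrableOn (fun r : ℝ => V' (circleMap z r θ) (Complex.exp (θ * Complex.I)))
      (Ioi 0) := by
    refine integrableOn_of_norm_le_of_eq_zero (t := Ioc 0 (R + ‖z‖)) (by simp) measurableSet_Ioi
      (stronglyMeasurable_hasFDerivAt_comp_apply hV hcont continuous_const).aestronglyMeasurable
      (fun r => norm_apply_le_of_norm_eq_one hM (Complex.norm_exp_ofReal_mul_I θ) _)
      fun r hr hr' => ?_
    have hlt : R + ‖z‖ < r := not_le.1 fun h => hr' ⟨hr, h⟩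
    rw [circleMap_eq_zero_of_lt hV'0 hlt, zero_apply]
  have hlim : Tendsto (fun r : ℝ => V (circleMap z r θ)) atTop (𝓝 0) := by
    refine tendsto_const_nhds.congr' ?_
    filter_upwards [eventually_gt_atTop (R + ‖z‖)] with r hr
    exact (hR _ (by linarith [le_norm_circleMap_add_norm z r θ])).symm
  rw [integral_Ioi_of_hasDerivAt_of_tendsto'
    (fun r _ => (hV _).comp_hasDerivAt r (hasDerivAt_circleMap_radius z r θ)) hint hlim]
  simp

lemma integral_angular_derivative (hV : ∀ z, HasFDerivAt V (V' z) z) (hM : ∀ z, ‖V' z‖ ≤ M)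
    (z : ℂ) {r : ℝ} (hr : r ≠ 0) :
    ∫ θ in Ioo (-Real.pi) Real.pi,
      V' (circleMap z r θ) (Complex.I * Complex.exp (θ * Complex.I)) = 0 := by
  have hπ : -Real.pi ≤ Real.pi := by linarith [Real.pi_pos]
  have hderiv : ∀ θ : ℝ, HasDerivAt (fun θ => V (circleMap z r θ))
      (r • V' (circleMap z r θ) (Complex.I * Complex.exp (θ * Complex.I))) θ := fun θ => by
    have htangent :
        r • (Complex.I * Complex.exp (θ * Complex.I)) = circleMap 0 r θ * Complex.I := by
      rw [circleMap_zero, Complex.real_smul]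
      ring
    rw [← map_smul, htangent]
    exact (hV _).comp_hasDerivAt θ (hasDerivAt_circleMap z r θ)
  have hint : IntervalIntegrable
      (fun θ : ℝ => r • V' (circleMap z r θ) (Complex.I * Complex.exp (θ * Complex.I)))
      volume (-Real.pi) Real.pi := by
    rw [intervalIntegrable_iff_integrableOn_Ioc_of_le hπ]
    refine Integrable.smul r (Measure.integrableOn_of_bounded (M := M) (by simp)
      (stronglyMeasurable_hasFDerivAt_comp_apply hV (continuous_circleMap z r)
        (by fun_prop)).aestronglyMeasurable (ae_of_all _ fun θ => ?_))
    exact norm_apply_le_of_norm_eq_one hM (by simp [Complex.norm_exp_ofReal_mul_I]) _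
  have key := intervalIntegral.integral_eq_sub_of_hasDerivAt (fun θ _ => hderiv θ) hint
  have hperiod : circleMap z r Real.pi = circleMap z r (-Real.pi) := by
    norm_num [circleMap, Complex.exp_neg]
  rw [hperiod, sub_self, intervalIntegral.integral_smul, intervalIntegral.integral_of_le hπ,
    integral_Ioc_eq_integral_Ioo] at key
  exact (smul_eq_zero.1 key).resolve_left hr

lemma integrableOn_polar (hV : ∀ z, HasFDerivAt V (V' z) z) (hM : ∀ z, ‖V' z‖ ≤ M)
    (hR : ∀ z, R < ‖z‖ → V z = 0) (z : ℂ) {c : ℝ → ℂ} (hc : Continuous c) (hc1 : ∀ θ, ‖c θ‖ = 1) :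
    IntegrableOn (fun p : ℝ × ℝ => V' (circleMap z p.1 p.2) (c p.2))
      (Ioi 0 ×ˢ Ioo (-Real.pi) Real.pi) := by
  have hcont : Continuous fun p : ℝ × ℝ => circleMap z p.1 p.2 := by
    unfold circleMap
    fun_prop
  refine integrableOn_of_norm_le_of_eq_zero (t := Ioc 0 (R + ‖z‖) ×ˢ Ioo (-Real.pi) Real.pi) ?_
    (measurableSet_Ioi.prod measurableSet_Ioo)
    (stronglyMeasurable_hasFDerivAt_comp_apply hV hcont
      (hc.comp continuous_snd)).aestronglyMeasurable
    (fun p => norm_apply_le_of_norm_eq_one hM (hc1 p.2) _) fun p hp hp' => ?_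
  · rw [Measure.volume_eq_prod, Measure.prod_prod]
    exact ENNReal.mul_ne_top (by simp) (by simp)
  · have hlt : R + ‖z‖ < p.1 := not_le.1 fun h => hp' ⟨⟨hp.1, h⟩, hp.2⟩
    rw [circleMap_eq_zero_of_lt (fun w => hasFDerivAt_eq_zero_of_eq_zero hV hR) hlt,
      zero_apply]

lemma integral_polar_radial (hV : ∀ z, HasFDerivAt V (V' z) z) (hM : ∀ z, ‖V' z‖ ≤ M)
    (hR : ∀ z, R < ‖z‖ → V z = 0) (z : ℂ) :
    ∫ p in Ioi (0 : ℝ) ×ˢ Ioo (-Real.pi) Real.pi,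
      V' (circleMap z p.1 p.2) (Complex.exp (p.2 * Complex.I)) = -((2 * Real.pi) • V z) := by
  have hint := integrableOn_polar hV hM hR z (c := fun θ => Complex.exp (θ * Complex.I))
    (by fun_prop) Complex.norm_exp_ofReal_mul_I
  rw [Measure.volume_eq_prod, ← setIntegral_prod_swap]
  simp only [Prod.fst_swap, Prod.snd_swap]
  rw [setIntegral_prod
    (fun p : ℝ × ℝ => V' (circleMap z p.2 p.1) (Complex.exp (p.1 * Complex.I))) hint.swap]
  simp only [integral_radial_derivative hV hM hR z]
  rw [setIntegral_const, smul_neg, Measure.real, Real.volume_Ioo,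
    ENNReal.toReal_ofReal (by linarith [Real.pi_pos]), sub_neg_eq_add, two_mul]

lemma integral_polar_angular (hV : ∀ z, HasFDerivAt V (V' z) z) (hM : ∀ z, ‖V' z‖ ≤ M)
    (hR : ∀ z, R < ‖z‖ → V z = 0) (z : ℂ) :
    ∫ p in Ioi (0 : ℝ) ×ˢ Ioo (-Real.pi) Real.pi,
      V' (circleMap z p.1 p.2) (Complex.I * Complex.exp (p.2 * Complex.I)) = 0 := by
  have hint := integrableOn_polar hV hM hR z
    (c := fun θ => Complex.I * Complex.exp (θ * Complex.I)) (by fun_prop)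
    (by simp [Complex.norm_exp_ofReal_mul_I])
  rw [Measure.volume_eq_prod, setIntegral_prod _ hint]
  exact setIntegral_eq_zero_of_forall_eq_zero fun r hr =>
    integral_angular_derivative hV hM z (ne_of_gt hr)

/-- In polar coordinates about `z` the integrand is a radial derivative plus a multiple of an
angular one, and the latter integrates to zero. -/
theorem cauchyT_dbarL_eq (hV : ∀ z, HasFDerivAt V (V' z) z) (hM : ∀ z, ‖V' z‖ ≤ M)
    (hR : ∀ z, R < ‖z‖ → V z = 0) (z : ℂ) : cauchyT (fun ζ => dbarL (V' ζ)) z = V z := by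
  have hrad := integrableOn_polar hV hM hR z (c := fun θ => Complex.exp (θ * Complex.I))
    (by fun_prop) Complex.norm_exp_ofReal_mul_I
  have hang : IntegrableOn (fun p : ℝ × ℝ =>
      Complex.I • V' (circleMap z p.1 p.2) (Complex.I * Complex.exp (p.2 * Complex.I)))
      (Ioi 0 ×ˢ Ioo (-Real.pi) Real.pi) :=
    (integrableOn_polar hV hM hR z (c := fun θ => Complex.I * Complex.exp (θ * Complex.I))
      (by fun_prop) (by simp [Complex.norm_exp_ofReal_mul_I])).smul Complex.I
  have hpolar : ∀ p ∈ Ioi (0 : ℝ) ×ˢ Ioo (-Real.pi) Real.pi,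
      p.1 • ((z - (z + Complex.polarCoord.symm p))⁻¹ •
        dbarL (V' (z + Complex.polarCoord.symm p))) =
      (-1 / 2 : ℂ) • (V' (circleMap z p.1 p.2) (Complex.exp (p.2 * Complex.I)) +
        Complex.I • V' (circleMap z p.1 p.2) (Complex.I * Complex.exp (p.2 * Complex.I))) := by
    rintro ⟨r, θ⟩ ⟨hr, -⟩
    have hcircle : z + Complex.polarCoord.symm (r, θ) = circleMap z r θ := by
      rw [Complex.polarCoord_symm_apply, circleMap, Complex.exp_mul_I, Complex.ofReal_cos,
        Complex.ofReal_sin]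
    rw [hcircle]
    exact polar_smul_dbarL _ (ne_of_gt hr) z θ
  rw [cauchyT, ← integral_add_left_eq_self _ z, ← Complex.integral_comp_polarCoord_symm,
    polarCoord_target,
    setIntegral_congr_fun (measurableSet_Ioi.prod measurableSet_Ioo) hpolar, integral_smul,
    integral_add hrad hang, integral_smul, integral_polar_radial hV hM hR,
    integral_polar_angular hV hM hR, smul_zero, add_zero, smul_neg, ← Complex.coe_smul]
  have hπ : (Real.pi : ℂ) ≠ 0 := Complex.ofReal_ne_zero.2 Real.pi_ne_zero
  rw [← neg_smul_neg, neg_neg, smul_smul, smul_smul]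
  convert one_smul ℂ (V z) using 2
  push_cast
  field_simp

end CauchyPompeiu

section TaylorThreeHalves

variable {X V : Type*} [NormedAddCommGroup X] [NormedSpace ℝ X] [NormedAddCommGroup V]
  [NormedSpace ℝ V] {u : X → V} {ℓ : X → X →L[ℝ] V} {C : ℝ}

lemma hasFDerivAt_of_taylor_three_halves
    (h : ∀ z z₀, ‖u z - u z₀ - ℓ z₀ (z - z₀)‖ ≤ C * (‖z - z₀‖ * √‖z - z₀‖)) (z : X) :
    HasFDerivAt u (ℓ z) z := by
  have hO : (fun x => u x - u z - ℓ z (x - z)) =O[𝓝 z] fun x => √‖x - z‖ * ‖x - z‖ :=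
    IsBigO.of_bound C (Eventually.of_forall fun x => by
      rw [Real.norm_of_nonneg (by positivity), mul_comm (√_)]
      exact h x z)
  have ho : (fun x : X => √‖x - z‖) =o[𝓝 z] fun _ => (1 : ℝ) := by
    rw [isLittleO_one_iff]
    exact ((by fun_prop : Continuous fun x : X => √‖x - z‖).tendsto' z 0 (by simp))
  have hmul := ho.mul_isBigO (isBigO_refl (fun x => ‖x - z‖) (𝓝 z))
  simp only [one_mul] at hmul
  exact hasFDerivAt_iff_isLittleO.2 (hO.trans_isLittleO hmul).of_norm_right

lemma mul_sqrt_le_four_mul {a d : ℝ} (hd : 0 ≤ d) (had : a ≤ 2 * d) : a * √a ≤ 4 * (d * √d) := by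
  have hsqrt : √a ≤ 2 * √d := by
    refine Real.sqrt_le_iff.2 ⟨by positivity, ?_⟩
    rw [mul_pow, Real.sq_sqrt hd]
    linarith
  calc a * √a ≤ 2 * d * (2 * √d) := by gcongr
    _ = 4 * (d * √d) := by ring

/-- Comparing the expansions at `z` and `w` of `u` at `z + x` and `z`. -/
lemma norm_sub_apply_le_of_taylor_three_halves
    (h : ∀ z z₀, ‖u z - u z₀ - ℓ z₀ (z - z₀)‖ ≤ C * (‖z - z₀‖ * √‖z - z₀‖)) {z w x : X}
    (hC : 0 ≤ C) (hx : ‖x‖ = ‖z - w‖) :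
    ‖(ℓ z - ℓ w) x‖ ≤ 6 * C * (‖z - w‖ * √‖z - w‖) := by
  have hdecomp : (ℓ z - ℓ w) x = (u (z + x) - u w - ℓ w (z + x - w)) -
      (u (z + x) - u z - ℓ z (z + x - z)) - (u z - u w - ℓ w (z - w)) := by
    rw [add_sub_right_comm z x w, map_add, add_sub_cancel_left, _root_.sub_apply]
    abel
  have hnorm : ‖z + x - w‖ ≤ 2 * ‖z - w‖ := by
    rw [add_sub_right_comm]
    linarith [norm_add_le (z - w) x]
  have hfar := mul_le_mul_of_nonneg_left (mul_sqrt_le_four_mul (norm_nonneg _) hnorm) hC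
  have hnear := h (z + x) z
  have hzw := h z w
  rw [add_sub_cancel_left, hx] at hnear
  rw [hdecomp, add_sub_cancel_left]
  linarith [h (z + x) w, norm_sub_le (u (z + x) - u w - ℓ w (z + x - w) -
    (u (z + x) - u z - ℓ z x)) (u z - u w - ℓ w (z - w)),
    norm_sub_le (u (z + x) - u w - ℓ w (z + x - w)) (u (z + x) - u z - ℓ z x)]

lemma sqrtHolderOn_of_taylor_three_halves
    (h : ∀ z z₀, ‖u z - u z₀ - ℓ z₀ (z - z₀)‖ ≤ C * (‖z - z₀‖ * √‖z - z₀‖)) :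
    SqrtHolderOn (6 * C) ℓ univ := fun z _ w _ => by
  rcases eq_or_ne z w with rfl | hzw
  · simp
  have hd : 0 < ‖z - w‖ := norm_pos_iff.2 (sub_ne_zero.2 hzw)
  have hC : 0 ≤ C := nonneg_of_mul_nonneg_left ((norm_nonneg _).trans (h z w)) (by positivity)
  refine ContinuousLinearMap.opNorm_le_of_unit_norm (by positivity) fun x hx => ?_
  have key := norm_sub_apply_le_of_taylor_three_halves h hC (z := z) (w := w) (x := ‖z - w‖ • x)
    (by rw [norm_smul, norm_norm, hx, mul_one])
  rw [map_smul, norm_smul, norm_norm] at key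
  exact le_of_mul_le_mul_left (key.trans_eq (by ring)) hd

end TaylorThreeHalves

section CutoffConj

/-- A smooth bump function equal to `1` on the unit disc and supported in the disc of radius `2`. -/
def unitBump : ContDiffBump (0 : ℂ) := ⟨1, 2, one_pos, one_lt_two⟩

/-- A compactly supported function which agrees with complex conjugation, the simplest function
`v` with `∂̄v = 1`, on the unit disc. -/
def cutoffConj (z : ℂ) : ℂ := unitBump z • (starRingEnd ℂ) z

lemma contDiff_cutoffConj : ContDiff ℝ 1 cutoffConj :=
  unitBump.contDiff.smul Complex.conjCLE.contDiff

lemma exists_norm_cutoffConj_le :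
    ∃ M, (∀ z, ‖cutoffConj z‖ ≤ M) ∧ ∀ z, ‖fderiv ℝ cutoffConj z‖ ≤ M := by
  have hsupp : HasCompactSupport cutoffConj := unitBump.hasCompactSupport.smul_right
  obtain ⟨M₁, hM₁⟩ := hsupp.exists_bound_of_continuous contDiff_cutoffConj.continuous
  obtain ⟨M₂, hM₂⟩ := (hsupp.fderiv (𝕜 := ℝ)).exists_bound_of_continuous
    (contDiff_cutoffConj.continuous_fderiv one_ne_zero)
  exact ⟨max M₁ M₂, fun z => (hM₁ z).trans (le_max_left _ _),
    fun z => (hM₂ z).trans (le_max_right _ _)⟩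

lemma hasFDerivAt_cutoffConj (z : ℂ) : HasFDerivAt cutoffConj (fderiv ℝ cutoffConj z) z :=
  (contDiff_cutoffConj.differentiable one_ne_zero z).hasFDerivAt

lemma cutoffConj_eq_zero {z : ℂ} (hz : 2 < ‖z‖) : cutoffConj z = 0 := by
  rw [cutoffConj, unitBump.zero_of_le_dist (by simpa [unitBump] using hz.le), zero_smul]

lemma cutoffConj_eq_conj {z : ℂ} (hz : ‖z‖ ≤ 1) : cutoffConj z = (starRingEnd ℂ) z := by
  rw [cutoffConj, unitBump.one_of_mem_closedBall (by simpa [unitBump] using hz), one_smul]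

lemma dbarL_fderiv_cutoffConj_eq_zero {z : ℂ} (hz : 2 < ‖z‖) :
    dbarL (fderiv ℝ cutoffConj z) = 0 := by
  rw [hasFDerivAt_eq_zero_of_eq_zero hasFDerivAt_cutoffConj (fun _ => cutoffConj_eq_zero) hz]
  simp [dbarL]

lemma dbarL_fderiv_cutoffConj_eq_one {z : ℂ} (hz : ‖z‖ < 1) :
    dbarL (fderiv ℝ cutoffConj z) = 1 := by
  have hconj : cutoffConj =ᶠ[𝓝 z] Complex.conjCLE := by
    filter_upwards [(isOpen_lt continuous_norm continuous_const).mem_nhds hz] with w hw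
    exact cutoffConj_eq_conj (le_of_lt hw)
  rw [hconj.fderiv_eq, ContinuousLinearEquiv.fderiv]
  norm_num [dbarL]

variable {M : ℝ}

lemma norm_one_sub_dbarL_fderiv_cutoffConj_le (hM : ∀ z, ‖fderiv ℝ cutoffConj z‖ ≤ M) (w : ℂ) :
    ‖1 - dbarL (fderiv ℝ cutoffConj w)‖ ≤ (1 + M) * √‖w‖ := by
  have hM0 : 0 ≤ M := (norm_nonneg _).trans (hM 0)
  by_cases hw : ‖w‖ < 1
  · rw [dbarL_fderiv_cutoffConj_eq_one hw, sub_self, norm_zero]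
    positivity
  · calc ‖1 - dbarL (fderiv ℝ cutoffConj w)‖
        ≤ ‖(1 : ℂ)‖ + ‖dbarL (fderiv ℝ cutoffConj w)‖ := norm_sub_le _ _
      _ ≤ (1 + M) * 1 := by
        rw [norm_one, mul_one]
        gcongr
        exact (norm_dbarL_le _).trans (hM w)
      _ ≤ (1 + M) * √‖w‖ := by
        gcongr
        exact Real.one_le_sqrt.2 (not_lt.1 hw)

lemma norm_cutoffConj_sub_conj_le (hM : ∀ z, ‖cutoffConj z‖ ≤ M) (w : ℂ) :
    ‖cutoffConj w - (starRingEnd ℂ) w‖ ≤ (M + 1) * (‖w‖ * √‖w‖) := by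
  have hM0 : 0 ≤ M := (norm_nonneg _).trans (hM 0)
  rcases le_total ‖w‖ 1 with hw | hw
  · rw [cutoffConj_eq_conj hw, sub_self, norm_zero]
    positivity
  · have hsqrt : 1 ≤ √‖w‖ := Real.one_le_sqrt.2 hw
    calc ‖cutoffConj w - (starRingEnd ℂ) w‖
        ≤ ‖cutoffConj w‖ + ‖(starRingEnd ℂ) w‖ := norm_sub_le _ _
      _ ≤ M * ‖w‖ + ‖w‖ := by
        rw [Complex.norm_conj]
        gcongr
        exact (hM w).trans (le_mul_of_one_le_right hM0 hw)
      _ = (M + 1) * (‖w‖ * 1) := by ring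
      _ ≤ (M + 1) * (‖w‖ * √‖w‖) := by gcongr

end CutoffConj

section CauchyTransformDeriv

variable {W : Type*} [NormedAddCommGroup W] [NormedSpace ℂ W] {R A L : ℝ} {g γ : ℂ → W} {z₀ : ℂ}

lemma norm_inv_sq_smul_le (hL : ∀ ζ, ‖g ζ‖ ≤ L * √‖z₀ - ζ‖) (ζ : ℂ) :
    ‖((z₀ - ζ) ^ 2)⁻¹ • g ζ‖ ≤ L * ‖z₀ - ζ‖ ^ (-(3 / 2) : ℝ) := by
  rw [norm_smul, norm_inv, norm_pow]
  calc (‖z₀ - ζ‖ ^ 2)⁻¹ * ‖g ζ‖ ≤ (‖z₀ - ζ‖ ^ 2)⁻¹ * (L * √‖z₀ - ζ‖) := by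
        gcongr
        exact hL ζ
    _ = L * ((‖z₀ - ζ‖ ^ 2)⁻¹ * √‖z₀ - ζ‖) := by ring
    _ = L * ‖z₀ - ζ‖ ^ (-(3 / 2) : ℝ) := by rw [inv_sq_mul_sqrt (norm_nonneg _)]

lemma BddSupp.integrable_inv_sq_smul (hg : BddSupp R A g) (hL : ∀ ζ, ‖g ζ‖ ≤ L * √‖z₀ - ζ‖) :
    Integrable fun ζ => ((z₀ - ζ) ^ 2)⁻¹ • g ζ := by
  have hmeas : AEStronglyMeasurable (fun ζ => ((z₀ - ζ) ^ 2)⁻¹ • g ζ) :=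
    (by fun_prop : Measurable fun ζ : ℂ => ((z₀ - ζ) ^ 2)⁻¹).aestronglyMeasurable.smul hg.meas
  have hon : IntegrableOn (fun ζ => ((z₀ - ζ) ^ 2)⁻¹ • g ζ) (closedBall 0 R) :=
    ((integrableOn_norm_sub_rpow (by norm_num) R z₀).const_mul L).mono' hmeas.restrict
      (ae_of_all _ (norm_inv_sq_smul_le hL))
  exact (integrableOn_iff_integrable_of_support_subset
    (Function.support_subset_iff'.2 fun ζ =>
      hg.smul_eq_zero_of_notMem (k := fun ζ => ((z₀ - ζ) ^ 2)⁻¹))).1 hon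

lemma cauchyT_remainder_eq (hg : BddSupp R A g) (hL : ∀ ζ, ‖g ζ‖ ≤ L * √‖z₀ - ζ‖) (z : ℂ) :
    cauchyT g z - cauchyT g z₀ + (z - z₀) • ((Real.pi : ℂ)⁻¹ • ∫ ζ, ((z₀ - ζ) ^ 2)⁻¹ • g ζ) =
      (Real.pi : ℂ)⁻¹ • ∫ ζ, ((z - z₀) ^ 2 * (z - ζ)⁻¹) • (((z₀ - ζ) ^ 2)⁻¹ • g ζ) := by
  have hae : (fun ζ => ((z - z₀) ^ 2 * (z - ζ)⁻¹) • (((z₀ - ζ) ^ 2)⁻¹ • g ζ)) =ᵐ[volume]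
      fun ζ => (z - ζ)⁻¹ • g ζ - (z₀ - ζ)⁻¹ • g ζ + (z - z₀) • (((z₀ - ζ) ^ 2)⁻¹ • g ζ) := by
    filter_upwards [Measure.ae_ne volume z, Measure.ae_ne volume z₀] with ζ hz hz₀
    have hz' : z - ζ ≠ 0 := sub_ne_zero.2 hz.symm
    have hz₀' : z₀ - ζ ≠ 0 := sub_ne_zero.2 hz₀.symm
    rw [← sub_smul, smul_smul, smul_smul, ← add_smul]
    congr 1
    field_simp
    ring
  have hdiff : Integrable fun ζ => (z - ζ)⁻¹ • g ζ - (z₀ - ζ)⁻¹ • g ζ :=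
    (hg.integrable_cauchy z).sub (hg.integrable_cauchy z₀)
  have hquad : Integrable fun ζ => (z - z₀) • (((z₀ - ζ) ^ 2)⁻¹ • g ζ) :=
    (hg.integrable_inv_sq_smul hL).smul _
  rw [integral_congr_ae hae, integral_add hdiff hquad,
    integral_sub (hg.integrable_cauchy z) (hg.integrable_cauchy z₀), integral_smul, smul_add,
    smul_sub, smul_comm (z - z₀)]
  rfl

lemma norm_inv_pi_le_one : ‖(Real.pi : ℂ)⁻¹‖ ≤ 1 := by
  rw [norm_inv, Complex.norm_real, Real.norm_of_nonneg Real.pi_pos.le]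
  exact inv_le_one_of_one_le₀ (by linarith [Real.pi_gt_three])

lemma norm_cauchyT_remainder_le (hg : BddSupp R A g) (hL : ∀ ζ, ‖g ζ‖ ≤ L * √‖z₀ - ζ‖) (z : ℂ) :
    ‖cauchyT g z - cauchyT g z₀ +
        (z - z₀) • ((Real.pi : ℂ)⁻¹ • ∫ ζ, ((z₀ - ζ) ^ 2)⁻¹ • g ζ)‖ ≤
      (∫ w : ℂ, ‖1 - w‖⁻¹ * ‖w‖ ^ (-(3 / 2) : ℝ)) * L * (‖z - z₀‖ * √‖z - z₀‖) := by
  rcases eq_or_ne z z₀ with rfl | hz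
  · simp
  have hbound : ∀ ζ, ‖((z - z₀) ^ 2 * (z - ζ)⁻¹) • (((z₀ - ζ) ^ 2)⁻¹ • g ζ)‖ ≤
      ‖z - z₀‖ ^ 2 * L * (‖z - ζ‖⁻¹ * ‖z₀ - ζ‖ ^ (-(3 / 2) : ℝ)) := fun ζ => by
    rw [norm_smul, norm_mul, norm_pow, norm_inv]
    calc ‖z - z₀‖ ^ 2 * ‖z - ζ‖⁻¹ * ‖((z₀ - ζ) ^ 2)⁻¹ • g ζ‖
        ≤ ‖z - z₀‖ ^ 2 * ‖z - ζ‖⁻¹ * (L * ‖z₀ - ζ‖ ^ (-(3 / 2) : ℝ)) := by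
          gcongr
          exact norm_inv_sq_smul_le hL ζ
      _ = _ := by ring
  rw [cauchyT_remainder_eq hg hL, norm_smul]
  calc _ ≤ 1 * ∫ ζ, ‖z - z₀‖ ^ 2 * L * (‖z - ζ‖⁻¹ * ‖z₀ - ζ‖ ^ (-(3 / 2) : ℝ)) := by
        gcongr
        · exact norm_inv_pi_le_one
        · exact norm_integral_le_of_norm_le ((integrable_remainder_kernel hz).const_mul _)
            (ae_of_all _ hbound)
    _ = L * (‖z - z₀‖ ^ 2 * ∫ ζ, ‖z - ζ‖⁻¹ * ‖z₀ - ζ‖ ^ (-(3 / 2) : ℝ)) := by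
        rw [one_mul, integral_const_mul]
        ring
    _ = _ := by
        rw [integral_remainder_kernel hz]
        ring

/-- The density that is constantly `γ z₀` near `z₀`, cut off so that its Cauchy transform is
explicit. -/
def frozenDensity (γ : ℂ → W) (z₀ ζ : ℂ) : W := dbarL (fderiv ℝ cutoffConj (ζ - z₀)) • γ z₀

/-- The differential at `z₀` of the Cauchy transform of a Hölder density `γ`. Its complex linear
part is the principal value of the Beurling transform, made absolutely convergent by subtracting
the frozen density. -/
def cauchyTFDeriv (γ : ℂ → W) (z₀ : ℂ) : ℂ →L[ℝ] W :=
  (Complex.conjCLE : ℂ →L[ℝ] ℂ).smulRight (γ z₀) -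
    (ContinuousLinearMap.id ℝ ℂ).smulRight
      ((Real.pi : ℂ)⁻¹ • ∫ ζ, ((z₀ - ζ) ^ 2)⁻¹ • (γ ζ - frozenDensity γ z₀ ζ))

lemma dbarL_cauchyTFDeriv (γ : ℂ → W) (z₀ : ℂ) : dbarL (cauchyTFDeriv γ z₀) = γ z₀ := by
  simp only [dbarL, cauchyTFDeriv, _root_.sub_apply, ContinuousLinearMap.smulRight_apply,
    ContinuousLinearEquiv.coe_coe, Complex.conjCLE_apply, map_one, Complex.conj_I,
    ContinuousLinearMap.id_apply]
  generalize (Real.pi : ℂ)⁻¹ • (∫ ζ, ((z₀ - ζ) ^ 2)⁻¹ • (γ ζ - frozenDensity γ z₀ ζ)) = K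
  match_scalars
  · linear_combination (-(1 : ℂ) / 2) * Complex.I_mul_I
  · linear_combination (-(1 : ℂ) / 2) * Complex.I_mul_I

lemma bddSupp_frozenDensity {M : ℝ} (hM : ∀ z, ‖fderiv ℝ cutoffConj z‖ ≤ M)
    (hγ : ‖γ z₀‖ ≤ A) : BddSupp (2 + ‖z₀‖) (M * A) (frozenDensity γ z₀) where
  meas := by
    have hfderiv := contDiff_cutoffConj.continuous_fderiv one_ne_zero
    have : Continuous (frozenDensity γ z₀) := by
      unfold frozenDensity dbarL
      fun_prop
    exact this.aestronglyMeasurable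
  bound ζ := by
    rw [frozenDensity, norm_smul]
    exact mul_le_mul ((norm_dbarL_le _).trans (hM _)) hγ (norm_nonneg _)
      ((norm_nonneg _).trans (hM 0))
  supp ζ hζ := by
    rw [frozenDensity, dbarL_fderiv_cutoffConj_eq_zero (by linarith [norm_sub_norm_le ζ z₀]),
      zero_smul]

lemma cauchyT_frozenDensity [CompleteSpace W] (γ : ℂ → W) (z₀ z : ℂ) :
    cauchyT (frozenDensity γ z₀) z = cutoffConj (z - z₀) • γ z₀ := by
  obtain ⟨M, -, hM⟩ := exists_norm_cutoffConj_le
  have hM0 : 0 ≤ M := (norm_nonneg _).trans (hM 0)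
  have hderiv : ∀ z, HasFDerivAt (fun z => cutoffConj (z - z₀) • γ z₀)
      ((fderiv ℝ cutoffConj (z - z₀)).smulRight (γ z₀)) z := fun z =>
    ((hasFDerivAt_cutoffConj (z - z₀)).comp z
      ((hasFDerivAt_id (𝕜 := ℝ) z).sub_const z₀)).smul_const (γ z₀)
  have hbound : ∀ z, ‖(fderiv ℝ cutoffConj (z - z₀)).smulRight (γ z₀)‖ ≤ M * ‖γ z₀‖ := fun z => by
    refine ContinuousLinearMap.opNorm_le_bound _ (by positivity) fun h => ?_
    rw [ContinuousLinearMap.smulRight_apply, norm_smul, mul_right_comm]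
    gcongr
    exact (fderiv ℝ cutoffConj _).le_of_opNorm_le (hM _) h
  have hsupp : ∀ z, 2 + ‖z₀‖ < ‖z‖ → cutoffConj (z - z₀) • γ z₀ = 0 := fun z hz => by
    rw [cutoffConj_eq_zero (by linarith [norm_sub_norm_le z z₀]), zero_smul]
  rw [← cauchyT_dbarL_eq hderiv hbound hsupp z]
  congr 1
  ext ζ
  simp only [frozenDensity, dbarL, ContinuousLinearMap.smulRight_apply, smul_eq_mul]
  module

lemma norm_sub_frozenDensity_le {M : ℝ} (hM : ∀ z, ‖fderiv ℝ cutoffConj z‖ ≤ M)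
    (hγ : ‖γ z₀‖ ≤ A) (hh : SqrtHolderOn A γ univ) (ζ : ℂ) :
    ‖γ ζ - frozenDensity γ z₀ ζ‖ ≤ (2 + M) * A * √‖z₀ - ζ‖ := by
  have hsplit : γ ζ - frozenDensity γ z₀ ζ =
      (γ ζ - γ z₀) + (1 - dbarL (fderiv ℝ cutoffConj (ζ - z₀))) • γ z₀ := by
    rw [frozenDensity, sub_smul, one_smul]
    abel
  rw [hsplit, norm_sub_rev z₀]
  refine (norm_add_le _ _).trans ?_
  rw [norm_smul]
  calc _ ≤ A * √‖ζ - z₀‖ + (1 + M) * √‖ζ - z₀‖ * A :=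
        add_le_add (hh (mem_univ _) (mem_univ _))
          (mul_le_mul (norm_one_sub_dbarL_fderiv_cutoffConj_le hM _) hγ (norm_nonneg _)
            ((norm_nonneg _).trans (norm_one_sub_dbarL_fderiv_cutoffConj_le hM _)))
    _ = _ := by ring

theorem exists_norm_cauchyT_sub_cauchyTFDeriv_le [CompleteSpace W] :
    ∃ C, 0 ≤ C ∧ ∀ (R A : ℝ) (γ : ℂ → W), BddSupp R A γ →
      SqrtHolderOn A γ univ →
      ∀ z z₀, ‖cauchyT γ z - cauchyT γ z₀ - cauchyTFDeriv γ z₀ (z - z₀)‖ ≤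
        C * A * (‖z - z₀‖ * √‖z - z₀‖) := by
  obtain ⟨M, hM, hM'⟩ := exists_norm_cutoffConj_le
  have hM0 : 0 ≤ M := (norm_nonneg _).trans (hM 0)
  set K : ℝ := ∫ w : ℂ, ‖1 - w‖⁻¹ * ‖w‖ ^ (-(3 / 2) : ℝ)
  have : 0 ≤ K := integral_nonneg fun w => by positivity
  refine ⟨K * (2 + M) + (M + 1), by positivity, fun R A γ hγ hh z z₀ => ?_⟩
  have : 0 ≤ A := hγ.nonneg
  have hfrozen := bddSupp_frozenDensity hM' (hγ.bound z₀)
  have hsplit : cauchyT γ z - cauchyT γ z₀ - cauchyTFDeriv γ z₀ (z - z₀) =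
      (cauchyT (fun ζ => γ ζ - frozenDensity γ z₀ ζ) z -
        cauchyT (fun ζ => γ ζ - frozenDensity γ z₀ ζ) z₀ + (z - z₀) • ((Real.pi : ℂ)⁻¹ •
          ∫ ζ, ((z₀ - ζ) ^ 2)⁻¹ • (γ ζ - frozenDensity γ z₀ ζ))) +
      (cutoffConj (z - z₀) - (starRingEnd ℂ) (z - z₀)) • γ z₀ := by
    rw [cauchyT_sub hγ hfrozen, cauchyT_sub hγ hfrozen, cauchyT_frozenDensity,
      cauchyT_frozenDensity, sub_self z₀, cutoffConj_eq_conj (z := 0) (by simp), map_zero,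
      cauchyTFDeriv]
    simp only [_root_.sub_apply, ContinuousLinearMap.smulRight_apply, ContinuousLinearMap.id_apply,
      ContinuousLinearEquiv.coe_coe, Complex.conjCLE_apply, zero_smul, sub_zero, sub_smul]
    abel
  rw [hsplit]
  refine (norm_add_le _ _).trans ?_
  rw [norm_smul]
  calc _ ≤ K * ((2 + M) * A) * (‖z - z₀‖ * √‖z - z₀‖) +
        (M + 1) * (‖z - z₀‖ * √‖z - z₀‖) * A := by
        gcongr
        · exact norm_cauchyT_remainder_le (hγ.sub hfrozen)
            (norm_sub_frozenDensity_le hM' (hγ.bound z₀) hh) z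
        · exact norm_cutoffConj_sub_conj_le hM _
        · exact hγ.bound z₀
    _ = _ := by ring

end CauchyTransformDeriv

section CarlemanTransform

variable {W : Type*} [NormedAddCommGroup W] [NormedSpace ℂ W]

namespace BddSupp

variable {R A : ℝ} {γ : ℂ → W} {g : ℂ → ℂ}

lemma integrable_continuous_smul (h : BddSupp R A γ) (hg : Continuous g) :
    Integrable (fun ζ => g ζ • γ ζ) :=
  h.integrable_smul (hg.continuousOn.integrableOn_compact (isCompact_closedBall 0 R))

lemma exists_continuous_smul (h : BddSupp R A γ) (hg : Continuous g) :
    ∃ A', BddSupp R A' (fun ζ => g ζ • γ ζ) := by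
  obtain ⟨C, hC⟩ :=
    (isCompact_closedBall (0 : ℂ) R).exists_bound_of_continuousOn hg.continuousOn
  have : 0 ≤ A := h.nonneg
  refine ⟨max C 0 * A, hg.aestronglyMeasurable.smul h.meas, fun ζ => ?_,
    fun ζ hζ => by rw [h.supp ζ hζ, smul_zero]⟩
  rcases le_or_gt ‖ζ‖ R with hζ | hζ
  · rw [norm_smul]
    have hgC : ‖g ζ‖ ≤ max C 0 := (hC ζ (by simpa using hζ)).trans (le_max_left _ _)
    gcongr
    exact h.bound ζ
  · rw [h.supp ζ hζ, smul_zero, norm_zero]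
    positivity

lemma differentiable_integral_smul [CompleteSpace W] (h : BddSupp R A γ) {Ψ Ψ' : ℂ → ℂ → ℂ}
    (hΨ : ∀ z, Continuous (Ψ z)) (hΨ' : Continuous fun p : ℂ × ℂ => Ψ' p.1 p.2)
    (hderiv : ∀ z ζ, HasDerivAt (fun z => Ψ z ζ) (Ψ' z ζ) z) :
    Differentiable ℂ (fun z => ∫ ζ, Ψ z ζ • γ ζ) := by
  intro z₀
  obtain ⟨C, hC⟩ := ((isCompact_closedBall z₀ 1).prod
    (isCompact_closedBall (0 : ℂ) R)).exists_bound_of_continuousOn hΨ'.continuousOn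
  have : 0 ≤ A := h.nonneg
  refine (hasDerivAt_integral_of_dominated_loc_of_deriv_le (F := fun z ζ => Ψ z ζ • γ ζ)
    (F' := fun z ζ => Ψ' z ζ • γ ζ)
    (bound := (closedBall (0 : ℂ) R).indicator fun _ => max C 0 * A)
    (closedBall_mem_nhds z₀ one_pos)
    (Eventually.of_forall fun z => (h.integrable_continuous_smul (hΨ z)).aestronglyMeasurable)
    (h.integrable_continuous_smul (hΨ z₀)) ?_ ?_ ?_ ?_).2.differentiableAt
  · exact (hΨ'.comp (by fun_prop : Continuous fun ζ => (z₀, ζ))).aestronglyMeasurable.smul h.meas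
  · refine Eventually.of_forall fun ζ z hz => ?_
    rcases le_or_gt ‖ζ‖ R with hζ | hζ
    · have hmem : ζ ∈ closedBall (0 : ℂ) R := by simpa using hζ
      rw [indicator_of_mem hmem, norm_smul]
      exact mul_le_mul ((hC (z, ζ) ⟨hz, hmem⟩).trans (le_max_left _ 0)) (h.bound ζ)
        (norm_nonneg _) (le_max_right _ _)
    · rw [h.supp ζ hζ, smul_zero, norm_zero]
      exact indicator_nonneg (fun _ _ => by positivity) _
  · exact (integrable_indicator_iff measurableSet_closedBall).2
      (integrableOn_const measure_closedBall_lt_top.ne)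
  · exact Eventually.of_forall fun ζ z _ => (hderiv z ζ).smul_const _

end BddSupp

/-- The weight `e^{-k‖z‖²}` of the Carleman estimate for `∂̄`. -/
def carlemanWeight (k : ℝ) (z : ℂ) : ℝ :=
  Real.exp (-k * ‖z‖ ^ 2)

lemma carlemanWeight_pos (k : ℝ) (z : ℂ) : 0 < carlemanWeight k z :=
  Real.exp_pos _

lemma carlemanWeight_zero (k : ℝ) : carlemanWeight k 0 = 1 := by
  simp [carlemanWeight]

lemma carlemanWeight_le_one {k : ℝ} (hk : 0 ≤ k) (z : ℂ) : carlemanWeight k z ≤ 1 := by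
  rw [carlemanWeight, Real.exp_le_one_iff, neg_mul, neg_nonpos]
  positivity

lemma continuous_carlemanWeight (k : ℝ) : Continuous (carlemanWeight k) := by
  unfold carlemanWeight
  fun_prop

/-- The exponent `2k ζ̄ (z - ζ)`: it is entire in `z`, vanishes on the diagonal, and its real part
`k(‖z‖² - ‖ζ‖² - ‖z - ζ‖²)` is the one that turns the Cauchy kernel into a convolution kernel
between spaces weighted by `carlemanWeight k`. -/
def carlemanPhase (k : ℝ) (z ζ : ℂ) : ℂ :=
  2 * k * (starRingEnd ℂ) ζ * (z - ζ)

/-- The Cauchy transform with its kernel multiplied by `exp (carlemanPhase k z ζ)`. It differs from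
`cauchyT` by an entire function, but has small norm in the space weighted by `carlemanWeight k`
when `k` is large. -/
def carlemanT (k : ℝ) (γ : ℂ → W) (z : ℂ) : W :=
  (Real.pi : ℂ)⁻¹ • ∫ ζ, (Complex.exp (carlemanPhase k z ζ) * (z - ζ)⁻¹) • γ ζ

@[fun_prop]
lemma continuous_carlemanPhase (k : ℝ) (z : ℂ) : Continuous (carlemanPhase k z) := by
  have : Continuous (starRingEnd ℂ) := Complex.continuous_conj
  unfold carlemanPhase
  fun_prop

lemma carlemanWeight_mul_norm_exp_carlemanPhase (k : ℝ) (z ζ : ℂ) :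
    carlemanWeight k z * ‖Complex.exp (carlemanPhase k z ζ)‖ =
      carlemanWeight k (z - ζ) * carlemanWeight k ζ := by
  rw [Complex.norm_exp, carlemanWeight, carlemanWeight, carlemanWeight, ← Real.exp_add,
    ← Real.exp_add, carlemanPhase]
  congr 1
  simp only [← Complex.normSq_eq_norm_sq, Complex.normSq_apply, Complex.mul_re, Complex.mul_im,
    Complex.conj_re, Complex.conj_im, Complex.sub_re, Complex.sub_im, Complex.ofReal_re,
    Complex.ofReal_im, Complex.re_ofNat, Complex.im_ofNat]
  ring

namespace BddSupp

variable {R A : ℝ} {γ : ℂ → W}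

lemma integrable_carlemanT (h : BddSupp R A γ) (k : ℝ) (z : ℂ) :
    Integrable (fun ζ => (Complex.exp (carlemanPhase k z ζ) * (z - ζ)⁻¹) • γ ζ) := by
  obtain ⟨A', hA'⟩ := h.exists_continuous_smul (g := fun ζ => Complex.exp (carlemanPhase k z ζ))
    (by fun_prop)
  simpa only [smul_smul, mul_comm] using hA'.integrable_cauchy z

lemma continuous_cauchyT (h : BddSupp R A γ) : Continuous (cauchyT γ) := by
  obtain ⟨C, -, hC⟩ := exists_sqrtHolderOn_cauchyT (W := W) R
  exact (hC A γ h).continuous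

variable [CompleteSpace W]

lemma differentiable_integral_comp_carlemanPhase (h : BddSupp R A γ) (k : ℝ) {φ g : ℂ → ℂ}
    (hφ : Differentiable ℂ φ) (hg : Continuous g) :
    Differentiable ℂ (fun z => ∫ ζ, (g ζ * φ (carlemanPhase k z ζ)) • γ ζ) := by
  have : Continuous (starRingEnd ℂ) := Complex.continuous_conj
  have : Continuous (deriv φ) := (hφ.contDiff (n := 1)).continuous_deriv le_rfl
  have : Continuous φ := hφ.continuous
  refine h.differentiable_integral_smul (Ψ' := fun z ζ =>
    g ζ * (deriv φ (2 * k * (starRingEnd ℂ) ζ * (z - ζ)) * (2 * k * (starRingEnd ℂ) ζ)))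
    (fun z => by fun_prop) (by fun_prop) fun z ζ => HasDerivAt.const_mul _ ?_
  refine (hφ _).hasDerivAt.comp z ?_
  simpa [carlemanPhase] using
    ((hasDerivAt_id z).sub_const ζ).const_mul (2 * k * (starRingEnd ℂ) ζ)

/-- The quotient `(e^{a(z - ζ)} - 1) / (z - ζ)` is `a` times the entire function
`dslope exp 0` evaluated at `a(z - ζ)`. -/
lemma exists_carlemanT_eq_cauchyT_add (h : BddSupp R A γ) (k : ℝ) :
    ∃ H : ℂ → W, Differentiable ℂ H ∧ ∀ z, carlemanT k γ z = cauchyT γ z + H z := by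
  have hφ : Differentiable ℂ (dslope Complex.exp 0) := by
    rw [← differentiableOn_univ, Complex.differentiableOn_dslope univ_mem]
    exact Complex.differentiable_exp.differentiableOn
  have : Continuous (starRingEnd ℂ) := Complex.continuous_conj
  have : Continuous (dslope Complex.exp 0) := hφ.continuous
  refine ⟨_, (h.differentiable_integral_comp_carlemanPhase k hφ
    (g := fun ζ => 2 * k * (starRingEnd ℂ) ζ) (by fun_prop)).const_smul (Real.pi : ℂ)⁻¹,
    fun z => ?_⟩
  simp only [carlemanT, cauchyT, Pi.smul_apply]
  rw [← smul_add, ← integral_add (h.integrable_cauchy z)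
    (h.integrable_continuous_smul (by fun_prop))]
  congr 1
  refine integral_congr_ae ?_
  filter_upwards [Measure.ae_ne volume z] with ζ hζ
  have hne : z - ζ ≠ 0 := sub_ne_zero.2 hζ.symm
  rw [← add_smul, carlemanPhase]
  congr 1
  generalize 2 * (k : ℂ) * (starRingEnd ℂ) ζ = a
  rcases eq_or_ne a 0 with rfl | ha
  · simp
  · rw [dslope_of_ne _ (mul_ne_zero ha hne), slope_def_field, Complex.exp_zero, sub_zero]
    field_simp
    ring

lemma exists_smul_carlemanT_eq_cauchyT_add (h : BddSupp R A γ) (k : ℝ) :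
    ∃ H : ℂ → W, Differentiable ℂ H ∧
      ∀ z, z • carlemanT k γ z = cauchyT (fun ζ => ζ • γ ζ) z + H z := by
  obtain ⟨A', hidγ⟩ := h.exists_continuous_smul continuous_id
  simp only [id] at hidγ
  obtain ⟨H, hH, hHeq⟩ := hidγ.exists_carlemanT_eq_cauchyT_add k
  refine ⟨_, hH.add ((h.differentiable_integral_comp_carlemanPhase k Complex.differentiable_exp
    (g := fun _ => 1) continuous_const).const_smul (Real.pi : ℂ)⁻¹), fun z => ?_⟩
  rw [Pi.add_apply, ← add_assoc, ← hHeq]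
  simp only [carlemanT, Pi.smul_apply]
  rw [← smul_add, ← integral_add (hidγ.integrable_carlemanT k z)
    (h.integrable_continuous_smul (by fun_prop)), smul_comm, ← integral_smul]
  congr 1
  refine integral_congr_ae ?_
  filter_upwards [Measure.ae_ne volume z] with ζ hζ
  have hne : z - ζ ≠ 0 := sub_ne_zero.2 hζ.symm
  rw [smul_smul, smul_smul, ← add_smul]
  congr 1
  field_simp
  ring

lemma continuous_carlemanT (h : BddSupp R A γ) (k : ℝ) : Continuous (carlemanT k γ) := by
  obtain ⟨H, hH, hHeq⟩ := h.exists_carlemanT_eq_cauchyT_add k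
  rw [funext hHeq]
  exact h.continuous_cauchyT.add hH.continuous

end BddSupp

lemma carlemanT_sub {R A R' A' : ℝ} {γ γ' : ℂ → W} (h : BddSupp R A γ) (h' : BddSupp R' A' γ')
    (k : ℝ) (z : ℂ) :
    carlemanT k (fun ζ => γ ζ - γ' ζ) z = carlemanT k γ z - carlemanT k γ' z := by
  simp only [carlemanT, smul_sub]
  rw [← smul_sub, ← integral_sub (h.integrable_carlemanT k z) (h'.integrable_carlemanT k z)]

section

variable {k : ℝ}

lemma pow_finrank_sub_one_smul_exp_mul_inv {r : ℝ} (hr : r ∈ Ioi (0 : ℝ)) :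
    r ^ (Module.finrank ℝ ℂ - 1) • (Real.exp (-k * r ^ 2) * r⁻¹) = Real.exp (-k * r ^ 2) := by
  have : r ≠ 0 := ne_of_gt hr
  simp only [Complex.finrank_real_complex, smul_eq_mul]
  field_simp
  norm_num

lemma integrable_carlemanWeight_mul_inv_norm (hk : 0 < k) :
    Integrable (fun w : ℂ => carlemanWeight k w * ‖w‖⁻¹) := by
  unfold carlemanWeight
  rw [integrable_fun_norm_addHaar volume (f := fun r : ℝ => Real.exp (-k * r ^ 2) * r⁻¹),
    integrableOn_congr_fun (fun r hr => pow_finrank_sub_one_smul_exp_mul_inv hr)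
      measurableSet_Ioi]
  exact integrableOn_Ioi_exp_neg_mul_sq_iff.2 hk

lemma integral_carlemanWeight_mul_inv_norm (k : ℝ) :
    ∫ w : ℂ, carlemanWeight k w * ‖w‖⁻¹ = Real.pi * √(Real.pi / k) := by
  unfold carlemanWeight
  rw [integral_fun_norm_addHaar volume (f := fun r : ℝ => Real.exp (-k * r ^ 2) * r⁻¹),
    setIntegral_congr_fun measurableSet_Ioi
      (fun r hr => pow_finrank_sub_one_smul_exp_mul_inv hr), integral_gaussian_Ioi]
  simp only [Complex.finrank_real_complex, Measure.real, Complex.volume_ball, ENNReal.ofReal_one,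
    one_pow, one_mul, ENNReal.coe_toReal, NNReal.coe_real_pi, smul_eq_mul, nsmul_eq_mul,
    Nat.cast_ofNat]
  ring

theorem carlemanWeight_mul_norm_carlemanT_le {γ : ℂ → W} {Q : ℝ} (hk : 0 < k)
    (hQ : ∀ ζ, carlemanWeight k ζ * ‖γ ζ‖ ≤ Q) (z : ℂ) :
    carlemanWeight k z * ‖carlemanT k γ z‖ ≤ √(Real.pi / k) * Q := by
  set K : ℂ → ℝ := fun w => carlemanWeight k w * ‖w‖⁻¹ with hK
  have hpos : ∀ w, 0 ≤ carlemanWeight k w := fun w => (carlemanWeight_pos k w).le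
  have hpoint : ∀ ζ, ‖(carlemanWeight k z : ℂ) •
      ((Complex.exp (carlemanPhase k z ζ) * (z - ζ)⁻¹) • γ ζ)‖ ≤ K (z - ζ) * Q := by
    intro ζ
    rw [norm_smul, norm_smul, norm_mul, norm_inv, Complex.norm_real, Real.norm_of_nonneg (hpos z)]
    calc _ = (carlemanWeight k z * ‖Complex.exp (carlemanPhase k z ζ)‖) * ‖z - ζ‖⁻¹ * ‖γ ζ‖ := by
          ring
      _ = K (z - ζ) * (carlemanWeight k ζ * ‖γ ζ‖) := by
          rw [carlemanWeight_mul_norm_exp_carlemanPhase]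
          ring
      _ ≤ K (z - ζ) * Q :=
          mul_le_mul_of_nonneg_left (hQ ζ) (mul_nonneg (hpos _) (by positivity))
  have hintegral := norm_integral_le_of_norm_le
    (((integrable_carlemanWeight_mul_inv_norm hk).comp_sub_left z).mul_const Q)
    (Eventually.of_forall hpoint)
  rw [integral_smul, norm_smul, Complex.norm_real, Real.norm_of_nonneg (hpos z),
    integral_mul_const, integral_sub_left_eq_self K volume z, hK,
    integral_carlemanWeight_mul_inv_norm] at hintegral
  rw [carlemanT, norm_smul, norm_inv, Complex.norm_real, Real.norm_of_nonneg Real.pi_pos.le,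
    mul_left_comm]
  calc _ ≤ Real.pi⁻¹ * (Real.pi * √(Real.pi / k) * Q) := by gcongr
    _ = _ := by field_simp

end

end CarlemanTransform

section WeightedFixedPoint

variable {W : Type*} [NormedAddCommGroup W]

lemma exists_fixedPoint_of_weighted_contraction [NormedSpace ℝ W] [CompleteSpace W] {X : Type*}
    [TopologicalSpace X] {w : X → ℝ} (hw : Continuous w) (hpos : ∀ x, 0 < w x)
    {P : (X → W) → X → W} (hcont : ∀ m, Continuous m → Continuous (P m))
    (hbdd : ∀ m C, Continuous m → (∀ x, w x * ‖m x‖ ≤ C) → ∃ C', ∀ x, w x * ‖P m x‖ ≤ C')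
    (hcontr : ∀ m m' C, Continuous m → Continuous m' → (∀ x, w x * ‖m x - m' x‖ ≤ C) →
      ∀ x, w x * ‖P m x - P m' x‖ ≤ C / 2) :
    ∃ m, Continuous m ∧ P m = m := by
  have hnorm : ∀ x (v : W), ‖w x • v‖ = w x * ‖v‖ := fun x v => by
    rw [norm_smul, Real.norm_of_nonneg (hpos x).le]
  have hmul : ∀ x (v : W), w x * ‖(w x)⁻¹ • v‖ = ‖v‖ := fun x v => by
    rw [← hnorm, smul_inv_smul₀ (hpos x).ne']
  let unweight (n : BoundedContinuousFunction X W) (x : X) : W := (w x)⁻¹ • n x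
  have hunweight : ∀ n, Continuous (unweight n) := fun n =>
    (hw.inv₀ fun x => (hpos x).ne').smul n.continuous
  have hP : ∀ n, ∃ C, ∀ x, ‖w x • P (unweight n) x‖ ≤ C := fun n => by
    obtain ⟨C, hC⟩ := hbdd (unweight n) ‖n‖ (hunweight n) fun x =>
      (hmul x (n x)).le.trans (n.norm_coe_le_norm x)
    exact ⟨C, fun x => (hnorm x _).le.trans (hC x)⟩
  choose C hC using hP
  let Φ (n : BoundedContinuousFunction X W) : BoundedContinuousFunction X W :=
    .ofNormedAddCommGroup (fun x => w x • P (unweight n) x)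
      (hw.smul (hcont _ (hunweight n))) (C n) (hC n)
  have hΦ_apply : ∀ n x, Φ n x = w x • P (unweight n) x := fun n x => rfl
  have hΦ : ContractingWith (1 / 2) Φ := by
    refine ⟨by rw [← NNReal.coe_lt_coe]; norm_num, LipschitzWith.of_dist_le_mul fun n n' => ?_⟩
    refine (BoundedContinuousFunction.dist_le (by positivity)).2 fun x => ?_
    have hdist : ∀ x, w x * ‖unweight n x - unweight n' x‖ ≤ ‖n - n'‖ := fun x => by
      rw [← smul_sub, hmul]
      exact (n - n').norm_coe_le_norm x
    calc dist (Φ n x) (Φ n' x) = w x * ‖P (unweight n) x - P (unweight n') x‖ := by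
          rw [dist_eq_norm, hΦ_apply, hΦ_apply, ← smul_sub, hnorm]
      _ ≤ ‖n - n'‖ / 2 := hcontr _ _ _ (hunweight n) (hunweight n') hdist x
      _ = _ := by simp [dist_eq_norm, div_eq_inv_mul]
  obtain ⟨n, hn⟩ : ∃ n, Φ n = n := ⟨_, hΦ.fixedPoint_isFixedPt⟩
  refine ⟨unweight n, hunweight n, funext fun x => (eq_inv_smul_iff₀ (hpos x).ne').2 ?_⟩
  rw [← hΦ_apply, hn]

end WeightedFixedPoint

section CarlemanFixedPoint

variable {W : Type*} [NormedAddCommGroup W]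

/-- An admissible nonlinear zeroth-order term `v ↦ B ζ (v ζ)`: it preserves measurability, is
uniformly Lipschitz, and is supported over the closed disc of radius `R`. -/
structure ZerothOrderTerm (R A A₁ : ℝ) (B : ℂ → W → W) : Prop where
  nonneg : 0 ≤ A
  meas : ∀ m : ℂ → W, Continuous m → AEStronglyMeasurable (fun ζ => B ζ (m ζ)) volume
  norm_zero_le : ∀ ζ, ‖B ζ 0‖ ≤ A₁
  norm_sub_le : ∀ ζ x y, ‖B ζ x - B ζ y‖ ≤ A * ‖x - y‖
  supp : ∀ ζ x, R < ‖ζ‖ → B ζ x = 0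

namespace ZerothOrderTerm

variable {R A A₁ k : ℝ} {B : ℂ → W → W} {m m' : ℂ → W}

lemma norm_le (h : ZerothOrderTerm R A A₁ B) (ζ : ℂ) (x : W) : ‖B ζ x‖ ≤ A₁ + A * ‖x‖ := by
  have hlip := h.norm_sub_le ζ x 0
  rw [sub_zero] at hlip
  linarith [norm_sub_norm_le (B ζ x) (B ζ 0), h.norm_zero_le ζ]

lemma exists_bddSupp (h : ZerothOrderTerm R A A₁ B) (hm : Continuous m) :
    ∃ A', BddSupp R A' (fun ζ => B ζ (m ζ)) := by
  obtain ⟨C, hC⟩ :=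
    (isCompact_closedBall (0 : ℂ) R).exists_bound_of_continuousOn hm.continuousOn
  have : 0 ≤ A := h.nonneg
  have : 0 ≤ A₁ := (norm_nonneg _).trans (h.norm_zero_le 0)
  refine ⟨A₁ + A * max C 0, h.meas m hm, fun ζ => ?_, fun ζ hζ => h.supp ζ _ hζ⟩
  rcases le_or_gt ‖ζ‖ R with hζ | hζ
  · have hmC : ‖m ζ‖ ≤ max C 0 := (hC ζ (by simpa using hζ)).trans (le_max_left _ _)
    exact (h.norm_le ζ _).trans (by gcongr)
  · rw [h.supp ζ _ hζ, norm_zero]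
    positivity

lemma carlemanWeight_mul_norm_sub_le (h : ZerothOrderTerm R A A₁ B) {C : ℝ}
    (hC : ∀ ζ, carlemanWeight k ζ * ‖m ζ - m' ζ‖ ≤ C) (ζ : ℂ) :
    carlemanWeight k ζ * ‖B ζ (m ζ) - B ζ (m' ζ)‖ ≤ A * C :=
  calc _ ≤ carlemanWeight k ζ * (A * ‖m ζ - m' ζ‖) :=
        mul_le_mul_of_nonneg_left (h.norm_sub_le ζ _ _) (carlemanWeight_pos k ζ).le
    _ = A * (carlemanWeight k ζ * ‖m ζ - m' ζ‖) := by ring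
    _ ≤ A * C := mul_le_mul_of_nonneg_left (hC ζ) h.nonneg

lemma carlemanWeight_mul_norm_le (h : ZerothOrderTerm R A A₁ B) (hk : 0 ≤ k) {C : ℝ}
    (hC : ∀ ζ, carlemanWeight k ζ * ‖m ζ‖ ≤ C) (ζ : ℂ) :
    carlemanWeight k ζ * ‖B ζ (m ζ)‖ ≤ A₁ + A * C := by
  have hsub : carlemanWeight k ζ * ‖B ζ (m ζ) - B ζ 0‖ ≤ A * C :=
    h.carlemanWeight_mul_norm_sub_le (m' := 0) (by simpa using hC) ζ
  calc carlemanWeight k ζ * ‖B ζ (m ζ)‖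
      ≤ carlemanWeight k ζ * (‖B ζ 0‖ + ‖B ζ (m ζ) - B ζ 0‖) :=
        mul_le_mul_of_nonneg_left (norm_le_insert' _ _) (carlemanWeight_pos k ζ).le
    _ ≤ 1 * A₁ + A * C := by
        rw [mul_add]
        refine add_le_add (mul_le_mul (carlemanWeight_le_one hk ζ) (h.norm_zero_le ζ)
          (norm_nonneg _) zero_le_one) hsub
    _ = A₁ + A * C := by rw [one_mul]

end ZerothOrderTerm

lemma carlemanWeight_mul_norm_sub_sub_apply_zero_le {k C : ℝ} (hk : 0 ≤ k) {T : ℂ → W}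
    (hT : ∀ z, carlemanWeight k z * ‖T z‖ ≤ C) (z : ℂ) :
    carlemanWeight k z * ‖T z - T 0‖ ≤ 2 * C := by
  have hT0 : ‖T 0‖ ≤ C := by simpa [carlemanWeight_zero] using hT 0
  calc _ ≤ carlemanWeight k z * (‖T z‖ + ‖T 0‖) :=
        mul_le_mul_of_nonneg_left (norm_sub_le _ _) (carlemanWeight_pos k z).le
    _ ≤ C + 1 * C := by
        rw [mul_add]
        exact add_le_add (hT z) (mul_le_mul (carlemanWeight_le_one hk z) hT0 (norm_nonneg _)
          zero_le_one)
    _ = 2 * C := by ring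

variable [NormedSpace ℂ W]

/-- The Picard operator of the equation `∂̄m = B(·, m)` with `m 0 = c`, up to an entire function. -/
def carlemanPicard (k : ℝ) (B : ℂ → W → W) (c : W) (m : ℂ → W) (z : ℂ) : W :=
  c + (carlemanT k (fun ζ => B ζ (m ζ)) z - carlemanT k (fun ζ => B ζ (m ζ)) 0)

namespace ZerothOrderTerm

variable {R A A₁ k : ℝ} {B : ℂ → W → W} {m m' : ℂ → W}

lemma exists_carlemanWeight_mul_norm_carlemanPicard_le (h : ZerothOrderTerm R A A₁ B)
    (hk : 0 < k) {C : ℝ} (c : W) (hC : ∀ ζ, carlemanWeight k ζ * ‖m ζ‖ ≤ C) :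
    ∃ C', ∀ z, carlemanWeight k z * ‖carlemanPicard k B c m z‖ ≤ C' := by
  have hT := carlemanWeight_mul_norm_sub_sub_apply_zero_le hk.le
    (carlemanWeight_mul_norm_carlemanT_le hk (h.carlemanWeight_mul_norm_le hk.le hC))
  refine ⟨1 * ‖c‖ + 2 * (√(Real.pi / k) * (A₁ + A * C)), fun z => ?_⟩
  refine (mul_le_mul_of_nonneg_left (norm_add_le _ _) (carlemanWeight_pos k z).le).trans ?_
  rw [mul_add]
  exact add_le_add (mul_le_mul_of_nonneg_right (carlemanWeight_le_one hk.le z) (norm_nonneg _))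
    (hT z)

lemma carlemanWeight_mul_norm_carlemanPicard_sub_le (h : ZerothOrderTerm R A A₁ B) (hk : 0 < k)
    {C : ℝ} (c : W) (hm : Continuous m) (hm' : Continuous m')
    (hC : ∀ ζ, carlemanWeight k ζ * ‖m ζ - m' ζ‖ ≤ C) (z : ℂ) :
    carlemanWeight k z * ‖carlemanPicard k B c m z - carlemanPicard k B c m' z‖ ≤
      2 * (√(Real.pi / k) * (A * C)) := by
  obtain ⟨_, hBm⟩ := h.exists_bddSupp hm
  obtain ⟨_, hBm'⟩ := h.exists_bddSupp hm'
  have hT := carlemanWeight_mul_norm_sub_sub_apply_zero_le hk.le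
    (carlemanWeight_mul_norm_carlemanT_le hk (h.carlemanWeight_mul_norm_sub_le hC)) z
  rw [carlemanT_sub hBm hBm', carlemanT_sub hBm hBm'] at hT
  convert hT using 3
  simp only [carlemanPicard]
  abel

variable [CompleteSpace W]

lemma continuous_carlemanPicard (h : ZerothOrderTerm R A A₁ B) (c : W) (hm : Continuous m) :
    Continuous (carlemanPicard k B c m) := by
  obtain ⟨A', hA'⟩ := h.exists_bddSupp hm
  exact continuous_const.add ((hA'.continuous_carlemanT k).sub continuous_const)

/-- For `k` large the Picard operator contracts the norm weighted by `carlemanWeight k`,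
whatever the Lipschitz constant of `B`. -/
theorem exists_eq_carlemanPicard (h : ZerothOrderTerm R A A₁ B) (c : W) :
    ∃ (k : ℝ) (m : ℂ → W), Continuous m ∧ carlemanPicard k B c m = m := by
  have : 0 ≤ A := h.nonneg
  have : 0 < Real.pi := Real.pi_pos
  set k : ℝ := Real.pi * (4 * (A + 1)) ^ 2 with hk_def
  have hk : 0 < k := by positivity
  have hsqrt : √(Real.pi / k) = (4 * (A + 1))⁻¹ := by
    rw [show Real.pi / k = ((4 * (A + 1))⁻¹) ^ 2 by rw [hk_def]; field_simp,
      Real.sqrt_sq (by positivity)]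
  refine ⟨k, exists_fixedPoint_of_weighted_contraction (continuous_carlemanWeight k)
    (carlemanWeight_pos k) (fun m hm => h.continuous_carlemanPicard c hm)
    (fun m C _ hC => h.exists_carlemanWeight_mul_norm_carlemanPicard_le hk c hC)
    fun m m' C hm hm' hC z => ?_⟩
  have : 0 ≤ C := (mul_nonneg (carlemanWeight_pos k 0).le (norm_nonneg _)).trans (hC 0)
  calc _ ≤ 2 * (√(Real.pi / k) * (A * C)) :=
        h.carlemanWeight_mul_norm_carlemanPicard_sub_le hk c hm hm' hC z
    _ = A / (A + 1) * (C / 2) := by rw [hsqrt]; field_simp; ring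
    _ ≤ 1 * (C / 2) := by
        gcongr
        rw [div_le_one (by positivity)]
        linarith
    _ = C / 2 := one_mul _

end ZerothOrderTerm

end CarlemanFixedPoint

section SqrtHolder

variable {X V : Type*} [NormedAddCommGroup X] [NormedAddCommGroup V] {s : Set X}

lemma le_sqrt_mul_sqrt {a b : ℝ} (ha : 0 ≤ a) (hab : a ≤ b) : a ≤ √b * √a :=
  calc a = √a * √a := (Real.mul_self_sqrt ha).symm
    _ ≤ √b * √a := by gcongr

lemma SqrtHolderOn.of_norm_sub_le {L d : ℝ} {u : X → V} (hL : 0 ≤ L)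
    (hd : ∀ z ∈ s, ∀ w ∈ s, ‖z - w‖ ≤ d) (h : ∀ z ∈ s, ∀ w ∈ s, ‖u z - u w‖ ≤ L * ‖z - w‖) :
    SqrtHolderOn (L * √d) u s := fun z hz w hw => by
  rw [mul_assoc]
  exact (h z hz w hw).trans
    (mul_le_mul_of_nonneg_left (le_sqrt_mul_sqrt (norm_nonneg _) (hd z hz w hw)) hL)

lemma norm_sub_le_two_mul_of_mem_closedBall {r : ℝ} {z w : X} (hz : z ∈ closedBall 0 r)
    (hw : w ∈ closedBall 0 r) : ‖z - w‖ ≤ 2 * r := by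
  rw [mem_closedBall_zero_iff] at hz hw
  linarith [norm_sub_le z w]

lemma SqrtHolderOn.clm_apply {V' : Type*} [NormedAddCommGroup V'] [NormedSpace ℝ V]
    [NormedSpace ℝ V'] {A : X → V →L[ℝ] V'} {v : X → V} {M N C C' : ℝ}
    (hA : SqrtHolderOn C A s) (hAM : ∀ z ∈ s, ‖A z‖ ≤ M) (hv : SqrtHolderOn C' v s)
    (hvN : ∀ z ∈ s, ‖v z‖ ≤ N) : SqrtHolderOn (C * N + M * C') (fun z => A z (v z)) s := by
  intro z hz w hw
  have hsplit : A z (v z) - A w (v w) = (A z - A w) (v z) + A w (v z - v w) := by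
    rw [_root_.sub_apply, map_sub]
    abel
  calc ‖A z (v z) - A w (v w)‖ ≤ C * √‖z - w‖ * N + M * (C' * √‖z - w‖) := by
        rw [hsplit]
        exact norm_add_le_of_le
          (ContinuousLinearMap.le_of_opNorm_le_of_le _ (hA hz hw) (hvN z hz))
          (ContinuousLinearMap.le_of_opNorm_le_of_le _ (hAM w hw) (hv hz hw))
    _ = _ := by ring

/-- A function supported in the disc of radius `R` only needs to be controlled on a
neighbourhood of that disc: far away points are handled by the bound on its values. -/
lemma BddSupp.sqrtHolderOn_univ {W : Type*} [NormedAddCommGroup W] {R A C : ℝ}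
    {γ : ℂ → W} (h : BddSupp R A γ) (hC : SqrtHolderOn C γ (closedBall 0 (R + 1))) :
    SqrtHolderOn (max C (2 * A)) γ univ := by
  have hA : 0 ≤ A := h.nonneg
  intro z _ w _
  rcases le_total 1 ‖z - w‖ with hzw | hzw
  · calc ‖γ z - γ w‖ ≤ A + A := norm_sub_le_of_le (h.bound z) (h.bound w)
      _ ≤ max C (2 * A) * 1 := by linarith [le_max_right C (2 * A)]
      _ ≤ max C (2 * A) * √‖z - w‖ := by
        gcongr
        exact Real.one_le_sqrt.2 hzw
  by_cases hout : R < ‖z‖ ∧ R < ‖w‖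
  · rw [h.supp z hout.1, h.supp w hout.2, sub_zero, norm_zero]
    positivity
  · have hdist := abs_le.1 (abs_norm_sub_norm_le z w)
    have hmem : ‖z‖ ≤ R + 1 ∧ ‖w‖ ≤ R + 1 := by
      rw [not_and_or, not_lt, not_lt] at hout
      rcases hout with hz | hw <;> constructor <;> linarith
    refine (hC (by simpa using hmem.1) (by simpa using hmem.2)).trans ?_
    gcongr
    exact le_max_left _ _

end SqrtHolder

section DbarSolution

variable {W : Type*} [NormedAddCommGroup W] [NormedSpace ℂ W]

lemma dbarL_add (ℓ ℓ' : ℂ →L[ℝ] W) : dbarL (ℓ + ℓ') = dbarL ℓ + dbarL ℓ' := by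
  simp only [dbarL, _root_.add_apply]
  module

lemma dbarL_restrictScalars (ℓ : ℂ →L[ℂ] W) : dbarL (ℓ.restrictScalars ℝ) = 0 := by
  have hI : ℓ Complex.I = Complex.I • ℓ 1 := by
    rw [← map_smul, smul_eq_mul, mul_one]
  simp only [dbarL, ContinuousLinearMap.coe_restrictScalars', hI, smul_smul, Complex.I_mul_I,
    neg_smul, one_smul, add_neg_cancel, smul_zero]

lemma exists_sqrtHolderOn_of_differentiable [CompleteSpace W] {H : ℂ → W}
    (hH : Differentiable ℂ H) (r : ℝ) : ∃ C, SqrtHolderOn C H (closedBall 0 r) := by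
  have hcont : Continuous (deriv H) := (hH.contDiff (n := 1)).continuous_deriv le_rfl
  obtain ⟨L, hL⟩ :=
    (isCompact_closedBall (0 : ℂ) r).exists_bound_of_continuousOn hcont.continuousOn
  refine ⟨_, SqrtHolderOn.of_norm_sub_le (le_max_right L 0)
    (fun z hz w hw => norm_sub_le_two_mul_of_mem_closedBall hz hw) fun z hz w hw => ?_⟩
  exact (convex_closedBall (0 : ℂ) r).norm_image_sub_le_of_norm_deriv_le (fun x _ => hH x)
    (fun x hx => (hL x hx).trans (le_max_left _ _)) hw hz

/-- `V` is a differentiable solution of `∂̄V + A V = G` on `ℂ` with derivative `V'`, and `V'` is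
`1/2`-Hölder on the closed unit disc. -/
structure DbarSolution (A : ℂ → W →L[ℝ] W) (G V : ℂ → W) (V' : ℂ → ℂ →L[ℝ] W) : Prop where
  hasFDerivAt : ∀ z, HasFDerivAt V (V' z) z
  holder : ∃ C, SqrtHolderOn C V' (closedBall 0 1)
  eq : ∀ z, dbarL (V' z) + A z (V z) = G z

lemma DbarSolution.add {A : ℂ → W →L[ℝ] W} {G₁ G₂ V₁ V₂ : ℂ → W} {V₁' V₂' : ℂ → ℂ →L[ℝ] W}
    (h₁ : DbarSolution A G₁ V₁ V₁') (h₂ : DbarSolution A G₂ V₂ V₂') :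
    DbarSolution A (fun z => G₁ z + G₂ z) (fun z => V₁ z + V₂ z) (fun z => V₁' z + V₂' z) := by
  obtain ⟨C₁, hC₁⟩ := h₁.holder
  obtain ⟨C₂, hC₂⟩ := h₂.holder
  refine ⟨fun z => (h₁.hasFDerivAt z).add (h₂.hasFDerivAt z), ⟨_, hC₁.add hC₂⟩, fun z => ?_⟩
  rw [dbarL_add, map_add, ← h₁.eq z, ← h₂.eq z, add_add_add_comm]

/-- `u` is bounded by `M`, globally `1/2`-Hölder with constant `M`, and supported in the closed
disc of radius `R`: the condition on the data of the linear `∂̄`-equation. -/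
structure BddHolderSupp {V : Type*} [NormedAddCommGroup V] (R M : ℝ) (u : ℂ → V) : Prop where
  bound : ∀ z, ‖u z‖ ≤ M
  holder : SqrtHolderOn M u univ
  supp : ∀ z, R < ‖z‖ → u z = 0

lemma BddHolderSupp.nonneg {V : Type*} [NormedAddCommGroup V] {R M : ℝ} {u : ℂ → V}
    (h : BddHolderSupp R M u) : 0 ≤ M :=
  (norm_nonneg _).trans (h.bound 0)

lemma bddHolderSupp_zero {V : Type*} [NormedAddCommGroup V] {R M : ℝ} (hM : 0 ≤ M) :
    BddHolderSupp R M (fun _ => (0 : V)) :=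
  ⟨fun _ => by simpa using hM, fun z _ w _ => by simpa using by positivity, fun _ _ => rfl⟩

section CompleteSpace

variable [CompleteSpace W] {R Q : ℝ} {Γ H : ℂ → W}

lemma hasFDerivAt_cauchyT (hΓ : BddSupp R Q Γ) (hholder : SqrtHolderOn Q Γ univ) (z : ℂ) :
    HasFDerivAt (cauchyT Γ) (cauchyTFDeriv Γ z) z := by
  obtain ⟨C, -, hC⟩ := exists_norm_cauchyT_sub_cauchyTFDeriv_le (W := W)
  exact hasFDerivAt_of_taylor_three_halves (hC R Q Γ hΓ hholder) z

lemma exists_sqrtHolderOn_cauchyTFDeriv (hΓ : BddSupp R Q Γ) (hholder : SqrtHolderOn Q Γ univ) :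
    ∃ C, SqrtHolderOn C (cauchyTFDeriv Γ) univ := by
  obtain ⟨C, -, hC⟩ := exists_norm_cauchyT_sub_cauchyTFDeriv_le (W := W)
  exact ⟨_, sqrtHolderOn_of_taylor_three_halves (hC R Q Γ hΓ hholder)⟩

lemma exists_sqrtHolderOn_cauchyT_add (hΓ : BddSupp R Q Γ) (hH : Differentiable ℂ H) (r : ℝ) :
    ∃ C, SqrtHolderOn C (fun z => cauchyT Γ z + H z) (closedBall 0 r) := by
  obtain ⟨C, -, hC⟩ := exists_sqrtHolderOn_cauchyT (W := W) R
  obtain ⟨C', hC'⟩ := exists_sqrtHolderOn_of_differentiable hH r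
  exact ⟨_, ((hC Q Γ hΓ).mono (subset_univ _)).add hC'⟩

/-- Bootstrapping: the integral equation makes `V` Hölder, hence also its density `G - A V`. -/
lemma exists_sqrtHolderOn_density {M A' : ℝ} {A : ℂ → W →L[ℝ] W} {G V : ℂ → W}
    (hA : BddHolderSupp R M A) (hG : BddHolderSupp R M G)
    (hΓ : BddSupp R A' (fun z => G z - A z (V z))) (hH : Differentiable ℂ H)
    (hV : ∀ z, V z = cauchyT (fun z => G z - A z (V z)) z + H z) :
    ∃ C, SqrtHolderOn C (fun z => G z - A z (V z)) univ := by
  obtain ⟨C, hC⟩ : ∃ C, SqrtHolderOn C V (closedBall 0 (R + 1)) := by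
    obtain ⟨C, hC⟩ := exists_sqrtHolderOn_cauchyT_add hΓ hH (R + 1)
    exact ⟨C, by rwa [← funext hV] at hC⟩
  obtain ⟨N, hN⟩ :=
    (isCompact_closedBall (0 : ℂ) (R + 1)).exists_bound_of_continuousOn hC.continuousOn
  have hAV := ((hA.holder.mono (subset_univ _)).clm_apply (fun z _ => hA.bound z) hC hN)
  have hneg : SqrtHolderOn (M * N + M * C) (fun z => -A z (V z)) (closedBall 0 (R + 1)) :=
    fun z hz w hw => by
      rw [neg_sub_neg, norm_sub_rev]
      exact hAV hz hw
  simp only [sub_eq_add_neg] at hΓ ⊢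
  exact ⟨_, hΓ.sqrtHolderOn_univ ((hG.holder.mono (subset_univ _)).add hneg)⟩

lemma DbarSolution.of_eq_cauchyT_add {M A' : ℝ} {A : ℂ → W →L[ℝ] W} {G V : ℂ → W}
    (hA : BddHolderSupp R M A) (hG : BddHolderSupp R M G)
    (hΓ : BddSupp R A' (fun z => G z - A z (V z))) (hH : Differentiable ℂ H)
    (hV : ∀ z, V z = cauchyT (fun z => G z - A z (V z)) z + H z) :
    ∃ V', DbarSolution A G V V' := by
  obtain ⟨C, hC⟩ := exists_sqrtHolderOn_density hA hG hΓ hH hV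
  set Γ : ℂ → W := fun z => G z - A z (V z)
  have hΓmax : BddSupp R (max A' C) Γ := hΓ.mono le_rfl (le_max_left _ _)
  have hholder : SqrtHolderOn (max A' C) Γ univ := hC.mono_const (le_max_right _ _)
  obtain ⟨C₁, hC₁⟩ := exists_sqrtHolderOn_cauchyTFDeriv hΓmax hholder
  have hfderivH : Differentiable ℂ (fderiv ℂ H) :=
    ((hH.contDiff (n := 2)).fderiv_right (m := 1) (by norm_num)).differentiable one_ne_zero
  obtain ⟨C₂, hC₂⟩ := exists_sqrtHolderOn_of_differentiable hfderivH 1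
  refine ⟨fun z => cauchyTFDeriv Γ z + (fderiv ℂ H z).restrictScalars ℝ, fun z => ?_,
    ⟨C₁ + C₂, (hC₁.mono (subset_univ _)).add hC₂⟩, fun z => ?_⟩
  · rw [funext hV]
    exact (hasFDerivAt_cauchyT hΓmax hholder z).add ((hH z).hasFDerivAt.restrictScalars ℝ)
  · rw [dbarL_add, dbarL_restrictScalars, dbarL_cauchyTFDeriv, add_zero]
    exact sub_add_cancel _ _

end CompleteSpace

section LinearTerms

variable {R M : ℝ} {A : ℂ → W →L[ℝ] W} {G : ℂ → W}

lemma zerothOrderTerm_sub (hA : BddHolderSupp R M A) (hG : BddHolderSupp R M G) :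
    ZerothOrderTerm R M M (fun ζ x => G ζ - A ζ x) where
  nonneg := hA.nonneg
  meas m hm := (hG.holder.continuous.sub (hA.holder.continuous.clm_apply hm)).aestronglyMeasurable
  norm_zero_le ζ := by simpa using hG.bound ζ
  norm_sub_le ζ x y := by
    rw [sub_sub_sub_cancel_left, ← map_sub, norm_sub_rev]
    exact (A ζ).le_of_opNorm_le (hA.bound ζ) _
  supp ζ x hζ := by rw [hA.supp ζ hζ, hG.supp ζ hζ, zero_apply, sub_zero]

lemma zerothOrderTerm_inv_smul (hA : BddHolderSupp R M A) :
    ZerothOrderTerm R M 0 (fun ζ x => -(ζ⁻¹ • A ζ (ζ • x))) where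
  nonneg := hA.nonneg
  meas m hm := (measurable_inv.stronglyMeasurable.aestronglyMeasurable.smul
    (hA.holder.continuous.clm_apply (continuous_id.smul hm)).aestronglyMeasurable).neg
  norm_zero_le ζ := by simp
  norm_sub_le ζ x y := by
    have : 0 ≤ M := hA.nonneg
    rw [neg_sub_neg, ← smul_sub, ← map_sub, ← smul_sub, norm_smul, norm_inv, norm_sub_rev x y]
    calc ‖ζ‖⁻¹ * ‖A ζ (ζ • (y - x))‖ ≤ ‖ζ‖⁻¹ * (M * ‖ζ • (y - x)‖) := by
          gcongr
          exact (A ζ).le_of_opNorm_le (hA.bound ζ) _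
      _ = ‖ζ‖⁻¹ * ‖ζ‖ * (M * ‖y - x‖) := by
          rw [norm_smul]
          ring
      _ ≤ 1 * (M * ‖y - x‖) := by
          gcongr
          exact inv_mul_le_one
      _ = M * ‖y - x‖ := one_mul _
  supp ζ x hζ := by rw [hA.supp ζ hζ, zero_apply, smul_zero, neg_zero]

variable [CompleteSpace W]

lemma exists_dbarSolution_apply_zero_eq (hA : BddHolderSupp R M A) (hG : BddHolderSupp R M G)
    (a : W) : ∃ V V', DbarSolution A G V V' ∧ V 0 = a := by
  obtain ⟨k, V, hV, hpicard⟩ := (zerothOrderTerm_sub hA hG).exists_eq_carlemanPicard a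
  obtain ⟨A', hΓ⟩ := (zerothOrderTerm_sub hA hG).exists_bddSupp hV
  obtain ⟨H, hH, hHeq⟩ := hΓ.exists_carlemanT_eq_cauchyT_add k
  have hV0 : V 0 = a := by
    rw [← hpicard, carlemanPicard, sub_self, add_zero]
  obtain ⟨V', hV'⟩ := DbarSolution.of_eq_cauchyT_add hA hG hΓ
    (H := fun z => H z + (a - carlemanT k (fun ζ => G ζ - A ζ (V ζ)) 0)) (by fun_prop) fun z => by
      conv_lhs => rw [← hpicard, carlemanPicard, hHeq z]
      abel
  exact ⟨V, V', hV', hV0⟩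

/-- Writing `V z = z • m z`, the equation becomes `∂̄m = -z⁻¹ A(z • m)`, whose right-hand side is
again a Lipschitz zeroth-order term, and `V'(0)1 = m 0` can be prescribed. -/
lemma exists_dbarSolution_homogeneous (hA : BddHolderSupp R M A) (b : W) :
    ∃ V V', DbarSolution A (fun _ => 0) V V' ∧ V 0 = 0 ∧ V' 0 1 = b := by
  obtain ⟨k, m, hm, hpicard⟩ := (zerothOrderTerm_inv_smul hA).exists_eq_carlemanPicard b
  obtain ⟨A', hΓ⟩ := (zerothOrderTerm_inv_smul hA).exists_bddSupp hm
  obtain ⟨H, hH, hHeq⟩ := hΓ.exists_smul_carlemanT_eq_cauchyT_add k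
  have hm0 : m 0 = b := by
    rw [← hpicard, carlemanPicard, sub_self, add_zero]
  have hdensity : (fun ζ : ℂ => ζ • (-(ζ⁻¹ • A ζ (ζ • m ζ)))) = fun ζ => 0 - A ζ (ζ • m ζ) := by
    funext ζ
    rcases eq_or_ne ζ 0 with rfl | hζ
    · simp
    · rw [smul_neg, smul_inv_smul₀ hζ, zero_sub]
  obtain ⟨A'', hdensityBdd⟩ := hΓ.exists_continuous_smul continuous_id
  simp only [id, hdensity] at hdensityBdd
  obtain ⟨V', hV'⟩ := DbarSolution.of_eq_cauchyT_add hA (bddHolderSupp_zero hA.nonneg)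
    (V := fun z => z • m z) hdensityBdd
    (H := fun z => H z + z • (b - carlemanT k (fun ζ => -(ζ⁻¹ • A ζ (ζ • m ζ))) 0))
    (by fun_prop) fun z => by
      rw [← hdensity]
      conv_lhs => rw [← hpicard, carlemanPicard, add_sub_left_comm, smul_add, hHeq z]
      rw [add_assoc]
  have hderiv : HasDerivAt (fun z => z • m z) b 0 := by
    rw [hasDerivAt_iff_tendsto_slope_zero]
    refine (hm0 ▸ (hm.tendsto 0).mono_left nhdsWithin_le_nhds :
      Tendsto m (𝓝[≠] 0) (𝓝 b)).congr' ?_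
    filter_upwards [self_mem_nhdsWithin] with t ht
    rw [zero_add, zero_smul, sub_zero, inv_smul_smul₀ ht]
  refine ⟨_, V', hV', zero_smul _ _, ?_⟩
  rw [(hV'.hasFDerivAt 0).unique (hderiv.hasFDerivAt.restrictScalars ℝ)]
  simp

theorem exists_dbarSolution (hA : BddHolderSupp R M A) (hG : BddHolderSupp R M G) (a b : W) :
    ∃ V V', DbarSolution A G V V' ∧ V 0 = a ∧ V' 0 1 = b := by
  obtain ⟨V₁, V₁', h₁, ha⟩ := exists_dbarSolution_apply_zero_eq hA hG a
  obtain ⟨V₂, V₂', h₂, h0, hb⟩ := exists_dbarSolution_homogeneous hA (b - V₁' 0 1)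
  refine ⟨_, _, by simpa only [add_zero] using h₁.add h₂, ?_, ?_⟩
  · rw [ha, h0, add_zero]
  · rw [_root_.add_apply, hb, add_sub_cancel]

end LinearTerms

end DbarSolution

section InteriorEstimate

variable {W : Type*} [NormedAddCommGroup W] [NormedSpace ℂ W]
variable {p : ℂ → W} {p' : ℂ → ℂ →L[ℝ] W} {ρ : ℝ}

lemma dbarL_zero : dbarL (0 : ℂ →L[ℝ] W) = 0 := by
  simp only [dbarL, zero_apply, smul_zero, add_zero]

lemma dbarL_smul (c : ℝ) (ℓ : ℂ →L[ℝ] W) : dbarL (c • ℓ) = c • dbarL ℓ := by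
  simp only [dbarL, _root_.smul_apply]
  module

lemma norm_dbarL_smul_add_smulRight_le (c : ℝ) (ℓ : ℂ →L[ℝ] W) (k : ℂ →L[ℝ] ℝ) (x : W) :
    ‖dbarL (c • ℓ + k.smulRight x)‖ ≤ |c| * ‖dbarL ℓ‖ + ‖k‖ * ‖x‖ := by
  rw [dbarL_add, dbarL_smul]
  refine norm_add_le_of_le ?_ ((norm_dbarL_le _).trans ?_)
  · rw [norm_smul, Real.norm_eq_abs]
  · rw [ContinuousLinearMap.norm_smulRight_apply]

lemma hasFDerivAt_bump_smul (χ : ContDiffBump (0 : ℂ)) (hχ : χ.rOut < ρ)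
    (hp : ∀ z ∈ ball 0 ρ, HasFDerivAt p (p' z) z) (z : ℂ) :
    HasFDerivAt (fun z => χ z • p z)
      ((ball 0 ρ).indicator (fun z => χ z • p' z + (fderiv ℝ χ z).smulRight (p z)) z) z := by
  by_cases hz : z ∈ ball 0 ρ
  · rw [indicator_of_mem hz]
    exact (((χ.contDiff (n := 1)).differentiable one_ne_zero) z).hasFDerivAt.smul (hp z hz)
  · rw [indicator_of_notMem hz]
    refine (hasFDerivAt_const (0 : W) z).congr_of_eventuallyEq ?_
    have hlt : χ.rOut < dist z 0 := hχ.trans_le (not_lt.1 hz)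
    have hnear : ∀ᶠ w in 𝓝 z, χ.rOut < dist w 0 :=
      (continuous_id.dist continuous_const).continuousAt.eventually_const_lt hlt
    filter_upwards [hnear] with w hw
    rw [χ.zero_of_le_dist (le_of_lt hw), zero_smul]

lemma exists_norm_fderiv_bump_le (χ : ContDiffBump (0 : ℂ)) :
    ∃ X, 0 ≤ X ∧ ∀ z, ‖fderiv ℝ χ z‖ ≤ X := by
  obtain ⟨X, hX⟩ := (χ.hasCompactSupport.fderiv (𝕜 := ℝ)).exists_bound_of_continuous
    ((χ.contDiff (n := 1)).continuous_fderiv one_ne_zero)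
  exact ⟨X, (norm_nonneg _).trans (hX 0), hX⟩

lemma abs_bump_le_one (χ : ContDiffBump (0 : ℂ)) (z : ℂ) : |χ z| ≤ 1 :=
  abs_le.2 ⟨by linarith [χ.nonneg' z], χ.le_one⟩

lemma norm_dbarL_indicator_le {s : Set ℂ} {C : ℝ} (hC : 0 ≤ C)
    (h : ∀ z ∈ s, ‖dbarL (p' z)‖ ≤ C) (z : ℂ) : ‖dbarL (s.indicator p' z)‖ ≤ C := by
  by_cases hz : z ∈ s
  · rw [indicator_of_mem hz]
    exact h z hz
  · rwa [indicator_of_notMem hz, dbarL_zero, norm_zero]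

variable [CompleteSpace W]

lemma bddSupp_dbarL {A : ℝ} (hp : ∀ z, HasFDerivAt p (p' z) z)
    (hA : ∀ z, ‖dbarL (p' z)‖ ≤ A) (hρ : ∀ z, ρ < ‖z‖ → p z = 0) :
    BddSupp ρ A (fun z => dbarL (p' z)) where
  meas := (((stronglyMeasurable_hasFDerivAt_apply_const hp 1).add
    ((stronglyMeasurable_hasFDerivAt_apply_const hp Complex.I).const_smul Complex.I)).const_smul
      (1 / 2 : ℂ)).aestronglyMeasurable
  bound := hA
  supp z hz := by rw [hasFDerivAt_eq_zero_of_eq_zero hp hρ hz, dbarL_zero]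

/-- Apply the Cauchy–Pompeiu formula to the product of `p` with a cutoff. -/
theorem exists_sqrtHolderOn_of_norm_dbarL_le {r : ℝ} (hr : 0 < r) (hrρ : r < ρ) :
    ∃ C, 0 ≤ C ∧ ∀ (p : ℂ → W) (p' : ℂ → ℂ →L[ℝ] W) (a b M : ℝ),
      (∀ z ∈ ball 0 ρ, HasFDerivAt p (p' z) z) → (∀ z ∈ ball 0 ρ, ‖p z‖ ≤ a) →
      (∀ z ∈ ball 0 ρ, ‖dbarL (p' z)‖ ≤ b) → (∀ z ∈ ball 0 ρ, ‖p' z‖ ≤ M) →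
      SqrtHolderOn (C * (a + b)) p (closedBall 0 r) := by
  let χ : ContDiffBump (0 : ℂ) := ⟨r, (r + ρ) / 2, hr, by linarith⟩
  have hχρ : χ.rOut < ρ := by
    change (r + ρ) / 2 < ρ
    linarith
  obtain ⟨X, hX0, hX⟩ := exists_norm_fderiv_bump_le χ
  obtain ⟨CT, hCT, hT⟩ := exists_sqrtHolderOn_cauchyT (W := W) ρ
  refine ⟨CT * (1 + X), by positivity, fun p p' a b M hp ha hb hM => ?_⟩
  have h0 : (0 : ℂ) ∈ ball 0 ρ := mem_ball_self (hr.trans hrρ)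
  have ha0 : 0 ≤ a := (norm_nonneg _).trans (ha 0 h0)
  have hb0 : 0 ≤ b := (norm_nonneg _).trans (hb 0 h0)
  have hM0 : 0 ≤ M := (norm_nonneg _).trans (hM 0 h0)
  have hU := hasFDerivAt_bump_smul χ hχρ hp
  set U' : ℂ → ℂ →L[ℝ] W :=
    (ball 0 ρ).indicator fun z => χ z • p' z + (fderiv ℝ χ z).smulRight (p z) with hU'
  have hUsupp : ∀ z, ρ < ‖z‖ → χ z • p z = 0 := fun z hz => by
    rw [χ.zero_of_le_dist (by simpa using (hχρ.trans hz).le), zero_smul]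
  have hUbar : ∀ z, ‖dbarL (U' z)‖ ≤ 1 * b + X * a :=
    norm_dbarL_indicator_le (by positivity) fun z hz => by
      refine (norm_dbarL_smul_add_smulRight_le _ _ _ _).trans ?_
      gcongr
      exacts [abs_bump_le_one χ z, hb z hz, hX z, ha z hz]
  have hU'M : ∀ z, ‖U' z‖ ≤ 1 * M + X * a := fun z => by
    by_cases hz : z ∈ ball 0 ρ
    · rw [hU', indicator_of_mem hz]
      refine (norm_add_le _ _).trans ?_
      rw [norm_smul, Real.norm_eq_abs, ContinuousLinearMap.norm_smulRight_apply]
      gcongr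
      exacts [abs_bump_le_one χ z, hM z hz, hX z, ha z hz]
    · rw [hU', indicator_of_notMem hz, norm_zero]
      positivity
  have hholder := hT _ _ (bddSupp_dbarL hU hUbar hUsupp)
  rw [funext (cauchyT_dbarL_eq hU hU'M hUsupp)] at hholder
  intro z hz w hw
  have hzw : ‖χ z • p z - χ w • p w‖ ≤ _ := hholder (mem_univ z) (mem_univ w)
  rw [χ.one_of_mem_closedBall hz, χ.one_of_mem_closedBall hw, one_smul, one_smul] at hzw
  have hconst : 1 * b + X * a ≤ (1 + X) * (a + b) := by nlinarith
  rw [mul_assoc CT (1 + X)]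
  exact hzw.trans (by gcongr)

end InteriorEstimate

section ComplexLift

variable {V W : Type*} [NormedAddCommGroup V] [NormedSpace ℝ V]
  [NormedAddCommGroup W] [NormedSpace ℂ W]

/-- `ι` embeds the real space `V` in the complex space `W` as a real form, and `re` is the
corresponding real-part projection. -/
structure IsRealForm (ι : V →L[ℝ] W) (re : W →L[ℝ] V) : Prop where
  re_apply : ∀ v, re (ι v) = v
  re_I_smul : ∀ v, re (Complex.I • ι v) = 0

lemma exists_isRealForm (V : Type*) [NormedAddCommGroup V] [NormedSpace ℝ V]
    [FiniteDimensional ℝ V] :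
    ∃ (N : ℕ) (ι : V →L[ℝ] (Fin N → ℂ)) (re : (Fin N → ℂ) →L[ℝ] V), IsRealForm ι re := by
  let φ := (Module.finBasis ℝ V).equivFunL
  let ι := (ContinuousLinearMap.piMap fun _ => Complex.ofRealCLM).comp
    (φ : V →L[ℝ] (Fin (Module.finrank ℝ V) → ℝ))
  let re := (φ.symm : (Fin (Module.finrank ℝ V) → ℝ) →L[ℝ] V).comp
    (ContinuousLinearMap.piMap fun _ => Complex.reCLM)
  refine ⟨_, ι, re, fun v => ?_, fun v => ?_⟩
  · exact φ.symm_apply_apply v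
  · refine (congrArg φ.symm ?_).trans φ.symm.map_zero
    ext i
    simp [ι]

/-- The map `v ↦ ι v - i ι (A v)`. If `A² = -id` it intertwines `A` with multiplication by `i`. -/
def complexLift (ι : V →L[ℝ] W) (A : V →L[ℝ] V) : V →L[ℝ] W := ι - (Complex.I • ι).comp A

variable {ι : V →L[ℝ] W} {A : V →L[ℝ] V}

lemma IsRealForm.re_complexLift {re : W →L[ℝ] V} (h : IsRealForm ι re) (A : V →L[ℝ] V) (v : V) :
    re (complexLift ι A v) = v := by
  simp only [complexLift, _root_.sub_apply, ContinuousLinearMap.comp_apply, _root_.smul_apply,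
    map_sub, h.re_apply, h.re_I_smul, sub_zero]

lemma norm_I_smul_clm (ι : V →L[ℝ] W) : ‖Complex.I • ι‖ = ‖ι‖ := by
  rw [norm_smul, Complex.norm_I, one_mul]

lemma norm_complexLift_le {L : ℝ} (hA : ‖A‖ ≤ L) : ‖complexLift ι A‖ ≤ ‖ι‖ * (1 + L) :=
  calc ‖complexLift ι A‖ ≤ ‖ι‖ + ‖Complex.I • ι‖ * ‖A‖ :=
        norm_sub_le_of_le le_rfl (ContinuousLinearMap.opNorm_comp_le _ _)
    _ ≤ ‖ι‖ + ‖ι‖ * L := by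
        rw [norm_I_smul_clm]
        gcongr
    _ = ‖ι‖ * (1 + L) := by ring

lemma complexLift_apply_apply (hA : ∀ v, A (A v) = -v) (v : V) :
    complexLift ι A (A v) = Complex.I • complexLift ι A v := by
  simp only [complexLift, _root_.sub_apply, ContinuousLinearMap.comp_apply, _root_.smul_apply, hA,
    map_neg, smul_sub, smul_smul, Complex.I_mul_I]
  module

lemma dbarL_complexLift_comp (hA : ∀ v, A (A v) = -v) (d : ℂ →L[ℝ] V) :
    dbarL ((complexLift ι A).comp d) =
      (Complex.I / 2 : ℂ) • complexLift ι A (d Complex.I - A (d 1)) := by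
  rw [map_sub, complexLift_apply_apply hA, dbarL, ContinuousLinearMap.comp_apply,
    ContinuousLinearMap.comp_apply, smul_sub, smul_smul]
  match_scalars
  · linear_combination (1 / 2 : ℂ) * Complex.I_mul_I
  · ring

lemma norm_dbarL_complexLift_comp_le {L b : ℝ} (hA : ∀ v, A (A v) = -v) (hAL : ‖A‖ ≤ L)
    {d : ℂ →L[ℝ] V} (hd : ‖d Complex.I - A (d 1)‖ ≤ b) :
    ‖dbarL ((complexLift ι A).comp d)‖ ≤ ‖ι‖ * (1 + L) * b := by
  have hlift := ContinuousLinearMap.le_of_opNorm_le_of_le _ (norm_complexLift_le (ι := ι) hAL) hd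
  rw [dbarL_complexLift_comp hA, norm_smul, norm_div, Complex.norm_I, Complex.norm_ofNat]
  linarith [norm_nonneg (complexLift ι A (d Complex.I - A (d 1)))]

lemma hasFDerivAt_complexLift_apply {a : ℂ → V →L[ℝ] V} {a' : ℂ →L[ℝ] V →L[ℝ] V} {d : ℂ → V}
    {d' : ℂ →L[ℝ] V} {z : ℂ} (ha : HasFDerivAt a a' z) (hd : HasFDerivAt d d' z) :
    HasFDerivAt (fun z => complexLift ι (a z) (d z))
      ((complexLift ι (a z)).comp d' + (-(Complex.I • ι)).comp (a'.flip (d z))) z := by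
  refine ((ι.hasFDerivAt.comp z hd).sub
    ((Complex.I • ι).hasFDerivAt.comp z (ha.clm_apply hd))).congr_fderiv ?_
  rw [complexLift, ContinuousLinearMap.comp_add, ContinuousLinearMap.sub_comp,
    ContinuousLinearMap.neg_comp, ContinuousLinearMap.comp_assoc, sub_add_eq_sub_sub,
    ← sub_eq_add_neg]

end ComplexLift

section JHolOn

variable {V G : Type*} [NormedAddCommGroup V] [NormedSpace ℝ V] [NormedAddCommGroup G]
  [NormedSpace ℝ G]

/-- `φ` is bounded by `L` and differentiable with derivative `φ'` bounded by `L`. -/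
structure BddC1 (L : ℝ) (φ : V → G) (φ' : V → V →L[ℝ] G) : Prop where
  norm_le : ∀ x, ‖φ x‖ ≤ L
  hasFDerivAt : ∀ x, HasFDerivAt φ (φ' x) x
  norm_deriv_le : ∀ x, ‖φ' x‖ ≤ L

lemma BddC1.nonneg {L : ℝ} {φ : V → G} {φ' : V → V →L[ℝ] G} (h : BddC1 L φ φ') : 0 ≤ L :=
  (norm_nonneg _).trans (h.norm_le 0)

lemma BddC1.norm_sub_le {L : ℝ} {φ : V → G} {φ' : V → V →L[ℝ] G} (h : BddC1 L φ φ') (x y : V) :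
    ‖φ x - φ y‖ ≤ L * ‖x - y‖ :=
  convex_univ.norm_image_sub_le_of_norm_hasFDerivWithin_le
    (fun z _ => (h.hasFDerivAt z).hasFDerivWithinAt) (fun z _ => h.norm_deriv_le z)
    (mem_univ y) (mem_univ x)

/-- `g` is a pseudo-holomorphic map on `s` with derivative `g'`, for a field of endomorphisms `J`
that is an almost complex structure along the image. -/
structure JHolOn (J : V → V →L[ℝ] V) (s : Set ℂ) (g : ℂ → V) (g' : ℂ → ℂ →L[ℝ] V) : Prop where
  hasFDerivAt : ∀ z ∈ s, HasFDerivAt g (g' z) z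
  eq : ∀ z ∈ s, g' z Complex.I = J (g z) (g' z 1)
  sq : ∀ z ∈ s, ∀ v, J (g z) (J (g z) v) = -v

variable {J : V → V →L[ℝ] V} {s t : Set ℂ} {g : ℂ → V} {g' : ℂ → ℂ →L[ℝ] V} {Λ : ℝ} {z w : ℂ}

lemma JHolOn.norm_sub_le (h : JHolOn J s g g') (hs : Convex ℝ s) (hΛ : ∀ z ∈ s, ‖g' z‖ ≤ Λ)
    (hz : z ∈ s) (hw : w ∈ s) : ‖g z - g w‖ ≤ Λ * ‖z - w‖ :=
  hs.norm_image_sub_le_of_norm_hasFDerivWithin_le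
    (fun x hx => (h.hasFDerivAt x hx).hasFDerivWithinAt) hΛ hw hz

lemma JHolOn.comp_affine (h : JHolOn J s g g') (c : ℂ) (r : ℝ) (ht : ∀ z ∈ t, c + r * z ∈ s) :
    JHolOn J t (fun z => g (c + r * z)) (fun z => r • g' (c + r * z)) where
  hasFDerivAt z hz := by
    have haffine : HasFDerivAt (fun z : ℂ => c + r * z) (r • ContinuousLinearMap.id ℝ ℂ) z := by
      simpa using ((hasFDerivAt_id (𝕜 := ℝ) z).const_smul r).const_add c
    have hcomp := (h.hasFDerivAt _ (ht z hz)).comp z haffine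
    rwa [ContinuousLinearMap.comp_smul, ContinuousLinearMap.comp_id] at hcomp
  eq z hz := by
    simp only [_root_.smul_apply, h.eq _ (ht z hz), map_smul]
  sq z hz := h.sq _ (ht z hz)

end JHolOn

section ShiftQuotient

/-- The difference quotient of `u` with increment `h`, normalised by `‖h‖`. -/
def shiftQuotient {G : Type*} [AddCommGroup G] [Module ℝ G] (h : ℂ) (u : ℂ → G) (z : ℂ) : G :=
  ‖h‖⁻¹ • (u (z + h) - u z)

variable {G : Type*} [NormedAddCommGroup G] [NormedSpace ℝ G] {h z : ℂ}

lemma norm_shiftQuotient (u : ℂ → G) : ‖shiftQuotient h u z‖ = ‖h‖⁻¹ * ‖u (z + h) - u z‖ := by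
  rw [shiftQuotient, norm_smul, norm_inv, norm_norm]

lemma norm_shiftQuotient_le {u : ℂ → G} {c : ℝ} (hc : 0 ≤ c)
    (hu : ‖u (z + h) - u z‖ ≤ c * ‖h‖) : ‖shiftQuotient h u z‖ ≤ c := by
  rw [norm_shiftQuotient]
  exact inv_mul_le_of_le_mul₀ (norm_nonneg h) hc (by rwa [mul_comm])

lemma hasFDerivAt_shiftQuotient {u : ℂ → G} {u' : ℂ → ℂ →L[ℝ] G} (hz : HasFDerivAt u (u' z) z)
    (hzh : HasFDerivAt u (u' (z + h)) (z + h)) :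
    HasFDerivAt (shiftQuotient h u) (shiftQuotient h u' z) z :=
  ((hzh.comp z ((hasFDerivAt_id (𝕜 := ℝ) z).add_const h)).sub hz).const_smul _

lemma tendsto_shiftQuotient {u : ℂ → G} {u' : ℂ →L[ℝ] G} (hu : HasFDerivAt u u' z) {e : ℂ}
    (he : ‖e‖ = 1) :
    Tendsto (fun t : ℝ => shiftQuotient (t * e) u z) (𝓝[>] 0) (𝓝 (u' e)) := by
  refine (hu.hasLineDerivAt e).tendsto_slope_zero_right.congr' ?_
  filter_upwards [self_mem_nhdsWithin] with t ht
  rw [shiftQuotient, norm_mul, he, mul_one, Complex.norm_real, Real.norm_of_nonneg ht.le,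
    Complex.real_smul]

variable {V W : Type*} [NormedAddCommGroup V] [NormedSpace ℝ V] [NormedAddCommGroup W]
  [NormedSpace ℂ W]
variable {J : V → V →L[ℝ] V} {DJ : V → V →L[ℝ] V →L[ℝ] V} {L Λ : ℝ} {g : ℂ → V}
  {g' : ℂ → ℂ →L[ℝ] V} {s : Set ℂ}

lemma JHolOn.norm_shiftQuotient_le (hg : JHolOn J s g g') (hs : Convex ℝ s)
    (hΛ : ∀ z ∈ s, ‖g' z‖ ≤ Λ) (hz : z ∈ s) (hzh : z + h ∈ s) : ‖shiftQuotient h g z‖ ≤ Λ := by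
  refine _root_.norm_shiftQuotient_le ((norm_nonneg _).trans (hΛ z hz)) ?_
  simpa only [add_sub_cancel_left] using hg.norm_sub_le hs hΛ hzh hz

/-- The difference quotient of a pseudo-holomorphic map solves the Cauchy–Riemann equation up to
`‖h‖⁻¹ • (J (g (z + h)) - J (g z)) (g' (z + h) 1)`. -/
lemma JHolOn.norm_shiftQuotient_residual_le (hJ : BddC1 L J DJ) (hg : JHolOn J s g g')
    (hs : Convex ℝ s) (hΛ : ∀ z ∈ s, ‖g' z‖ ≤ Λ) (hΛ1 : Λ ≤ 1) (hz : z ∈ s) (hzh : z + h ∈ s) :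
    ‖shiftQuotient h g' z Complex.I - J (g z) (shiftQuotient h g' z 1)‖ ≤ L * Λ := by
  have hL := hJ.nonneg
  have hΛ0 : 0 ≤ Λ := (norm_nonneg _).trans (hΛ z hz)
  have hres : shiftQuotient h g' z Complex.I - J (g z) (shiftQuotient h g' z 1) =
      shiftQuotient h (fun z => J (g z)) z (g' (z + h) 1) := by
    simp only [shiftQuotient, _root_.smul_apply, _root_.sub_apply, hg.eq _ hz, hg.eq _ hzh,
      map_smul, map_sub]
    module
  have hJg : ‖shiftQuotient h (fun z => J (g z)) z‖ ≤ L * Λ := by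
    refine _root_.norm_shiftQuotient_le (by positivity) ((hJ.norm_sub_le _ _).trans ?_)
    rw [mul_assoc]
    gcongr
    simpa only [add_sub_cancel_left] using hg.norm_sub_le hs hΛ hzh hz
  rw [hres, ← mul_one (L * Λ)]
  refine ContinuousLinearMap.le_of_opNorm_le_of_le _ hJg ?_
  simpa using ContinuousLinearMap.le_of_opNorm_le_of_le _ ((hΛ _ hzh).trans hΛ1) norm_one.le

lemma JHolOn.exists_hasFDerivAt_complexLift_shiftQuotient (hJ : BddC1 L J DJ)
    (hg : JHolOn J s g g') (hs : Convex ℝ s) (hΛ : ∀ z ∈ s, ‖g' z‖ ≤ Λ) (hΛ1 : Λ ≤ 1)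
    (hz : z ∈ s) (hzh : z + h ∈ s) (ι : V →L[ℝ] W) :
    ∃ p', HasFDerivAt (fun z => complexLift ι (J (g z)) (shiftQuotient h g z)) p' z ∧
      ‖dbarL p'‖ ≤ ‖ι‖ * (1 + L) * (L * Λ) + ‖ι‖ * (L * Λ) ∧
      ‖p'‖ ≤ ‖ι‖ * (1 + L) * (‖h‖⁻¹ * (Λ + Λ)) + ‖ι‖ * (L * Λ) := by
  have hL := hJ.nonneg
  have : 0 ≤ Λ := (norm_nonneg _).trans (hΛ z hz)
  have hJg : HasFDerivAt (fun z => J (g z)) ((DJ (g z)).comp (g' z)) z :=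
    (hJ.hasFDerivAt (g z)).comp z (hg.hasFDerivAt z hz)
  have hquot := hasFDerivAt_shiftQuotient (hg.hasFDerivAt z hz) (hg.hasFDerivAt _ hzh)
  have hlower : ‖(-(Complex.I • ι)).comp (((DJ (g z)).comp (g' z)).flip (shiftQuotient h g z))‖ ≤
      ‖ι‖ * (L * Λ) := by
    refine (ContinuousLinearMap.opNorm_comp_le _ _).trans ?_
    rw [norm_neg, norm_I_smul_clm]
    gcongr
    refine (ContinuousLinearMap.le_of_opNorm_le_of_le (f := _) (a := L * Λ) (b := 1) ?_ ?_).trans_eq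
      (mul_one _)
    · rw [ContinuousLinearMap.opNorm_flip]
      exact (ContinuousLinearMap.opNorm_comp_le _ _).trans
        (mul_le_mul (hJ.norm_deriv_le _) (hΛ z hz) (norm_nonneg _) hL)
    · exact (hg.norm_shiftQuotient_le hs hΛ hz hzh).trans hΛ1
  refine ⟨_, hasFDerivAt_complexLift_apply hJg hquot, ?_, ?_⟩
  · rw [dbarL_add]
    exact norm_add_le_of_le (norm_dbarL_complexLift_comp_le (hg.sq z hz) (hJ.norm_le _)
      (hg.norm_shiftQuotient_residual_le hJ hs hΛ hΛ1 hz hzh)) ((norm_dbarL_le _).trans hlower)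
  · refine norm_add_le_of_le ((ContinuousLinearMap.opNorm_comp_le _ _).trans ?_) hlower
    rw [norm_shiftQuotient]
    gcongr
    exacts [norm_complexLift_le (hJ.norm_le _), norm_sub_le_of_le (hΛ _ hzh) (hΛ z hz)]

lemma exists_sqrtHolderOn_shiftQuotient [FiniteDimensional ℝ V] (hJ : BddC1 L J DJ) :
    ∃ C, 0 ≤ C ∧ ∀ (g : ℂ → V) (g' : ℂ → ℂ →L[ℝ] V) (Λ : ℝ) (h : ℂ), Λ ≤ 1 →
      JHolOn J (ball 0 1) g g' → (∀ z ∈ ball (0 : ℂ) 1, ‖g' z‖ ≤ Λ) → ‖h‖ < 1 / 5 →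
      SqrtHolderOn (C * Λ) (shiftQuotient h g) (closedBall 0 (1 / 2)) := by
  obtain ⟨N, ι, re, hι⟩ := exists_isRealForm V
  have hL := hJ.nonneg
  obtain ⟨C, hC, hint⟩ := exists_sqrtHolderOn_of_norm_dbarL_le (W := Fin N → ℂ)
    (show (0 : ℝ) < 1 / 2 by norm_num) (show (1 / 2 : ℝ) < 4 / 5 by norm_num)
  refine ⟨‖re‖ * (C * (‖ι‖ * (1 + L) + (‖ι‖ * (1 + L) * L + ‖ι‖ * L))), by positivity,
    fun g g' Λ h hΛ1 hg hΛ hh => ?_⟩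
  have hs := convex_ball (0 : ℂ) 1
  have hin : ∀ z ∈ ball (0 : ℂ) (4 / 5), z ∈ ball (0 : ℂ) 1 ∧ z + h ∈ ball (0 : ℂ) 1 := by
    intro z hz
    rw [mem_ball_zero_iff] at hz
    exact ⟨mem_ball_zero_iff.2 (by linarith),
      mem_ball_zero_iff.2 (by linarith [norm_add_le z h])⟩
  choose! p' hp' hdbar hM using fun z hz =>
    hg.exists_hasFDerivAt_complexLift_shiftQuotient hJ hs hΛ hΛ1 (hin z hz).1 (hin z hz).2 ι
  have hlift := hint _ p' (‖ι‖ * (1 + L) * Λ) _ _ hp' (fun z hz =>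
    ContinuousLinearMap.le_of_opNorm_le_of_le _ (norm_complexLift_le (hJ.norm_le _))
      (hg.norm_shiftQuotient_le hs hΛ (hin z hz).1 (hin z hz).2)) hdbar hM
  intro z hz w hw
  rw [← hι.re_complexLift (J (g z)) (shiftQuotient h g z),
    ← hι.re_complexLift (J (g w)) (shiftQuotient h g w), ← map_sub]
  refine (ContinuousLinearMap.le_opNorm_of_le _ (hlift hz hw)).trans_eq ?_
  ring

theorem exists_sqrtHolderOn_deriv_of_norm_deriv_le [FiniteDimensional ℝ V] (hJ : BddC1 L J DJ) :
    ∃ C, 0 ≤ C ∧ ∀ (g : ℂ → V) (g' : ℂ → ℂ →L[ℝ] V) (Λ : ℝ), Λ ≤ 1 →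
      JHolOn J (ball 0 1) g g' → (∀ z ∈ ball (0 : ℂ) 1, ‖g' z‖ ≤ Λ) →
      SqrtHolderOn (C * Λ) g' (closedBall 0 (1 / 2)) := by
  obtain ⟨C, hC, hquot⟩ := exists_sqrtHolderOn_shiftQuotient hJ
  refine ⟨C, hC, fun g g' Λ hΛ1 hg hΛ z hz w hw => ?_⟩
  have : 0 ≤ Λ := (norm_nonneg _).trans (hΛ 0 (mem_ball_self one_pos))
  refine ContinuousLinearMap.opNorm_le_of_unit_norm (by positivity) fun e he => ?_
  have hlim : ∀ z ∈ closedBall (0 : ℂ) (1 / 2),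
      Tendsto (fun t : ℝ => shiftQuotient (t * e) g z) (𝓝[>] 0) (𝓝 (g' z e)) := fun z hz =>
    tendsto_shiftQuotient (hg.hasFDerivAt z (closedBall_subset_ball (by norm_num) hz)) he
  refine le_of_tendsto ((hlim z hz).sub (hlim w hw)).norm ?_
  filter_upwards [Ioo_mem_nhdsGT (show (0 : ℝ) < 1 / 5 by norm_num)] with t ht
  refine hquot g g' Λ (t * e) hΛ1 hg hΛ ?_ hz hw
  rw [norm_mul, he, mul_one, Complex.norm_real, Real.norm_of_nonneg ht.1.le]
  exact ht.2

end ShiftQuotient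

section GradientBound

/-- Point picking: choose `z₀` almost maximising `(1 - ‖z‖) * ‖g' z‖`. On the disc of radius
`(1 - ‖z₀‖) / 2` about `z₀` the function `g'` is then controlled by its value at `z₀`. -/
lemma exists_rescaling {G : Type*} [NormedAddCommGroup G] {g' : ℂ → G} {M₀ : ℝ}
    (hg' : ∀ z ∈ ball (0 : ℂ) 1, ‖g' z‖ ≤ M₀) (h0 : g' 0 ≠ 0) :
    ∃ (z₀ : ℂ) (r M : ℝ), 0 < r ∧ ‖g' 0‖ ≤ M ∧ 9 / 20 * min 1 M ≤ r * ‖g' z₀‖ ∧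
      ∀ z ∈ ball (0 : ℂ) 1, z₀ + r * z ∈ ball (0 : ℂ) 1 ∧ r * ‖g' (z₀ + r * z)‖ ≤ min 1 M := by
  set S : Set ℝ := (fun z : ℂ => (1 - ‖z‖) * ‖g' z‖) '' ball 0 1
  have hbdd : BddAbove S := by
    refine ⟨M₀, forall_mem_image.2 fun z hz => ?_⟩
    have := mem_ball_zero_iff.1 hz
    nlinarith [hg' z hz, norm_nonneg z, norm_nonneg (g' z)]
  have h0S : ‖g' 0‖ ∈ S := ⟨0, mem_ball_self one_pos, by simp⟩
  set M := sSup S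
  have hM0 : 0 < M := (norm_pos_iff.2 h0).trans_le (le_csSup hbdd h0S)
  obtain ⟨_, ⟨z₀, hz₀, rfl⟩, hlt⟩ :=
    exists_lt_of_lt_csSup ⟨_, h0S⟩ (show 9 / 10 * M < sSup S by linarith)
  set d := 1 - ‖z₀‖
  have hd : 0 < d := sub_pos.2 (mem_ball_zero_iff.1 hz₀)
  set m := min 1 M
  have hm : 0 < m := lt_min one_pos hM0
  set r := d / 2 * (m / M) with hrdef
  have hr : 0 < r := by positivity
  have hrd : r ≤ d / 2 :=
    mul_le_of_le_one_right (by positivity) ((div_le_one hM0).2 (min_le_right _ _))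
  refine ⟨z₀, r, M, hr, le_csSup hbdd h0S, ?_, fun z hz => ?_⟩
  · calc 9 / 20 * m = 1 / 2 * (m / M) * (9 / 10 * M) := by field_simp; ring
      _ ≤ 1 / 2 * (m / M) * (d * ‖g' z₀‖) := by gcongr
      _ = r * ‖g' z₀‖ := by ring
  have hnorm : ‖z₀ + r * z‖ ≤ 1 - d / 2 := by
    have hrz : ‖(r : ℂ) * z‖ ≤ d / 2 * 1 := by
      rw [norm_mul, Complex.norm_real, Real.norm_of_nonneg hr.le]
      exact mul_le_mul hrd (mem_ball_zero_iff.1 hz).le (norm_nonneg _) (by positivity)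
    linarith [norm_add_le z₀ (r * z)]
  have hin : z₀ + r * z ∈ ball (0 : ℂ) 1 := mem_ball_zero_iff.2 (by linarith)
  have hmax : (1 - ‖z₀ + r * z‖) * ‖g' (z₀ + r * z)‖ ≤ M := le_csSup hbdd ⟨_, hin, rfl⟩
  refine ⟨hin, ?_⟩
  calc r * ‖g' (z₀ + r * z)‖ = m / M * (d / 2 * ‖g' (z₀ + r * z)‖) := by rw [hrdef]; ring
    _ ≤ m / M * ((1 - ‖z₀ + r * z‖) * ‖g' (z₀ + r * z)‖) := by gcongr; linarith
    _ ≤ m / M * M := by gcongr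
    _ = m := by field_simp

variable {V : Type*} [NormedAddCommGroup V] [NormedSpace ℝ V]

lemma norm_deriv_zero_le_of_sqrtHolderOn {u : ℂ → V} {u' : ℂ → ℂ →L[ℝ] V} {K σ ε : ℝ} {c : V}
    (hσ : 0 < σ) (hK : 0 ≤ K) (hu : ∀ z ∈ closedBall 0 (σ ^ 2), HasFDerivAt u (u' z) z)
    (hu' : SqrtHolderOn K u' (closedBall 0 (σ ^ 2)))
    (hε : ∀ z ∈ closedBall 0 (σ ^ 2), ‖u z - c‖ ≤ ε) : ‖u' 0‖ ≤ 2 * ε / σ ^ 2 + K * σ := by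
  have h0 : (0 : ℂ) ∈ closedBall (0 : ℂ) (σ ^ 2) := mem_closedBall_self (by positivity)
  have : 0 ≤ ε := (norm_nonneg _).trans (hε 0 h0)
  refine ContinuousLinearMap.opNorm_le_of_unit_norm (by positivity) fun e he => ?_
  have hnorm : ‖((σ ^ 2 : ℝ) : ℂ) * e‖ = σ ^ 2 := by
    rw [norm_mul, he, mul_one, Complex.norm_real, Real.norm_of_nonneg (by positivity)]
  have hmem : ((σ ^ 2 : ℝ) : ℂ) * e ∈ closedBall (0 : ℂ) (σ ^ 2) :=
    mem_closedBall_zero_iff.2 hnorm.le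
  have htaylor := Convex.norm_image_sub_le_of_norm_hasFDerivWithin_le' (C := K * σ) (φ := u' 0)
    (fun x hx => (hu x hx).hasFDerivWithinAt) (fun x hx => (hu' hx h0).trans ?_)
    (convex_closedBall (0 : ℂ) (σ ^ 2)) h0 hmem
  · rw [sub_zero, hnorm] at htaylor
    have hosc : ‖u ((σ ^ 2 : ℝ) * e) - u 0‖ ≤ ε + ε := by
      rw [← sub_sub_sub_cancel_right _ _ c]
      exact norm_sub_le_of_le (hε _ hmem) (hε 0 h0)
    have hscale : ‖u' 0 ((σ ^ 2 : ℝ) * e)‖ = σ ^ 2 * ‖u' 0 e‖ := by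
      rw [← Complex.real_smul, map_smul, norm_smul, Real.norm_of_nonneg (by positivity)]
    have hsplit := norm_sub_le (u ((σ ^ 2 : ℝ) * e) - u 0)
      (u ((σ ^ 2 : ℝ) * e) - u 0 - u' 0 ((σ ^ 2 : ℝ) * e))
    rw [sub_sub_cancel, hscale] at hsplit
    rw [div_add' _ _ _ (by positivity), le_div_iff₀ (by positivity)]
    linarith
  · gcongr
    rw [sub_zero]
    exact Real.sqrt_le_iff.2 ⟨hσ.le, mem_closedBall_zero_iff.1 hx⟩

variable [FiniteDimensional ℝ V] {J : V → V →L[ℝ] V} {DJ : V → V →L[ℝ] V →L[ℝ] V} {L : ℝ}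

/-- The constant `C` does not depend on the a priori bound `M₀`. -/
theorem exists_norm_deriv_zero_le_of_norm_sub_le (hJ : BddC1 L J DJ) :
    ∃ C ε₀, 0 ≤ C ∧ 0 < ε₀ ∧ ∀ (g : ℂ → V) (g' : ℂ → ℂ →L[ℝ] V) (M₀ : ℝ) (c : V) (ε : ℝ),
      JHolOn J (ball 0 1) g g' → (∀ z ∈ ball (0 : ℂ) 1, ‖g' z‖ ≤ M₀) →
      (∀ z ∈ ball (0 : ℂ) 1, ‖g z - c‖ ≤ ε) → ε ≤ ε₀ → ‖g' 0‖ ≤ C * ε := by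
  obtain ⟨C₁, hC₁, hreg⟩ := exists_sqrtHolderOn_deriv_of_norm_deriv_le hJ
  set σ : ℝ := (5 * (C₁ + 1))⁻¹ with hσdef
  have hσ : 0 < σ := by positivity
  have hC₁σ : C₁ * σ ≤ 1 / 5 := by
    rw [hσdef, ← div_eq_mul_inv, div_le_iff₀ (by positivity)]
    linarith
  have hσ1 : σ ≤ 1 / 5 := by
    rw [hσdef, inv_eq_one_div, div_le_div_iff₀ (by positivity) (by norm_num)]
    linarith
  refine ⟨8 / σ ^ 2, σ ^ 2 / 16, by positivity, by positivity, fun g g' M₀ c ε hg hM₀ hc hε => ?_⟩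
  have : 0 ≤ ε := (norm_nonneg _).trans (hc 0 (mem_ball_self one_pos))
  rcases eq_or_ne (g' 0) 0 with h0 | h0
  · rw [h0, norm_zero]
    positivity
  obtain ⟨z₀, r, M, hr, hM, hlow, hup⟩ := exists_rescaling hM₀ h0
  have hG := hg.comp_affine z₀ r (t := ball 0 1) fun z hz => (hup z hz).1
  have hm0 : 0 ≤ min 1 M := le_min zero_le_one ((norm_nonneg _).trans hM)
  have hhol := hreg _ _ (min 1 M) (min_le_left _ _) hG fun z hz => by
    rw [norm_smul, Real.norm_of_nonneg hr.le]
    exact (hup z hz).2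
  have hhalf : closedBall (0 : ℂ) (σ ^ 2) ⊆ closedBall 0 (1 / 2) :=
    closedBall_subset_closedBall (by nlinarith)
  have hball : closedBall (0 : ℂ) (σ ^ 2) ⊆ ball 0 1 :=
    hhalf.trans (closedBall_subset_ball (by norm_num))
  have hinterp := norm_deriv_zero_le_of_sqrtHolderOn hσ (by positivity)
    (fun z hz => hG.hasFDerivAt z (hball hz)) (hhol.mono hhalf)
    (fun z hz => hc _ (hup z (hball hz)).1)
  rw [mul_zero, add_zero, norm_smul, Real.norm_of_nonneg hr.le] at hinterp
  have hmε : min 1 M ≤ 8 / σ ^ 2 * ε := by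
    have : 8 / σ ^ 2 * ε = 4 * (2 * ε / σ ^ 2) := by ring
    nlinarith
  have hm1 : min 1 M < 1 := by
    refine hmε.trans_lt ?_
    calc 8 / σ ^ 2 * ε ≤ 8 / σ ^ 2 * (σ ^ 2 / 16) := by gcongr
      _ < 1 := by field_simp; norm_num
  rw [min_eq_right ((min_lt_iff.1 hm1).resolve_left (lt_irrefl 1)).le] at hmε
  exact hM.trans hmε

end GradientBound

section LocallyBounded

/-- The open set of points near which `u` is bounded. -/
def locBddSet {X Y : Type*} [TopologicalSpace X] [Norm Y] (u : X → Y) : Set X :=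
  {z | ∃ M, ∀ᶠ w in 𝓝 z, ‖u w‖ ≤ M}

lemma isOpen_locBddSet {X Y : Type*} [TopologicalSpace X] [Norm Y] (u : X → Y) :
    IsOpen (locBddSet u) := by
  rw [isOpen_iff_mem_nhds]
  rintro z ⟨M, hM⟩
  filter_upwards [eventually_eventually_nhds.2 hM] with w hw using ⟨M, hw⟩

lemma exists_bound_of_subset_locBddSet {X Y : Type*} [TopologicalSpace X] [Norm Y] {K : Set X}
    (hK : IsCompact K) {u : X → Y} (hu : K ⊆ locBddSet u) : ∃ M, ∀ z ∈ K, ‖u z‖ ≤ M := by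
  refine hK.induction_on (p := fun s => ∃ M, ∀ z ∈ s, ‖u z‖ ≤ M) ⟨0, fun _ h => h.elim⟩
    (fun s t hst ⟨M, hM⟩ => ⟨M, fun z hz => hM z (hst hz)⟩) ?_ fun z hz => ?_
  · rintro s t ⟨M, hM⟩ ⟨M', hM'⟩
    refine ⟨max M M', ?_⟩
    rintro z (hz | hz)
    exacts [(hM z hz).trans (le_max_left _ _), (hM' z hz).trans (le_max_right _ _)]
  · obtain ⟨M, hM⟩ := hu hz
    exact ⟨_, mem_nhdsWithin_of_mem_nhds hM, M, fun w hw => hw⟩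

/-- Baire category: the sets where the pointwise Lipschitz constant is at most `k + 1` on scale
`(k + 1)⁻¹` are closed and cover `S`. -/
lemma exists_uniform_lipschitz_of_isBigO {X Y : Type*} [NormedAddCommGroup X]
    [LocallyCompactSpace X] [NormedAddCommGroup Y] {S : Set X} (hS : IsLocallyClosed S)
    (hne : S.Nonempty) {f : X → Y}
    (hf : ∀ z ∈ S, (fun w => f w - f z) =O[𝓝 z] fun w => w - z) :
    ∃ z₁ ∈ S, ∃ κ > 0, ∃ ρ > 0, ∀ x ∈ S, dist x z₁ < ρ → ∀ w, ‖w - x‖ < κ⁻¹ →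
      ‖f w - f x‖ ≤ κ * ‖w - x‖ := by
  have := hS.locallyCompactSpace
  have := hne.to_subtype
  have hfS : Continuous fun z : S => f z := by
    refine continuous_iff_continuousAt.2 fun z => ?_
    have hsmall := (hf z z.2).trans_tendsto (tendsto_sub_nhds_zero_iff.2 tendsto_id)
    exact ContinuousAt.comp (tendsto_sub_nhds_zero_iff.1 hsmall) continuousAt_subtype_val
  let Z : ℕ → Set S := fun k =>
    {z | ∀ w : X, ‖w - z‖ < ((k : ℝ) + 1)⁻¹ → ‖f w - f z‖ ≤ (k + 1) * ‖w - z‖}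
  have hclosed : ∀ k, IsClosed (Z k) := fun k => by
    have hZ : Z k = ⋂ w : X, ({z : S | ((k : ℝ) + 1)⁻¹ ≤ ‖w - z‖} ∪
        {z : S | ‖f w - f z‖ ≤ (k + 1) * ‖w - z‖}) := by
      ext z
      simp only [Z, mem_ofPred_eq, mem_iInter, mem_union]
      exact forall_congr' fun w => by rw [imp_iff_not_or, not_lt]
    rw [hZ]
    exact isClosed_iInter fun w => (isClosed_le continuous_const (by fun_prop)).union
      (isClosed_le (continuous_const.sub hfS).norm (by fun_prop))
  have hcover : ⋃ k, Z k = univ := eq_univ_iff_forall.2 fun z => by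
    obtain ⟨c, hc⟩ := (hf z z.2).bound
    obtain ⟨ρ, hρ, hb⟩ := Metric.eventually_nhds_iff.1 hc
    obtain ⟨k, hk⟩ := exists_nat_ge (max c ρ⁻¹)
    have hkρ : ((k : ℝ) + 1)⁻¹ < ρ := by
      rw [inv_lt_comm₀ (by positivity) hρ]
      linarith [(le_max_right _ _).trans hk]
    refine mem_iUnion.2 ⟨k, fun w hw => (hb (by rw [dist_eq_norm]; linarith)).trans ?_⟩
    gcongr
    linarith [(le_max_left _ _).trans hk]
  obtain ⟨k, z₁, hz₁⟩ := nonempty_interior_of_iUnion_of_closed hclosed hcover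
  obtain ⟨ρ, hρ, hb⟩ := Metric.mem_nhds_iff.1 (mem_interior_iff_mem_nhds.1 hz₁)
  exact ⟨z₁, z₁.2, k + 1, by positivity, ρ, hρ,
    fun x hx hxz => hb (show (⟨x, hx⟩ : S) ∈ ball z₁ ρ from hxz)⟩

end LocallyBounded

section DerivRegularity

variable {V : Type*} [NormedAddCommGroup V] [NormedSpace ℝ V]
  {J : V → V →L[ℝ] V} {DJ : V → V →L[ℝ] V →L[ℝ] V} {L : ℝ}

/-- Pseudo-holomorphic discs of oscillation at most `ε₀` whose derivative is locally bounded
satisfy a scale-invariant gradient bound with constant `C`. -/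
def GradientBound (J : V → V →L[ℝ] V) (C ε₀ : ℝ) : Prop :=
  ∀ (f : ℂ → V) (f' : ℂ → ℂ →L[ℝ] V) (w : ℂ) (δ : ℝ) (c : V) (ε : ℝ), 0 < δ →
    JHolOn J (closedBall w δ) f f' → closedBall w δ ⊆ locBddSet f' →
    (∀ z ∈ closedBall w δ, ‖f z - c‖ ≤ ε) → ε ≤ ε₀ → δ * ‖f' w‖ ≤ C * ε

lemma add_mul_mem_closedBall {w ζ : ℂ} {δ : ℝ} (hδ : 0 ≤ δ) (hζ : ζ ∈ ball (0 : ℂ) 1) :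
    w + δ * ζ ∈ closedBall w δ := by
  rw [mem_closedBall, dist_eq_norm, add_sub_cancel_left, norm_mul, Complex.norm_real,
    Real.norm_of_nonneg hδ]
  exact mul_le_of_le_one_right hδ (mem_ball_zero_iff.1 hζ).le

theorem exists_gradientBound [FiniteDimensional ℝ V] (hJ : BddC1 L J DJ) :
    ∃ C ε₀, 0 < ε₀ ∧ GradientBound J C ε₀ := by
  obtain ⟨C, ε₀, _, hε₀, hgrad⟩ := exists_norm_deriv_zero_le_of_norm_sub_le hJ
  refine ⟨C, ε₀, hε₀, fun f f' w δ c ε hδ hf hbdd hc hε => ?_⟩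
  obtain ⟨M, hM⟩ := exists_bound_of_subset_locBddSet (isCompact_closedBall w δ) hbdd
  have hin := fun ζ (hζ : ζ ∈ ball (0 : ℂ) 1) => add_mul_mem_closedBall (w := w) hδ.le hζ
  have h0 := hgrad _ _ (δ * M) c ε (hf.comp_affine w δ hin) (fun ζ hζ => by
    rw [norm_smul, Real.norm_of_nonneg hδ.le]
    gcongr
    exact hM _ (hin ζ hζ)) (fun ζ hζ => hc _ (hin ζ hζ)) hε
  rwa [norm_smul, Real.norm_of_nonneg hδ.le, mul_zero, add_zero] at h0

/-- Apply the gradient bound on the disc about `w` whose radius is half the distance to the bad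
set `U \ locBddSet f'`. -/
lemma norm_deriv_le_of_lipschitz_compl_locBddSet {C ε₀ κ ρ : ℝ} (hJ : GradientBound J C ε₀)
    {U : Set ℂ} {f : ℂ → V} {f' : ℂ → ℂ →L[ℝ] V} (hf : JHolOn J U f f') {z₁ w : ℂ}
    (hz₁ : z₁ ∈ U \ locBddSet f') (hU : ball z₁ (2 * ρ) ⊆ U) (hκ : 0 < κ) (hρκ : 3 * ρ ≤ κ⁻¹)
    (hε₀ : 5 / 2 * κ * ρ ≤ ε₀)
    (hlip : ∀ x ∈ U \ locBddSet f', dist x z₁ < 3 * ρ → ∀ w, ‖w - x‖ < κ⁻¹ →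
      ‖f w - f x‖ ≤ κ * ‖w - x‖)
    (hw : dist w z₁ < ρ) (hwG : w ∈ locBddSet f') : ‖f' w‖ ≤ 5 * C * κ := by
  set S := U \ locBddSet f'
  set d := infDist w S
  have hdρ : d < ρ := (infDist_le_dist_of_mem hz₁).trans_lt hw
  have hd0 : 0 < d := by
    obtain ⟨η, hη, hball⟩ := Metric.isOpen_iff.1 (isOpen_locBddSet f') w hwG
    refine hη.trans_le ((le_infDist ⟨z₁, hz₁⟩).2 fun y hy => ?_)
    by_contra! hlt
    exact hy.2 (hball (mem_ball'.2 hlt))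
  obtain ⟨e, heS, hed⟩ := (infDist_lt_iff ⟨z₁, hz₁⟩).1 (show infDist w S < 2 * d by linarith)
  rw [dist_comm] at hed
  have hsub : ∀ x ∈ closedBall w (d / 2), x ∈ U ∧ x ∈ locBddSet f' := fun x hx => by
    rw [mem_closedBall] at hx
    have hxU : x ∈ U := hU (mem_ball.2 (by linarith [dist_triangle x w z₁]))
    refine ⟨hxU, by_contra fun hxG => ?_⟩
    have := infDist_le_dist_of_mem (x := w) (show x ∈ S from ⟨hxU, hxG⟩)
    rw [dist_comm] at this
    linarith
  have hosc : ∀ x ∈ closedBall w (d / 2), ‖f x - f e‖ ≤ κ * (5 / 2 * d) := fun x hx => by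
    rw [mem_closedBall] at hx
    have hxe : ‖x - e‖ ≤ 5 / 2 * d := by
      rw [← dist_eq_norm]
      linarith [dist_triangle x w e, dist_comm w e]
    refine (hlip e heS (by linarith [dist_triangle e w z₁]) x (by linarith)).trans ?_
    gcongr
  have hgrad := hJ f f' w (d / 2) (f e) _ (by positivity)
    ⟨fun z hz => hf.hasFDerivAt z (hsub z hz).1, fun z hz => hf.eq z (hsub z hz).1,
      fun z hz => hf.sq z (hsub z hz).1⟩ (fun z hz => (hsub z hz).2) hosc (by nlinarith)
  refine le_of_mul_le_mul_left (a := d / 2) ?_ (by positivity)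
  linarith

/-- Since pseudo-holomorphic maps are only assumed differentiable, their derivative could a priori
be unbounded near a closed set of points; Baire's theorem rules this out. -/
theorem JHolOn.subset_locBddSet [FiniteDimensional ℝ V] (hJ : BddC1 L J DJ) {U : Set ℂ}
    (hU : IsOpen U) {f : ℂ → V} {f' : ℂ → ℂ →L[ℝ] V} (hf : JHolOn J U f f') :
    U ⊆ locBddSet f' := by
  obtain ⟨C, ε₀, hε₀, hgrad⟩ := exists_gradientBound hJ
  rw [← sdiff_eq_empty, ← not_nonempty_iff_eq_empty]
  intro hne
  obtain ⟨z₁, hz₁, κ, hκ, ρ₁, hρ₁, hlip⟩ := exists_uniform_lipschitz_of_isBigO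
    (hU.isLocallyClosed.inter (isOpen_locBddSet f').isClosed_compl.isLocallyClosed) hne
    fun z hz => (hf.hasFDerivAt z hz.1).isBigO_sub
  obtain ⟨ρ₂, hρ₂, hball⟩ := Metric.isOpen_iff.1 hU z₁ hz₁.1
  have hsmall : ∀ᶠ ρ in 𝓝[>] (0 : ℝ), 3 * ρ < ρ₁ ∧ 2 * ρ < ρ₂ ∧ 3 * ρ < κ⁻¹ ∧
      5 / 2 * κ * ρ < ε₀ := by
    refine nhdsWithin_le_nhds ?_
    have hlin : ∀ a b : ℝ, 0 < b → ∀ᶠ ρ in 𝓝 (0 : ℝ), a * ρ < b := fun a b hb =>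
      (continuous_const_mul a).continuousAt.eventually_lt_const (by simpa using hb)
    exact (hlin _ _ hρ₁).and ((hlin _ _ hρ₂).and ((hlin _ _ (inv_pos.2 hκ)).and (hlin _ _ hε₀)))
  obtain ⟨ρ, ⟨h₁, h₂, h₃, h₄⟩, hρ⟩ := (hsmall.and self_mem_nhdsWithin).exists
  replace hlip := fun x hx (hxz : dist x z₁ < 3 * ρ) => hlip x hx (hxz.trans h₁)
  replace hball := (ball_subset_ball h₂.le).trans hball
  refine hz₁.2 ⟨max κ (5 * C * κ), Metric.eventually_nhds_iff.2 ⟨ρ, hρ, fun w hw => ?_⟩⟩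
  have hwU : w ∈ U := hball (mem_ball.2 (by linarith))
  by_cases hwG : w ∈ locBddSet f'
  · exact (norm_deriv_le_of_lipschitz_compl_locBddSet hgrad hf hz₁ hball hκ h₃.le h₄.le hlip hw
      hwG).trans (le_max_right _ _)
  · refine ((hf.hasFDerivAt w hwU).le_of_lip' hκ.le ?_).trans (le_max_left _ _)
    filter_upwards [Metric.ball_mem_nhds w (inv_pos.2 hκ)] with x hx
    exact hlip w ⟨hwU, hwG⟩ (by linarith) x (by rwa [← dist_eq_norm])

lemma SqrtHolderOn.of_norm_sub_le_of_bound {X Y : Type*} [NormedAddCommGroup X]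
    [NormedAddCommGroup Y] {u : X → Y} {t : Set X} {C M η : ℝ} (hC : 0 ≤ C) (hη : 0 < η)
    (hM : ∀ z ∈ t, ‖u z‖ ≤ M)
    (hu : ∀ z ∈ t, ∀ w ∈ t, ‖z - w‖ ≤ η → ‖u z - u w‖ ≤ C * √‖z - w‖) :
    SqrtHolderOn (C + 2 * M / √η) u t := by
  intro z hz w hw
  have : 0 ≤ M := (norm_nonneg _).trans (hM z hz)
  rw [add_mul]
  rcases le_total ‖z - w‖ η with h | h
  · exact le_add_of_le_of_nonneg (hu z hz w hw h) (by positivity)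
  · refine le_add_of_nonneg_of_le (by positivity) ?_
    calc ‖u z - u w‖ ≤ M + M := norm_sub_le_of_le (hM z hz) (hM w hw)
      _ = 2 * M / √η * √η := by field_simp; ring
      _ ≤ 2 * M / √η * √‖z - w‖ := by gcongr

lemma exists_norm_deriv_sub_le [FiniteDimensional ℝ V] (hJ : BddC1 L J DJ) :
    ∃ C, 0 ≤ C ∧ ∀ (f : ℂ → V) (f' : ℂ → ℂ →L[ℝ] V) (z w : ℂ) (η M : ℝ), 0 < η → η * M ≤ 1 →
      JHolOn J (closedBall z η) f f' → (∀ x ∈ closedBall z η, ‖f' x‖ ≤ M) → ‖z - w‖ ≤ η / 2 →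
      ‖f' z - f' w‖ ≤ C * η⁻¹ * √η⁻¹ * √‖z - w‖ := by
  obtain ⟨C, hC, hreg⟩ := exists_sqrtHolderOn_deriv_of_norm_deriv_le hJ
  refine ⟨C, hC, fun f f' z w η M hη hηM hf hM hzw => ?_⟩
  have hin := fun ζ (hζ : ζ ∈ ball (0 : ℂ) 1) => add_mul_mem_closedBall (w := z) hη.le hζ
  have hhol := hreg _ _ 1 le_rfl (hf.comp_affine z η hin) fun ζ hζ => by
    rw [norm_smul, Real.norm_of_nonneg hη.le]
    exact (mul_le_mul_of_nonneg_left (hM _ (hin ζ hζ)) hη.le).trans hηM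
  have hnorm : ‖((η⁻¹ : ℝ) : ℂ) * (w - z)‖ = η⁻¹ * ‖z - w‖ := by
    rw [norm_mul, Complex.norm_real, Real.norm_of_nonneg (by positivity), norm_sub_rev]
  have hmem : ((η⁻¹ : ℝ) : ℂ) * (w - z) ∈ closedBall (0 : ℂ) (1 / 2) := by
    rw [mem_closedBall_zero_iff, hnorm, inv_mul_le_iff₀ hη]
    linarith
  have hback : z + η * ((η⁻¹ : ℝ) * (w - z)) = w := by
    rw [← mul_assoc, ← Complex.ofReal_mul, mul_inv_cancel₀ hη.ne', Complex.ofReal_one, one_mul,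
      add_sub_cancel]
  have hzw' : ‖η • f' (z + η * 0) - η • f' (z + η * ((η⁻¹ : ℝ) * (w - z)))‖ ≤ _ :=
    hhol (mem_closedBall_self (by norm_num)) hmem
  rw [hback, mul_zero, add_zero, ← smul_sub, norm_smul, Real.norm_of_nonneg hη.le, zero_sub,
    norm_neg, hnorm, Real.sqrt_mul (by positivity), mul_one] at hzw'
  calc ‖f' z - f' w‖ = η⁻¹ * (η * ‖f' z - f' w‖) := by field_simp
    _ ≤ η⁻¹ * (C * (√η⁻¹ * √‖z - w‖)) := by gcongr
    _ = C * η⁻¹ * √η⁻¹ * √‖z - w‖ := by ring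

theorem JHolOn.exists_sqrtHolderOn_deriv [FiniteDimensional ℝ V] (hJ : BddC1 L J DJ) {r R : ℝ}
    (hrR : r < R) {f : ℂ → V} {f' : ℂ → ℂ →L[ℝ] V} (hf : JHolOn J (ball 0 R) f f') :
    ∃ C, SqrtHolderOn C f' (closedBall 0 r) := by
  obtain ⟨C, hC, hreg⟩ := exists_norm_deriv_sub_le hJ
  obtain ⟨r', hr, hr'⟩ := exists_between hrR
  have hin : closedBall (0 : ℂ) r' ⊆ ball 0 R := closedBall_subset_ball hr'
  obtain ⟨M, hM⟩ := exists_bound_of_subset_locBddSet (isCompact_closedBall (0 : ℂ) r')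
    (hin.trans (hf.subset_locBddSet hJ isOpen_ball))
  set η := min (r' - r) (|M| + 1)⁻¹
  have hη : 0 < η := lt_min (sub_pos.2 hr) (by positivity)
  have hηM : η * |M| ≤ 1 := by
    have : η * (|M| + 1) ≤ 1 := by
      rw [← le_div_iff₀ (by positivity), one_div]
      exact min_le_right _ _
    linarith
  have hsub : ∀ z ∈ closedBall (0 : ℂ) r, closedBall z η ⊆ closedBall 0 r' := fun z hz =>
    closedBall_subset_closedBall' (by
      linarith [mem_closedBall.1 hz, min_le_left (r' - r) (|M| + 1)⁻¹])
  refine ⟨_, .of_norm_sub_le_of_bound (C := C * η⁻¹ * √η⁻¹) (η := η / 2) (M := M) (by positivity)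
    (by positivity) (fun z hz => hM z (closedBall_subset_closedBall hr.le hz))
    fun z hz w _ hzw => ?_⟩
  have hin' := (hsub z hz).trans hin
  exact hreg f f' z w η |M| hη hηM ⟨fun x hx => hf.hasFDerivAt x (hin' hx),
    fun x hx => hf.eq x (hin' hx), fun x hx => hf.sq x (hin' hx)⟩
    (fun x hx => (hM x (hsub z hz hx)).trans (le_abs_self M)) hzw

end DerivRegularity

section HolderSp

variable {G G₁ G₂ G₃ : Type*} [NormedAddCommGroup G] [NormedSpace ℝ G]
  [NormedAddCommGroup G₁] [NormedSpace ℝ G₁] [NormedAddCommGroup G₂] [NormedSpace ℝ G₂]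
  [NormedAddCommGroup G₃] [NormedSpace ℝ G₃]

variable (G) in
open Classical in
/-- The linear map sending `u : ℂ → G` to the family of its values and `1/2`-Hölder quotients on
the closed unit disc, extended by zero. The sup norm of this family is the `1/2`-Hölder norm. -/
def holderFamily : (ℂ → G) →ₗ[ℝ] (ℂ ⊕ ℂ × ℂ → G) where
  toFun u
    | .inl z => if z ∈ closedBall (0 : ℂ) 1 then u z else 0
    | .inr p => if p.1 ∈ closedBall (0 : ℂ) 1 ∧ p.2 ∈ closedBall (0 : ℂ) 1 then
        (√‖p.1 - p.2‖)⁻¹ • (u p.1 - u p.2) else 0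
  map_add' u v := by
    ext (z | p) <;> simp only [Pi.add_apply] <;> split_ifs <;> module
  map_smul' c u := by
    ext (z | p) <;> simp only [Pi.smul_apply, RingHom.id_apply] <;> split_ifs <;> module

lemma holderFamily_inl (u : ℂ → G) {z : ℂ} (hz : z ∈ closedBall (0 : ℂ) 1) :
    holderFamily G u (.inl z) = u z := if_pos hz

lemma holderFamily_inr (u : ℂ → G) {z w : ℂ} (hz : z ∈ closedBall (0 : ℂ) 1)
    (hw : w ∈ closedBall (0 : ℂ) 1) :
    holderFamily G u (.inr (z, w)) = (√‖z - w‖)⁻¹ • (u z - u w) := if_pos ⟨hz, hw⟩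

lemma holderFamily_congr {u v : ℂ → G} (h : EqOn u v (closedBall 0 1)) :
    holderFamily G u = holderFamily G v := by
  ext (z | p) <;> simp only [holderFamily, LinearMap.coe_mk, AddHom.coe_mk] <;> split_ifs with hp
  exacts [h hp, rfl, by rw [h hp.1, h hp.2], rfl]

lemma continuous_holderFamily_apply {Y : Type*} [TopologicalSpace Y] {u : Y → ℂ → G}
    (hu : ∀ z, Continuous fun y => u y z) (i : ℂ ⊕ ℂ × ℂ) :
    Continuous fun y => holderFamily G (u y) i := by
  rcases i with z | p <;> simp only [holderFamily, LinearMap.coe_mk, AddHom.coe_mk] <;> split_ifs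
  exacts [hu z, continuous_const, ((hu _).sub (hu _)).const_smul _, continuous_const]

lemma norm_holderFamily_le {u : ℂ → G} {A : ℝ} (hA : 0 ≤ A)
    (hb : ∀ z ∈ closedBall (0 : ℂ) 1, ‖u z‖ ≤ A) (hh : SqrtHolderOn A u (closedBall 0 1))
    (i : ℂ ⊕ ℂ × ℂ) : ‖holderFamily G u i‖ ≤ A := by
  rcases i with z | p <;> simp only [holderFamily, LinearMap.coe_mk, AddHom.coe_mk] <;>
    split_ifs with hp
  · exact hb z hp
  · simpa using hA
  · rw [norm_smul, norm_inv, Real.norm_of_nonneg (Real.sqrt_nonneg _)]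
    exact inv_mul_le_of_le_mul₀ (Real.sqrt_nonneg _) hA (mul_comm A _ ▸ hh hp.1 hp.2)
  · simpa using hA

variable (G) in
/-- The `1/2`-Hölder maps from the closed unit disc to `G`, identified with their families of values
and Hölder quotients inside the space of bounded families. -/
def holderSubmodule : Submodule ℝ (lp (fun _ : ℂ ⊕ ℂ × ℂ => G) ⊤) :=
  LinearMap.eqLocus (lpSubmodule ℝ (fun _ : ℂ ⊕ ℂ × ℂ => G) ⊤).subtype
    (holderFamily G ∘ₗ LinearMap.funLeft ℝ G Sum.inl ∘ₗ
      (lpSubmodule ℝ (fun _ : ℂ ⊕ ℂ × ℂ => G) ⊤).subtype)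

lemma isClosed_holderSubmodule :
    IsClosed (holderSubmodule G : Set (lp (fun _ : ℂ ⊕ ℂ × ℂ => G) ⊤)) := by
  have hev : ∀ i, Continuous fun f : lp (fun _ : ℂ ⊕ ℂ × ℂ => G) ⊤ => (f : ℂ ⊕ ℂ × ℂ → G) i :=
    fun i => (lp.evalCLM ℝ (fun _ : ℂ ⊕ ℂ × ℂ => G) ⊤ i).continuous
  have hset : (holderSubmodule G : Set (lp (fun _ : ℂ ⊕ ℂ × ℂ => G) ⊤)) =
      {f : lp (fun _ : ℂ ⊕ ℂ × ℂ => G) ⊤ |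
        (f : ℂ ⊕ ℂ × ℂ → G) = holderFamily G fun z => f (.inl z)} := rfl
  rw [hset]
  exact isClosed_eq (continuous_pi hev)
    (continuous_pi (continuous_holderFamily_apply fun z => hev (.inl z)))

variable (G) in
/-- The Banach space of `1/2`-Hölder maps from the closed unit disc to `G`, extended by zero. -/
def HolderSp : Type _ := holderSubmodule G

instance : NormedAddCommGroup (HolderSp G) :=
  inferInstanceAs (NormedAddCommGroup (holderSubmodule G))

instance : NormedSpace ℝ (HolderSp G) := inferInstanceAs (NormedSpace ℝ (holderSubmodule G))

instance [CompleteSpace G] : CompleteSpace (HolderSp G) :=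
  isClosed_holderSubmodule.completeSpace_coe

namespace HolderSp

/-- The value of an element of `HolderSp G` at a point. -/
def ev (z : ℂ) : HolderSp G →L[ℝ] G :=
  (lp.evalCLM ℝ (fun _ : ℂ ⊕ ℂ × ℂ => G) ⊤ (.inl z)).comp (holderSubmodule G).subtypeL

lemma coe_eq (u : HolderSp G) : (u.1 : ℂ ⊕ ℂ × ℂ → G) = holderFamily G fun z => ev z u := u.2

lemma norm_ev_le (u : HolderSp G) (z : ℂ) : ‖ev z u‖ ≤ ‖u‖ :=
  lp.norm_apply_le_norm ENNReal.top_ne_zero u.1 (.inl z)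

lemma sqrtHolderOn_ev (u : HolderSp G) :
    SqrtHolderOn ‖u‖ (fun z => ev z u) (closedBall 0 1) := fun z hz w hw => by
  have h := lp.norm_apply_le_norm ENNReal.top_ne_zero u.1 (.inr (z, w))
  rw [coe_eq, holderFamily_inr _ hz hw, norm_smul, norm_inv,
    Real.norm_of_nonneg (Real.sqrt_nonneg _)] at h
  rcases eq_or_ne z w with rfl | hne
  · simp
  · rwa [inv_mul_le_iff₀' (Real.sqrt_pos.2 (norm_pos_iff.2 (sub_ne_zero.2 hne)))] at h

lemma norm_le {u : HolderSp G} {A : ℝ} (hA : 0 ≤ A)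
    (hb : ∀ z ∈ closedBall (0 : ℂ) 1, ‖ev z u‖ ≤ A)
    (hh : SqrtHolderOn A (fun z => ev z u) (closedBall 0 1)) : ‖u‖ ≤ A :=
  lp.norm_le_of_forall_le (f := u.1) hA fun i => by
    rw [coe_eq]
    exact norm_holderFamily_le hA hb hh i

lemma exists_ev_eq (u : ℂ → G) {A B : ℝ} (hb : ∀ z ∈ closedBall (0 : ℂ) 1, ‖u z‖ ≤ A)
    (hh : SqrtHolderOn B u (closedBall 0 1)) :
    ∃ U : HolderSp G, ∀ z ∈ closedBall (0 : ℂ) 1, ev z U = u z := by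
  have hA : 0 ≤ A := (norm_nonneg _).trans (hb 0 (mem_closedBall_self zero_le_one))
  have hmem : Memℓp (E := fun _ => G) (holderFamily G u) ⊤ :=
    memℓp_infty ⟨max A B, forall_mem_range.2 <| norm_holderFamily_le (hA.trans (le_max_left _ _))
      (fun z hz => (hb z hz).trans (le_max_left _ _)) (hh.mono_const (le_max_right _ _))⟩
  refine ⟨⟨⟨holderFamily G u, hmem⟩, ?_⟩, fun z hz => holderFamily_inl u hz⟩
  exact holderFamily_congr fun z hz => (holderFamily_inl u hz).symm

lemma ext_ev {u v : HolderSp G} (h : ∀ z ∈ closedBall (0 : ℂ) 1, ev z u = ev z v) : u = v := by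
  have hsub : ∀ z ∈ closedBall (0 : ℂ) 1, ev z (u - v) = 0 := fun z hz => by
    rw [map_sub, h z hz, sub_self]
  rw [← sub_eq_zero, ← norm_le_zero_iff]
  refine norm_le le_rfl (fun z hz => ?_) fun z hz w hw => ?_
  · rw [hsub z hz, norm_zero]
  · simp only [hsub z hz, hsub w hw, sub_zero, norm_zero, zero_mul, le_refl]

lemma norm_apply_ev_le (B : G₁ →L[ℝ] G₂ →L[ℝ] G₃) (u : HolderSp G₁) (v : HolderSp G₂) (z : ℂ) :
    ‖B (ev z u) (ev z v)‖ ≤ ‖B‖ * ‖u‖ * ‖v‖ :=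
  B.le_of_opNorm₂_le_of_le le_rfl (norm_ev_le u z) (norm_ev_le v z)

lemma sqrtHolderOn_apply_ev (B : G₁ →L[ℝ] G₂ →L[ℝ] G₃) (u : HolderSp G₁) (v : HolderSp G₂) :
    SqrtHolderOn (2 * ‖B‖ * ‖u‖ * ‖v‖) (fun z => B (ev z u) (ev z v)) (closedBall 0 1) := by
  have hBu : SqrtHolderOn (‖B‖ * ‖u‖) (fun z => B (ev z u)) (closedBall 0 1) :=
    fun z hz w hw => by
      rw [← map_sub, mul_assoc]
      exact B.le_opNorm_of_le (u.sqrtHolderOn_ev hz hw)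
  refine (hBu.clm_apply (fun z _ => B.le_opNorm_of_le (u.norm_ev_le z)) v.sqrtHolderOn_ev
    fun z _ => v.norm_ev_le z).mono_const (le_of_eq ?_)
  ring

lemma exists_ev_eq_apply (B : G₁ →L[ℝ] G₂ →L[ℝ] G₃) (u : HolderSp G₁) (v : HolderSp G₂) :
    ∃ U : HolderSp G₃, ∀ z ∈ closedBall (0 : ℂ) 1, ev z U = B (ev z u) (ev z v) :=
  exists_ev_eq _ (fun z _ => norm_apply_ev_le B u v z) (sqrtHolderOn_apply_ev B u v)

/-- Pointwise application of a bilinear map to two Hölder maps, as a plain function; its bundled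
version is `HolderSp.bilin`. -/
def bilinFun (B : G₁ →L[ℝ] G₂ →L[ℝ] G₃) (u : HolderSp G₁) (v : HolderSp G₂) : HolderSp G₃ :=
  (exists_ev_eq_apply B u v).choose

lemma ev_bilinFun (B : G₁ →L[ℝ] G₂ →L[ℝ] G₃) (u : HolderSp G₁) (v : HolderSp G₂) {z : ℂ}
    (hz : z ∈ closedBall (0 : ℂ) 1) : ev z (bilinFun B u v) = B (ev z u) (ev z v) :=
  (exists_ev_eq_apply B u v).choose_spec z hz

lemma norm_bilinFun_le (B : G₁ →L[ℝ] G₂ →L[ℝ] G₃) (u : HolderSp G₁) (v : HolderSp G₂) :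
    ‖bilinFun B u v‖ ≤ 2 * ‖B‖ * ‖u‖ * ‖v‖ := by
  refine norm_le (by positivity) (fun z hz => ?_) fun z hz w hw => ?_
  · rw [ev_bilinFun B u v hz]
    have : 0 ≤ ‖B‖ * ‖u‖ * ‖v‖ := by positivity
    linarith [norm_apply_ev_le B u v z]
  · simp only [ev_bilinFun B u v hz, ev_bilinFun B u v hw]
    exact sqrtHolderOn_apply_ev B u v hz hw

/-- Pointwise application of a continuous bilinear map to two Hölder maps. -/
def bilin (B : G₁ →L[ℝ] G₂ →L[ℝ] G₃) : HolderSp G₁ →L[ℝ] HolderSp G₂ →L[ℝ] HolderSp G₃ :=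
  LinearMap.mkContinuous₂
    (LinearMap.mk₂ ℝ (bilinFun B)
      (fun u u' v => ext_ev fun z hz => by
        simp only [map_add, ev_bilinFun B _ _ hz, _root_.add_apply])
      (fun c u v => ext_ev fun z hz => by
        simp only [map_smul, ev_bilinFun B _ _ hz, _root_.smul_apply])
      (fun u v v' => ext_ev fun z hz => by simp only [map_add, ev_bilinFun B _ _ hz])
      (fun c u v => ext_ev fun z hz => by simp only [map_smul, ev_bilinFun B _ _ hz]))
    (2 * ‖B‖) (norm_bilinFun_le B)

lemma ev_bilin (B : G₁ →L[ℝ] G₂ →L[ℝ] G₃) (u : HolderSp G₁) (v : HolderSp G₂) {z : ℂ}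
    (hz : z ∈ closedBall (0 : ℂ) 1) : ev z (bilin B u v) = B (ev z u) (ev z v) :=
  ev_bilinFun B u v hz

lemma exists_ev_eq_const (x : G) :
    ∃ U : HolderSp G, ∀ z ∈ closedBall (0 : ℂ) 1, ev z U = x :=
  exists_ev_eq (fun _ => x) (fun _ _ => le_rfl) (B := 0) fun _ _ _ _ => by simp

/-- Pointwise application of a continuous linear map to a Hölder map. -/
def map (ℓ : G₁ →L[ℝ] G₂) : HolderSp G₁ →L[ℝ] HolderSp G₂ :=
  bilin (ContinuousLinearMap.id ℝ (G₁ →L[ℝ] G₂)) (exists_ev_eq_const ℓ).choose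

lemma ev_map (ℓ : G₁ →L[ℝ] G₂) (u : HolderSp G₁) {z : ℂ} (hz : z ∈ closedBall (0 : ℂ) 1) :
    ev z (map ℓ u) = ℓ (ev z u) := by
  rw [map, ev_bilin _ _ _ hz, (exists_ev_eq_const ℓ).choose_spec z hz, ContinuousLinearMap.id_apply]

end HolderSp

end HolderSp

section DiscExtension

variable {V : Type*} [NormedAddCommGroup V]

/-- The radial cutoff equal to `1` on the closed unit ball and to `0` outside the ball of radius
`2`. -/
def tentCutoff (x : V) : ℝ := max 0 (min 1 (2 - ‖x‖))

lemma tentCutoff_nonneg (x : V) : 0 ≤ tentCutoff x := le_max_left _ _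

lemma tentCutoff_le_one (x : V) : tentCutoff x ≤ 1 := max_le zero_le_one (min_le_left _ _)

lemma tentCutoff_of_mem {x : V} (hx : x ∈ closedBall (0 : V) 1) : tentCutoff x = 1 := by
  rw [mem_closedBall_zero_iff] at hx
  rw [tentCutoff, min_eq_left (by linarith), max_eq_right zero_le_one]

lemma tentCutoff_of_two_le {x : V} (hx : 2 ≤ ‖x‖) : tentCutoff x = 0 :=
  max_eq_left ((min_le_right _ _).trans (by linarith))

lemma sqrtHolderOn_tentCutoff : SqrtHolderOn 1 (tentCutoff : V → ℝ) univ := fun x _ y _ => by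
  have hlip : |tentCutoff x - tentCutoff y| ≤ ‖x - y‖ := by
    refine (abs_max_sub_max_le_max _ _ _ _).trans (max_le (by simp) ?_)
    refine (abs_min_sub_min_le_max _ _ _ _).trans (max_le (by simp) ?_)
    rw [sub_sub_sub_cancel_left, abs_sub_comm]
    exact abs_norm_sub_norm_le x y
  have hone : |tentCutoff x - tentCutoff y| ≤ 1 :=
    abs_sub_le_of_nonneg_of_le (tentCutoff_nonneg x) (tentCutoff_le_one x)
      (tentCutoff_nonneg y) (tentCutoff_le_one y)
  calc ‖tentCutoff x - tentCutoff y‖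
      ≤ √1 * √|tentCutoff x - tentCutoff y| := le_sqrt_mul_sqrt (abs_nonneg _) hone
    _ ≤ 1 * √‖x - y‖ := by rw [Real.sqrt_one]; gcongr

variable [NormedSpace ℝ V]

/-- The radial retraction of a normed space onto its closed unit ball. -/
def unitBallRetraction (x : V) : V := (max 1 ‖x‖)⁻¹ • x

lemma unitBallRetraction_mem (x : V) : unitBallRetraction x ∈ closedBall (0 : V) 1 := by
  have h0 : 0 < max 1 ‖x‖ := lt_max_of_lt_left one_pos
  rw [mem_closedBall_zero_iff, unitBallRetraction, norm_smul, norm_inv, Real.norm_of_nonneg h0.le,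
    inv_mul_le_iff₀ h0, mul_one]
  exact le_max_right _ _

lemma unitBallRetraction_of_mem {x : V} (hx : x ∈ closedBall (0 : V) 1) :
    unitBallRetraction x = x := by
  rw [unitBallRetraction, max_eq_left (mem_closedBall_zero_iff.1 hx), inv_one, one_smul]

lemma norm_unitBallRetraction_sub_le (x y : V) :
    ‖unitBallRetraction x - unitBallRetraction y‖ ≤ 2 * ‖x - y‖ := by
  set a : V → ℝ := fun x => max 1 ‖x‖
  set ρ : V → V := unitBallRetraction
  have ha : ∀ x, 0 < a x := fun x => lt_max_of_lt_left one_pos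
  have haρ : ∀ x, a x • ρ x = x := fun x => smul_inv_smul₀ (ha x).ne' x
  have hlip : |a y - a x| ≤ ‖x - y‖ := by
    rw [abs_sub_comm]
    exact (abs_max_sub_max_le_max 1 ‖x‖ 1 ‖y‖).trans (by simpa using abs_norm_sub_norm_le x y)
  have hsplit : a x • (ρ x - ρ y) = (x - y) + (a y - a x) • ρ y := by
    rw [smul_sub, sub_smul, haρ, haρ]; abel
  calc ‖ρ x - ρ y‖ ≤ a x * ‖ρ x - ρ y‖ := le_mul_of_one_le_left (norm_nonneg _) (le_max_left _ _)
    _ = ‖(x - y) + (a y - a x) • ρ y‖ := by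
      rw [← hsplit, norm_smul, Real.norm_of_nonneg (ha x).le]
    _ ≤ ‖x - y‖ + ‖x - y‖ * 1 := by
      refine norm_add_le_of_le le_rfl ?_
      rw [norm_smul]
      exact mul_le_mul hlip (mem_closedBall_zero_iff.1 (unitBallRetraction_mem y)) (norm_nonneg _)
        (norm_nonneg _)
    _ = 2 * ‖x - y‖ := by ring

variable {G : Type*} [NormedAddCommGroup G] [NormedSpace ℝ G]

lemma HolderSp.sqrtHolderOn_ev_unitBallRetraction (u : HolderSp G) :
    SqrtHolderOn (2 * ‖u‖) (fun z => ev (unitBallRetraction z) u) univ := fun z _ w _ => by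
  have hsqrt : √‖unitBallRetraction z - unitBallRetraction w‖ ≤ 2 * √‖z - w‖ := by
    rw [Real.sqrt_le_left (by positivity), mul_pow, Real.sq_sqrt (norm_nonneg _)]
    linarith [norm_unitBallRetraction_sub_le z w, norm_nonneg (z - w)]
  calc ‖ev (unitBallRetraction z) u - ev (unitBallRetraction w) u‖
      ≤ ‖u‖ * √‖unitBallRetraction z - unitBallRetraction w‖ :=
        u.sqrtHolderOn_ev (unitBallRetraction_mem z) (unitBallRetraction_mem w)
    _ ≤ ‖u‖ * (2 * √‖z - w‖) := by gcongr
    _ = 2 * ‖u‖ * √‖z - w‖ := by ring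

theorem HolderSp.exists_bddHolderSupp_eqOn (u : HolderSp G) :
    ∃ U M, BddHolderSupp 2 M U ∧ ∀ z ∈ closedBall (0 : ℂ) 1, U z = ev z u := by
  refine ⟨fun z => (tentCutoff z : ℝ) • ev (unitBallRetraction z) u, 3 * ‖u‖, ⟨fun z => ?_, ?_,
    fun z hz => ?_⟩, fun z hz => ?_⟩
  · rw [norm_smul, Real.norm_of_nonneg (tentCutoff_nonneg z)]
    nlinarith [tentCutoff_nonneg z, tentCutoff_le_one z, norm_ev_le u (unitBallRetraction z),
      norm_nonneg (ev (unitBallRetraction z) u)]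
  · have hχ : SqrtHolderOn 1
        (fun z : ℂ => (tentCutoff z : ℝ) • ContinuousLinearMap.id ℝ G) univ := fun z hz w hw => by
      rw [← sub_smul]
      exact (norm_smul_le _ _).trans ((mul_le_of_le_one_right (norm_nonneg _)
        ContinuousLinearMap.norm_id_le).trans (sqrtHolderOn_tentCutoff hz hw))
    have hχ1 : ∀ z ∈ (univ : Set ℂ), ‖(tentCutoff z : ℝ) • ContinuousLinearMap.id ℝ G‖ ≤ 1 :=
      fun z _ => (norm_smul_le (tentCutoff z) (ContinuousLinearMap.id ℝ G)).trans (mul_le_one₀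
        ((Real.norm_of_nonneg (tentCutoff_nonneg z)).trans_le (tentCutoff_le_one z))
        (norm_nonneg _) ContinuousLinearMap.norm_id_le)
    exact (hχ.clm_apply hχ1 u.sqrtHolderOn_ev_unitBallRetraction fun z _ =>
      u.norm_ev_le _).mono_const (le_of_eq (by ring))
  · simp only [tentCutoff_of_two_le hz.le, zero_smul]
  · simp only [tentCutoff_of_mem hz, unitBallRetraction_of_mem hz, one_smul]

end DiscExtension

section Superposition

variable {V G : Type*} [NormedAddCommGroup V] [NormedSpace ℝ V] [NormedAddCommGroup G]
  [NormedSpace ℝ G]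

/-- `φ` is bounded by `L` and differentiable, with derivative `φ'` bounded by `L` and
`L`-Lipschitz. -/
structure LipC1 (L : ℝ) (φ : V → G) (φ' : V → V →L[ℝ] G) : Prop extends BddC1 L φ φ' where
  norm_deriv_sub_le : ∀ x y, ‖φ' x - φ' y‖ ≤ L * ‖x - y‖

/-- `N` is the operator of left composition with `φ` on Hölder maps of the disc. -/
def IsSuperposition (φ : V → G) (N : HolderSp V → HolderSp G) : Prop :=
  ∀ u, ∀ z ∈ closedBall (0 : ℂ) 1, HolderSp.ev z (N u) = φ (HolderSp.ev z u)

lemma norm_sub_sub_sub_sub_le_of_hasFDerivAt {φ : V → G} {φ' : V → V →L[ℝ] G}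
    (h : ∀ x, HasFDerivAt φ (φ' x) x) {b k b' k' : V} {c : G} {C : ℝ}
    (hC : ∀ t ∈ Ico (0 : ℝ) 1, ‖φ' (b + t • k) k - φ' (b' + t • k') k' - c‖ ≤ C) :
    ‖(φ (b + k) - φ b) - (φ (b' + k') - φ b') - c‖ ≤ C := by
  have hline : ∀ (b k : V) (t : ℝ),
      HasDerivAt (fun t : ℝ => φ (b + t • k)) (φ' (b + t • k) k) t := fun b k t =>
    (h _).comp_hasDerivAt t (by simpa using ((hasDerivAt_id t).smul_const k).const_add b)
  have hc : ∀ t : ℝ, HasDerivAt (fun t : ℝ => t • c) c t := fun t => by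
    simpa using (hasDerivAt_id t).smul_const c
  have hmv := norm_image_sub_le_of_norm_deriv_le_segment_01' (C := C)
    (fun t _ => (((hline b k t).sub (hline b' k' t)).sub (hc t)).hasDerivWithinAt) hC
  refine le_trans (le_of_eq (congrArg _ ?_)) hmv
  simp only [Pi.sub_apply, one_smul, zero_smul, add_zero]
  abel

lemma norm_smul_le_of_mem_Ico {t : ℝ} (ht : t ∈ Ico (0 : ℝ) 1) (v : V) : ‖t • v‖ ≤ ‖v‖ := by
  rw [norm_smul, Real.norm_of_nonneg ht.1]
  exact mul_le_of_le_one_left (norm_nonneg _) ht.2.le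

namespace LipC1

variable {L : ℝ} {φ : V → G} {φ' : V → V →L[ℝ] G} {φ'' : V → V →L[ℝ] V →L[ℝ] G}

lemma norm_four_point_le (h : LipC1 L φ φ') (b k b' k' : V) :
    ‖(φ (b + k) - φ b) - (φ (b' + k') - φ b')‖ ≤
      L * ‖k - k'‖ + L * (‖b - b'‖ + ‖k - k'‖) * ‖k'‖ := by
  rw [← sub_zero (_ - _ - _)]
  refine norm_sub_sub_sub_sub_le_of_hasFDerivAt h.hasFDerivAt fun t ht => ?_
  have hsplit : φ' (b + t • k) k - φ' (b' + t • k') k' - 0 =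
      φ' (b + t • k) (k - k') + (φ' (b + t • k) - φ' (b' + t • k')) k' := by
    simp only [map_sub, _root_.sub_apply]; abel
  have hbase : ‖b + t • k - (b' + t • k')‖ ≤ ‖b - b'‖ + ‖k - k'‖ := by
    rw [add_sub_add_comm, ← smul_sub]
    exact norm_add_le_of_le le_rfl (norm_smul_le_of_mem_Ico ht _)
  rw [hsplit]
  refine norm_add_le_of_le (ContinuousLinearMap.le_of_opNorm_le _ (h.norm_deriv_le _) _)
    (ContinuousLinearMap.le_of_opNorm_le _ ((h.norm_deriv_sub_le _ _).trans ?_) _)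
  exact mul_le_mul_of_nonneg_left hbase h.nonneg

lemma norm_taylor_le (h : LipC1 L φ φ') (b k : V) :
    ‖φ (b + k) - φ b - φ' b k‖ ≤ L * ‖k‖ ^ 2 := by
  have hmv := (convex_closedBall b ‖k‖).norm_image_sub_le_of_norm_hasFDerivWithin_le'
    (fun x _ => (h.hasFDerivAt x).hasFDerivWithinAt)
    (fun x hx => (h.norm_deriv_sub_le x b).trans
      (mul_le_mul_of_nonneg_left (mem_closedBall_iff_norm.1 hx) h.nonneg))
    (mem_closedBall_self (norm_nonneg k)) (show b + k ∈ closedBall b ‖k‖ by simp)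
  rwa [add_sub_cancel_left, mul_assoc, ← pow_two] at hmv

lemma norm_taylor_sub_le (h : LipC1 L φ φ') (h' : LipC1 L φ' φ'') (b k b' k' : V) :
    ‖(φ (b + k) - φ b - φ' b k) - (φ (b' + k') - φ b' - φ' b' k')‖ ≤
      L * ‖k‖ * ‖k - k'‖ + (L * ‖k - k'‖ + L * (‖b - b'‖ + ‖k - k'‖) * ‖k'‖) * ‖k'‖ := by
  rw [sub_sub_sub_comm]
  refine norm_sub_sub_sub_sub_le_of_hasFDerivAt h.hasFDerivAt fun t ht => ?_
  have hL := h.nonneg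
  have hsplit : φ' (b + t • k) k - φ' (b' + t • k') k' - (φ' b k - φ' b' k') =
      (φ' (b + t • k) - φ' b) (k - k') +
        ((φ' (b + t • k) - φ' b) - (φ' (b' + t • k') - φ' b')) k' := by
    simp only [map_sub, _root_.sub_apply]; abel
  have hfirst : ‖φ' (b + t • k) - φ' b‖ ≤ L * ‖k‖ := by
    refine (h'.norm_sub_le _ _).trans ?_
    rw [add_sub_cancel_left]
    gcongr
    exact norm_smul_le_of_mem_Ico ht k
  have hsecond : ‖(φ' (b + t • k) - φ' b) - (φ' (b' + t • k') - φ' b')‖ ≤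
      L * ‖k - k'‖ + L * (‖b - b'‖ + ‖k - k'‖) * ‖k'‖ := by
    refine (h'.norm_four_point_le _ _ _ _).trans ?_
    rw [← smul_sub]
    gcongr <;> exact norm_smul_le_of_mem_Ico ht _
  rw [hsplit]
  exact norm_add_le_of_le (ContinuousLinearMap.le_of_opNorm_le _ hfirst _)
    (ContinuousLinearMap.le_of_opNorm_le _ hsecond _)

open HolderSp

lemma exists_isSuperposition (h : LipC1 L φ φ') :
    ∃ N : HolderSp V → HolderSp G, IsSuperposition φ N := by
  have hN : ∀ u : HolderSp V, ∃ U : HolderSp G,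
      ∀ z ∈ closedBall (0 : ℂ) 1, ev z U = φ (ev z u) := fun u =>
    exists_ev_eq (fun z => φ (ev z u)) (fun z _ => h.norm_le _) (B := L * ‖u‖)
      fun z hz w hw => by
        rw [mul_assoc]
        exact (h.norm_sub_le _ _).trans
          (mul_le_mul_of_nonneg_left (u.sqrtHolderOn_ev hz hw) h.nonneg)
  choose N hN using hN
  exact ⟨N, hN⟩

variable {N : HolderSp V → HolderSp G} {N' : HolderSp V → HolderSp (V →L[ℝ] G)}

lemma norm_superposition_sub_le (h : LipC1 L φ φ') (hN : IsSuperposition φ N) (u k : HolderSp V) :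
    ‖N (u + k) - N u‖ ≤ L * (1 + ‖u‖ + ‖k‖) * ‖k‖ := by
  have hL := h.nonneg
  have hev : ∀ z ∈ closedBall (0 : ℂ) 1,
      ev z (N (u + k) - N u) = φ (ev z u + ev z k) - φ (ev z u) := fun z hz => by
    rw [map_sub, hN _ z hz, hN _ z hz, map_add]
  refine HolderSp.norm_le (by positivity) (fun z hz => ?_) fun z hz w hw => ?_
  · calc ‖ev z (N (u + k) - N u)‖ ≤ L * ‖ev z k‖ := by
          simpa only [hev z hz, add_sub_cancel_left] using h.norm_sub_le (ev z u + ev z k) (ev z u)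
      _ ≤ L * (1 + ‖u‖ + ‖k‖) * ‖k‖ := by
          gcongr
          · nlinarith [norm_nonneg u, norm_nonneg k]
          · exact norm_ev_le k z
  · simp only [hev z hz, hev w hw]
    calc _ ≤ _ := h.norm_four_point_le _ _ _ _
      _ ≤ L * (‖k‖ * √‖z - w‖) + L * (‖u‖ * √‖z - w‖ + ‖k‖ * √‖z - w‖) * ‖k‖ := by
          gcongr
          exacts [k.sqrtHolderOn_ev hz hw, u.sqrtHolderOn_ev hz hw, k.sqrtHolderOn_ev hz hw,
            norm_ev_le k w]
      _ = _ := by ring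

lemma continuous_superposition (h : LipC1 L φ φ') (hN : IsSuperposition φ N) : Continuous N := by
  refine continuous_iff_continuousAt.2 fun u => ?_
  have hbound : Tendsto (fun v => L * (1 + ‖u‖ + ‖v - u‖) * ‖v - u‖) (𝓝 u) (𝓝 0) := by
    have hcont : Continuous fun v => L * (1 + ‖u‖ + ‖v - u‖) * ‖v - u‖ := by fun_prop
    simpa only [sub_self, norm_zero, mul_zero] using hcont.tendsto u
  refine tendsto_iff_norm_sub_tendsto_zero.2
    (squeeze_zero (fun _ => norm_nonneg _) (fun v => ?_) hbound)
  simpa only [add_sub_cancel] using h.norm_superposition_sub_le hN u (v - u)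

lemma norm_superposition_taylor_le (h : LipC1 L φ φ') (h' : LipC1 L φ' φ'')
    (hN : IsSuperposition φ N) (hN' : IsSuperposition φ' N') (u k : HolderSp V) :
    ‖N (u + k) - N u - bilin (ContinuousLinearMap.id ℝ (V →L[ℝ] G)) (N' u) k‖ ≤
      L * (2 + ‖u‖ + ‖k‖) * ‖k‖ * ‖k‖ := by
  have hL := h.nonneg
  have hev : ∀ z ∈ closedBall (0 : ℂ) 1,
      ev z (N (u + k) - N u - bilin (ContinuousLinearMap.id ℝ (V →L[ℝ] G)) (N' u) k) =
        φ (ev z u + ev z k) - φ (ev z u) - φ' (ev z u) (ev z k) := fun z hz => by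
    rw [map_sub, map_sub, hN _ z hz, hN _ z hz, ev_bilin _ _ _ hz, hN' _ z hz, map_add,
      ContinuousLinearMap.id_apply]
  refine HolderSp.norm_le (by positivity) (fun z hz => ?_) fun z hz w hw => ?_
  · rw [hev z hz]
    calc _ ≤ L * ‖ev z k‖ ^ 2 := h.norm_taylor_le _ _
      _ ≤ L * ‖k‖ ^ 2 := by gcongr; exact norm_ev_le k z
      _ = L * 1 * ‖k‖ * ‖k‖ := by ring
      _ ≤ L * (2 + ‖u‖ + ‖k‖) * ‖k‖ * ‖k‖ := by
          gcongr
          linarith [norm_nonneg u, norm_nonneg k]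
  · simp only [hev z hz, hev w hw]
    calc _ ≤ _ := h.norm_taylor_sub_le h' _ _ _ _
      _ ≤ L * ‖k‖ * (‖k‖ * √‖z - w‖) + (L * (‖k‖ * √‖z - w‖) +
            L * (‖u‖ * √‖z - w‖ + ‖k‖ * √‖z - w‖) * ‖k‖) * ‖k‖ := by
          have hku := k.sqrtHolderOn_ev hz hw
          gcongr
          exacts [norm_ev_le k z, u.sqrtHolderOn_ev hz hw, norm_ev_le k w, norm_ev_le k w]
      _ = _ := by ring

theorem hasStrictFDerivAt_superposition (h : LipC1 L φ φ') (h' : LipC1 L φ' φ'')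
    (hN : IsSuperposition φ N) (hN' : IsSuperposition φ' N') (u : HolderSp V) :
    HasStrictFDerivAt N (bilin (ContinuousLinearMap.id ℝ (V →L[ℝ] G)) (N' u)) u := by
  set P := bilin (ContinuousLinearMap.id ℝ (V →L[ℝ] G))
  refine hasStrictFDerivAt_of_hasFDerivAt_of_continuousAt (f' := fun u => P (N' u))
    (Eventually.of_forall fun u => ?_)
    (P.continuous.comp (h'.continuous_superposition hN')).continuousAt
  have hbound : Tendsto (fun k : HolderSp V => L * (2 + ‖u‖ + ‖k‖) * ‖k‖) (𝓝 0) (𝓝 0) := by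
    have hcont : Continuous fun k : HolderSp V => L * (2 + ‖u‖ + ‖k‖) * ‖k‖ := by fun_prop
    simpa only [norm_zero, mul_zero] using hcont.tendsto 0
  rw [hasFDerivAt_iff_isLittleO_nhds_zero]
  refine isLittleO_iff.2 fun c hc => ?_
  filter_upwards [hbound.eventually_lt_const hc] with k hk
  exact (h.norm_superposition_taylor_le h' hN hN' u k).trans (by gcongr)

end LipC1

end Superposition

section DiscHolder

variable {V W G : Type*} [NormedAddCommGroup V] [NormedSpace ℝ V] [NormedAddCommGroup W]
  [NormedSpace ℝ W] [NormedAddCommGroup G] [NormedSpace ℝ G]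

open HolderSp

/-- A map which agrees on the closed unit disc with an element of `HolderSp G`; its values outside
the disc are irrelevant. -/
def IsDiscHolder (u : ℂ → G) : Prop :=
  ∃ U : HolderSp G, ∀ z ∈ closedBall (0 : ℂ) 1, ev z U = u z

namespace IsDiscHolder

lemma of_ev (U : HolderSp G) : IsDiscHolder fun z => ev z U := ⟨U, fun _ _ => rfl⟩

lemma add {u v : ℂ → G} (hu : IsDiscHolder u) (hv : IsDiscHolder v) :
    IsDiscHolder fun z => u z + v z := by
  obtain ⟨U, hU⟩ := hu
  obtain ⟨V, hV⟩ := hv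
  exact ⟨U + V, fun z hz => by rw [map_add, hU z hz, hV z hz]⟩

lemma sub {u v : ℂ → G} (hu : IsDiscHolder u) (hv : IsDiscHolder v) :
    IsDiscHolder fun z => u z - v z := by
  obtain ⟨U, hU⟩ := hu
  obtain ⟨V, hV⟩ := hv
  exact ⟨U - V, fun z hz => by rw [map_sub, hU z hz, hV z hz]⟩

lemma map {u : ℂ → V} (hu : IsDiscHolder u) (ℓ : V →L[ℝ] W) : IsDiscHolder fun z => ℓ (u z) := by
  obtain ⟨U, hU⟩ := hu
  exact ⟨HolderSp.map ℓ U, fun z hz => by rw [ev_map ℓ U hz, hU z hz]⟩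

lemma bilin {u : ℂ → V} {v : ℂ → W} (hu : IsDiscHolder u) (hv : IsDiscHolder v)
    (B : V →L[ℝ] W →L[ℝ] G) : IsDiscHolder fun z => B (u z) (v z) := by
  obtain ⟨U, hU⟩ := hu
  obtain ⟨V, hV⟩ := hv
  exact ⟨HolderSp.bilin B U V, fun z hz => by rw [ev_bilin B U V hz, hU z hz, hV z hz]⟩

lemma clm_apply {A : ℂ → V →L[ℝ] W} {u : ℂ → V} (hA : IsDiscHolder A) (hu : IsDiscHolder u) :
    IsDiscHolder fun z => A z (u z) :=
  hA.bilin hu (ContinuousLinearMap.id ℝ (V →L[ℝ] W))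

lemma clm_comp {A : ℂ → W →L[ℝ] G} {B : ℂ → V →L[ℝ] W} (hA : IsDiscHolder A)
    (hB : IsDiscHolder B) : IsDiscHolder fun z => (A z).comp (B z) :=
  hA.bilin hB (ContinuousLinearMap.compL ℝ V W G)

lemma comp_const {A : ℂ → W →L[ℝ] G} (hA : IsDiscHolder A) (B : V →L[ℝ] W) :
    IsDiscHolder fun z => (A z).comp B :=
  hA.map ((ContinuousLinearMap.compL ℝ V W G).flip B)

lemma const_comp {B : ℂ → V →L[ℝ] W} (hB : IsDiscHolder B) (A : W →L[ℝ] G) :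
    IsDiscHolder fun z => A.comp (B z) :=
  hB.map (ContinuousLinearMap.compL ℝ V W G A)

lemma flip {A : ℂ → V →L[ℝ] W →L[ℝ] G} (hA : IsDiscHolder A) :
    IsDiscHolder fun z => (A z).flip :=
  hA.map (W := W →L[ℝ] V →L[ℝ] G)
    (ContinuousLinearMap.flipₗᵢ ℝ V W G).toContinuousLinearEquiv.toContinuousLinearMap

end IsDiscHolder

lemma SqrtHolderOn.isDiscHolder {C : ℝ} {u : ℂ → G} (h : SqrtHolderOn C u (closedBall 0 1)) :
    IsDiscHolder u := by
  have h0 : (0 : ℂ) ∈ closedBall (0 : ℂ) 1 := mem_closedBall_self zero_le_one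
  refine exists_ev_eq u (A := ‖u 0‖ + |C| * √2) (fun z hz => ?_) h
  have hz2 : ‖z - 0‖ ≤ 2 := by simpa using norm_sub_le_two_mul_of_mem_closedBall hz h0
  calc ‖u z‖ ≤ ‖u 0‖ + ‖u z - u 0‖ := norm_le_norm_add_norm_sub' _ _
    _ ≤ ‖u 0‖ + |C| * √‖z - 0‖ := by gcongr; exact h.mono_const (le_abs_self C) hz h0
    _ ≤ ‖u 0‖ + |C| * √2 := by gcongr

end DiscHolder

section HolderC1

variable (V : Type*) [NormedAddCommGroup V] [NormedSpace ℝ V]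

open HolderSp

/-- Pairs `(u, u')` of `1/2`-Hölder maps on the closed unit disc such that `u'` is the derivative
of `u`. -/
def holderC1Submodule : Submodule ℝ (HolderSp V × HolderSp (ℂ →L[ℝ] V)) where
  carrier := {x | ∀ z ∈ closedBall (0 : ℂ) 1,
    HasFDerivWithinAt (fun w => ev w x.1) (ev z x.2) (closedBall (0 : ℂ) 1) z}
  zero_mem' z _ := by
    simp only [Prod.fst_zero, Prod.snd_zero, map_zero]
    exact hasFDerivWithinAt_const _ _ _
  add_mem' {a b} ha hb z hz := by
    simp only [Prod.fst_add, Prod.snd_add, map_add]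
    exact (ha z hz).add (hb z hz)
  smul_mem' c _ ha z hz := by
    simp only [Prod.smul_fst, Prod.smul_snd, map_smul]
    exact (ha z hz).const_smul c

variable {V} in
/-- A remainder estimate which, unlike differentiability, passes to the limit pointwise. -/
lemma mem_holderC1Submodule_iff {x : HolderSp V × HolderSp (ℂ →L[ℝ] V)} :
    x ∈ holderC1Submodule V ↔ ∀ z ∈ closedBall (0 : ℂ) 1, ∀ w ∈ closedBall (0 : ℂ) 1,
      ‖ev w x.1 - ev z x.1 - ev z x.2 (w - z)‖ ≤ ‖x.2‖ * √‖w - z‖ * ‖w - z‖ := by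
  constructor
  · intro hx z hz w hw
    have hconvex := (convex_closedBall (0 : ℂ) 1).inter (convex_closedBall z ‖w - z‖)
    refine hconvex.norm_image_sub_le_of_norm_hasFDerivWithin_le' (f' := fun z => ev z x.2)
      (fun y hy => (hx y hy.1).mono inter_subset_left) (fun y hy => ?_)
      ⟨hz, mem_closedBall_self (norm_nonneg _)⟩ ⟨hw, mem_closedBall_iff_norm.2 le_rfl⟩
    refine (sqrtHolderOn_ev x.2 hy.1 hz).trans ?_
    gcongr
    exact mem_closedBall_iff_norm.1 hy.2
  · intro hx z hz
    rw [hasFDerivWithinAt_iff_isLittleO]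
    refine isLittleO_iff.2 fun c hc => ?_
    have hlim : Tendsto (fun w : ℂ => ‖x.2‖ * √‖w - z‖) (𝓝 z) (𝓝 0) :=
      Continuous.tendsto' (by fun_prop) _ _ (by simp)
    filter_upwards [nhdsWithin_le_nhds (hlim.eventually_lt_const hc), self_mem_nhdsWithin]
      with w hw hwK
    exact (hx z hz w hwK).trans (by gcongr)

lemma isClosed_holderC1Submodule :
    IsClosed (holderC1Submodule V : Set (HolderSp V × HolderSp (ℂ →L[ℝ] V))) := by
  have hset : (holderC1Submodule V : Set (HolderSp V × HolderSp (ℂ →L[ℝ] V))) =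
      ⋂ z ∈ closedBall (0 : ℂ) 1, ⋂ w ∈ closedBall (0 : ℂ) 1,
        {x : HolderSp V × HolderSp (ℂ →L[ℝ] V) |
          ‖ev w x.1 - ev z x.1 - ev z x.2 (w - z)‖ ≤ ‖x.2‖ * √‖w - z‖ * ‖w - z‖} := by
    ext x
    simp only [mem_iInter, mem_ofPred_eq]
    exact mem_holderC1Submodule_iff
  rw [hset]
  exact isClosed_biInter fun z _ => isClosed_biInter fun w _ =>
    isClosed_le (by fun_prop) (by fun_prop)

/-- The Banach space of `C^{1,1/2}` maps from the closed unit disc to `V`. -/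
def HolderC1 : Type _ := holderC1Submodule V

instance : NormedAddCommGroup (HolderC1 V) :=
  inferInstanceAs (NormedAddCommGroup (holderC1Submodule V))

instance : NormedSpace ℝ (HolderC1 V) := inferInstanceAs (NormedSpace ℝ (holderC1Submodule V))

instance [CompleteSpace V] : CompleteSpace (HolderC1 V) :=
  (isClosed_holderC1Submodule V).completeSpace_coe

namespace HolderC1

variable {V}

/-- The function underlying an element of `HolderC1 V`. -/
def fn : HolderC1 V →L[ℝ] HolderSp V :=
  (ContinuousLinearMap.fst ℝ (HolderSp V) (HolderSp (ℂ →L[ℝ] V))).comp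
    (holderC1Submodule V).subtypeL

/-- The derivative of an element of `HolderC1 V`. -/
def dfn : HolderC1 V →L[ℝ] HolderSp (ℂ →L[ℝ] V) :=
  (ContinuousLinearMap.snd ℝ (HolderSp V) (HolderSp (ℂ →L[ℝ] V))).comp
    (holderC1Submodule V).subtypeL

lemma hasFDerivWithinAt (x : HolderC1 V) {z : ℂ} (hz : z ∈ closedBall (0 : ℂ) 1) :
    HasFDerivWithinAt (fun w => ev w (fn x)) (ev z (dfn x)) (closedBall (0 : ℂ) 1) z :=
  x.2 z hz

lemma exists_of_isDiscHolder {v : ℂ → V} {v' : ℂ → ℂ →L[ℝ] V} (hv : IsDiscHolder v)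
    (hv' : IsDiscHolder v')
    (h : ∀ z ∈ closedBall (0 : ℂ) 1, HasFDerivWithinAt v (v' z) (closedBall 0 1) z) :
    ∃ x : HolderC1 V, (∀ z ∈ closedBall (0 : ℂ) 1, ev z (fn x) = v z) ∧
      ∀ z ∈ closedBall (0 : ℂ) 1, ev z (dfn x) = v' z := by
  obtain ⟨U, hU⟩ := hv
  obtain ⟨U', hU'⟩ := hv'
  refine ⟨⟨(U, U'), fun z hz => ?_⟩, hU, hU'⟩
  rw [show ev z (U, U').2 = v' z from hU' z hz]
  exact (h z hz).congr hU (hU z hz)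

lemma exists_of_sqrtHolderOn {v : ℂ → V} {v' : ℂ → ℂ →L[ℝ] V} {C : ℝ}
    (hv : ∀ z ∈ closedBall (0 : ℂ) 1, HasFDerivWithinAt v (v' z) (closedBall 0 1) z)
    (hv' : SqrtHolderOn C v' (closedBall 0 1)) :
    ∃ x : HolderC1 V, (∀ z ∈ closedBall (0 : ℂ) 1, ev z (fn x) = v z) ∧
      ∀ z ∈ closedBall (0 : ℂ) 1, ev z (dfn x) = v' z := by
  obtain ⟨U', hU'⟩ := hv'.isDiscHolder
  have hlip : ∀ z ∈ closedBall (0 : ℂ) 1, ∀ w ∈ closedBall (0 : ℂ) 1,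
      ‖v z - v w‖ ≤ ‖U'‖ * ‖z - w‖ := fun z hz w hw =>
    (convex_closedBall (0 : ℂ) 1).norm_image_sub_le_of_norm_hasFDerivWithin_le hv
      (fun y hy => (hU' y hy).symm ▸ norm_ev_le U' y) hw hz
  have hhol : SqrtHolderOn (‖U'‖ * √(2 * 1)) v (closedBall 0 1) :=
    .of_norm_sub_le (norm_nonneg _)
      (fun _ hz _ hw => norm_sub_le_two_mul_of_mem_closedBall hz hw) hlip
  exact exists_of_isDiscHolder hhol.isDiscHolder ⟨U', hU'⟩ hv

end HolderC1

end HolderC1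

section LinearizedCauchyRiemann

variable {V W : Type*} [NormedAddCommGroup V] [NormedSpace ℝ V] [NormedAddCommGroup W]
  [NormedSpace ℂ W]

open HolderSp HolderC1

lemma BddHolderSupp.mono_const {G : Type*} [NormedAddCommGroup G] {R M M' : ℝ} {u : ℂ → G}
    (h : BddHolderSupp R M u) (hM : M ≤ M') : BddHolderSupp R M' u :=
  ⟨fun z => (h.bound z).trans hM, h.holder.mono_const hM, h.supp⟩

theorem HolderC1.exists_dbar_eq [CompleteSpace W] {A : ℂ → W →L[ℝ] W} {G : ℂ → W}
    (hA : IsDiscHolder A) (hG : IsDiscHolder G) (a b : W) :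
    ∃ x : HolderC1 W, (∀ z ∈ closedBall (0 : ℂ) 1,
      dbarL (ev z (dfn x)) + A z (ev z (fn x)) = G z) ∧ ev 0 (fn x) = a ∧ ev 0 (dfn x) 1 = b := by
  have h0 : (0 : ℂ) ∈ closedBall (0 : ℂ) 1 := mem_closedBall_self zero_le_one
  obtain ⟨A₁, hA₁⟩ := hA
  obtain ⟨G₁, hG₁⟩ := hG
  obtain ⟨A₂, M, hA₂, hA₂_eq⟩ := exists_bddHolderSupp_eqOn A₁
  obtain ⟨G₂, N, hG₂, hG₂_eq⟩ := exists_bddHolderSupp_eqOn G₁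
  obtain ⟨v, v', hv, hva, hvb⟩ := exists_dbarSolution (hA₂.mono_const (le_max_left M N))
    (hG₂.mono_const (le_max_right M N)) a b
  obtain ⟨C, hC⟩ := hv.holder
  obtain ⟨x, hx, hx'⟩ :=
    exists_of_sqrtHolderOn (fun z _ => (hv.hasFDerivAt z).hasFDerivWithinAt) hC
  refine ⟨x, fun z hz => ?_, (hx 0 h0).trans hva, by rw [hx' 0 h0, hvb]⟩
  rw [hx z hz, hx' z hz, ← hA₁ z hz, ← hA₂_eq z hz, ← hG₁ z hz, ← hG₂_eq z hz]
  exact hv.eq z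

lemma apply_I_sub_I_smul_apply_one (ℓ : ℂ →L[ℝ] W) :
    ℓ Complex.I - Complex.I • ℓ 1 = (-2 * Complex.I) • dbarL ℓ := by
  rw [dbarL, smul_smul, smul_add, smul_smul,
    show -2 * Complex.I * (1 / 2) * Complex.I = 1 by linear_combination -Complex.I_mul_I,
    show -2 * Complex.I * (1 / 2) = -Complex.I by ring]
  module

/-- The imaginary part associated with the real part `re` of a real form. -/
def imPart (re : W →L[ℝ] V) : W →L[ℝ] V :=
  -(re.comp (Complex.I • ContinuousLinearMap.id ℝ W))

lemma imPart_apply (re : W →L[ℝ] V) (w : W) : imPart re w = -re (Complex.I • w) := rfl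

lemma imPart_I_smul (re : W →L[ℝ] V) (w : W) : imPart re (Complex.I • w) = re w := by
  rw [imPart_apply, smul_smul, Complex.I_mul_I, neg_one_smul, map_neg, neg_neg]

lemma IsRealForm.imPart_apply_eq_zero {ι : V →L[ℝ] W} {re : W →L[ℝ] V} (h : IsRealForm ι re)
    (v : V) : imPart re (ι v) = 0 := by
  rw [imPart_apply, h.re_I_smul, neg_zero]

/-- The zeroth order term of the Cauchy–Riemann operator linearised at `f`, in the unknown `v` of
the substitution `h = re v + J im v`; here `D` is the derivative of `J` along `f`. -/
def linearizedZerothOrder (J : V →L[ℝ] V) (D : V →L[ℝ] V →L[ℝ] V) (f' : ℂ →L[ℝ] V)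
    (re im : W →L[ℝ] V) : W →L[ℝ] V :=
  (D (f' Complex.I)).comp im - J.comp ((D (f' 1)).comp im)
    - (D.flip (f' 1)).comp (re + J.comp im)

lemma IsDiscHolder.linearizedZerothOrder {J : ℂ → V →L[ℝ] V} {D : ℂ → V →L[ℝ] V →L[ℝ] V}
    {f' : ℂ → ℂ →L[ℝ] V} (hJ : IsDiscHolder J) (hD : IsDiscHolder D) (hf' : IsDiscHolder f')
    (re im : W →L[ℝ] V) :
    IsDiscHolder fun z => linearizedZerothOrder (J z) (D z) (f' z) re im := by
  have hf'_apply (e : ℂ) : IsDiscHolder fun z => f' z e :=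
    hf'.map (ContinuousLinearMap.apply ℝ V e)
  have hD_im (e : ℂ) : IsDiscHolder fun z => (D z (f' z e)).comp im :=
    (hD.clm_apply (hf'_apply e)).comp_const im
  have hsubst : IsDiscHolder fun z => re + (J z).comp im :=
    .add (exists_ev_eq_const re) (hJ.comp_const im)
  exact ((hD_im Complex.I).sub (hJ.clm_comp (hD_im 1))).sub
    ((hD.flip.clm_apply (hf'_apply 1)).clm_comp hsubst)

/-- The second summand is `re δ + J im δ` for `δ = v' I - I • v' 1`. -/
lemma linearized_cauchyRiemann_substitution {J : V →L[ℝ] V} (sq : ∀ v, J (J v) = -v)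
    (D : V →L[ℝ] V →L[ℝ] V) (f' : ℂ →L[ℝ] V) (re : W →L[ℝ] V) (v : W) {v' : ℂ →L[ℝ] W}
    {h : V} {h' : ℂ →L[ℝ] V} (hh : h = re v + J (imPart re v))
    (hh' : h' = re.comp v' +
      (J.comp ((imPart re).comp v') + (D.comp f').flip (imPart re v))) :
    h' Complex.I - D h (f' 1) - J (h' 1) =
      linearizedZerothOrder J D f' re (imPart re) v +
        (re (v' Complex.I - Complex.I • v' 1)
          + J (imPart re (v' Complex.I - Complex.I • v' 1))) := by
  have hre : re (Complex.I • v' 1) = -imPart re (v' 1) := by rw [imPart_apply, neg_neg]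
  simp only [hh, hh', linearizedZerothOrder, map_sub, imPart_I_smul, hre, _root_.add_apply,
    _root_.sub_apply, ContinuousLinearMap.comp_apply, ContinuousLinearMap.flip_apply, map_add, sq]
  abel

lemma HolderC1.exists_substitution {j : V → V →L[ℝ] V} {dj : V → V →L[ℝ] V →L[ℝ] V}
    (hj : ∀ y, HasFDerivAt j (dj y) y) {f : HolderC1 V}
    (hjf : IsDiscHolder fun z => j (ev z (fn f))) (hdjf : IsDiscHolder fun z => dj (ev z (fn f)))
    (re im : W →L[ℝ] V) (v : HolderC1 W) :
    ∃ h : HolderC1 V, (∀ z ∈ closedBall (0 : ℂ) 1,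
        ev z (fn h) = re (ev z (fn v)) + j (ev z (fn f)) (im (ev z (fn v)))) ∧
      ∀ z ∈ closedBall (0 : ℂ) 1, ev z (dfn h) = re.comp (ev z (dfn v)) +
        ((j (ev z (fn f))).comp (im.comp (ev z (dfn v))) +
          ((dj (ev z (fn f))).comp (ev z (dfn f))).flip (im (ev z (fn v)))) := by
  have hv := IsDiscHolder.of_ev (fn v)
  have hv' := IsDiscHolder.of_ev (dfn v)
  have hf' := IsDiscHolder.of_ev (dfn f)
  refine exists_of_isDiscHolder ((hv.map re).add (hjf.clm_apply (hv.map im)))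
    ((hv'.const_comp re).add ((hjf.clm_comp (hv'.const_comp im)).add
      ((hdjf.clm_comp hf').flip.clm_apply (hv.map im)))) fun z hz => ?_
  have hvz := v.hasFDerivWithinAt hz
  exact (re.hasFDerivAt.comp_hasFDerivWithinAt z hvz).add
    (((hj _).comp_hasFDerivWithinAt z (f.hasFDerivWithinAt hz)).clm_apply
      (im.hasFDerivAt.comp_hasFDerivWithinAt z hvz))

lemma HolderC1.exists_cauchyRiemann_eq [CompleteSpace W] (ι : V →L[ℝ] W) {A : ℂ → W →L[ℝ] V}
    {g : ℂ → V} (hA : IsDiscHolder A) (hg : IsDiscHolder g) (a b : W) :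
    ∃ x : HolderC1 W, (∀ z ∈ closedBall (0 : ℂ) 1,
        ev z (dfn x) Complex.I - Complex.I • ev z (dfn x) 1 = ι (g z - A z (ev z (fn x)))) ∧
      ev 0 (fn x) = a ∧ ev 0 (dfn x) 1 = b := by
  let s : V →L[ℝ] W := (1 / 2 * Complex.I) • ι
  obtain ⟨x, hx, hxa, hxb⟩ := exists_dbar_eq (hA.const_comp s) (hg.map s) a b
  refine ⟨x, fun z hz => ?_, hxa, hxb⟩
  have hdbar : dbarL (ev z (dfn x)) = (1 / 2 * Complex.I) • ι (g z - A z (ev z (fn x))) := by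
    rw [eq_sub_iff_add_eq.2 (hx z hz), ContinuousLinearMap.comp_apply, ← map_sub]
    rfl
  rw [apply_I_sub_I_smul_apply_one, hdbar, smul_smul,
    show -2 * Complex.I * (1 / 2 * Complex.I) = 1 by linear_combination -Complex.I_mul_I, one_smul]

theorem HolderC1.exists_linearized_solution [FiniteDimensional ℝ V] {j : V → V →L[ℝ] V}
    {dj : V → V →L[ℝ] V →L[ℝ] V} (hj : ∀ y, HasFDerivAt j (dj y) y) {f : HolderC1 V}
    (hjf : IsDiscHolder fun z => j (ev z (fn f))) (hdjf : IsDiscHolder fun z => dj (ev z (fn f)))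
    (sq : ∀ z ∈ closedBall (0 : ℂ) 1, ∀ v, j (ev z (fn f)) (j (ev z (fn f)) v) = -v)
    (g : HolderSp V) (a b : V) :
    ∃ h : HolderC1 V, (∀ z ∈ closedBall (0 : ℂ) 1,
        ev z (dfn h) Complex.I - dj (ev z (fn f)) (ev z (fn h)) (ev z (dfn f) 1)
          - j (ev z (fn f)) (ev z (dfn h) 1) = ev z g) ∧
      ev 0 (fn h) = a ∧ ev 0 (dfn h) 1 = b := by
  have h0 : (0 : ℂ) ∈ closedBall (0 : ℂ) 1 := mem_closedBall_self zero_le_one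
  obtain ⟨N, ι, re, hι⟩ := exists_isRealForm V
  obtain ⟨v, hv, hva, hvb⟩ := exists_cauchyRiemann_eq ι
    (hjf.linearizedZerothOrder hdjf (.of_ev (dfn f)) re (imPart re)) (.of_ev g) (ι a) (ι b)
  obtain ⟨h, hh, hh'⟩ := exists_substitution hj hjf hdjf re (imPart re) v
  refine ⟨h, fun z hz => ?_, ?_, ?_⟩
  · rw [linearized_cauchyRiemann_substitution (sq z hz) _ _ re _ (hh z hz) (hh' z hz), hv z hz,
      hι.re_apply, hι.imPart_apply_eq_zero, map_zero, add_zero, add_sub_cancel]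
  · rw [hh 0 h0, hva, hι.re_apply, hι.imPart_apply_eq_zero, map_zero, add_zero]
  · simp only [hh' 0 h0, _root_.add_apply, ContinuousLinearMap.comp_apply,
      hva, hvb, hι.re_apply, hι.imPart_apply_eq_zero, map_zero, add_zero]

end LinearizedCauchyRiemann

section JetOpenness

variable {V : Type*} [NormedAddCommGroup V] [NormedSpace ℝ V]

open HolderSp

namespace HolderC1

/-- The derivative of an element of `HolderC1 V` in the constant direction `e`. -/
def dirDeriv (e : ℂ) : HolderC1 V →L[ℝ] HolderSp V :=
  (HolderSp.map (ContinuousLinearMap.apply ℝ V e)).comp dfn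

lemma ev_dirDeriv (e : ℂ) (x : HolderC1 V) {z : ℂ} (hz : z ∈ closedBall (0 : ℂ) 1) :
    ev z (dirDeriv e x) = ev z (dfn x) e :=
  ev_map _ _ hz

/-- The `1`-jet at the origin; the derivative is recorded by its value at `1`, which determines it
for a `J`-holomorphic map. -/
def jet : HolderC1 V →L[ℝ] V × V :=
  ((ev 0).comp fn).prod ((ContinuousLinearMap.apply ℝ V (1 : ℂ)).comp ((ev 0).comp dfn))

/-- The Cauchy–Riemann operator `x ↦ ∂x/∂t - j(x) ∂x/∂s` in the coordinate `s + it`, where `N` is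
the superposition operator of the structure `j`. -/
def cauchyRiemannOp (N : HolderSp V → HolderSp (V →L[ℝ] V)) (x : HolderC1 V) : HolderSp V :=
  dirDeriv Complex.I x - bilin (ContinuousLinearMap.id ℝ (V →L[ℝ] V)) (N (fn x)) (dirDeriv 1 x)

/-- The derivative of `cauchyRiemannOp N` at `f`, where `N'` is the superposition operator of the
derivative of the structure. -/
def cauchyRiemannOpDeriv (N : HolderSp V → HolderSp (V →L[ℝ] V))
    (N' : HolderSp V → HolderSp (V →L[ℝ] V →L[ℝ] V)) (f : HolderC1 V) :
    HolderC1 V →L[ℝ] HolderSp V :=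
  let app := bilin (ContinuousLinearMap.id ℝ (V →L[ℝ] V))
  let DN := bilin (ContinuousLinearMap.id ℝ (V →L[ℝ] V →L[ℝ] V)) (N' (fn f))
  dirDeriv Complex.I -
    ((app (N (fn f))).comp (dirDeriv 1) + (app.comp (DN.comp fn)).flip (dirDeriv 1 f))

variable {j : V → V →L[ℝ] V} {dj : V → V →L[ℝ] V →L[ℝ] V} {d2j : V → V →L[ℝ] V →L[ℝ] V →L[ℝ] V}
  {N : HolderSp V → HolderSp (V →L[ℝ] V)} {N' : HolderSp V → HolderSp (V →L[ℝ] V →L[ℝ] V)}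

lemma cauchyRiemannOp_eq_zero_iff (hN : IsSuperposition j N) {x : HolderC1 V} :
    cauchyRiemannOp N x = 0 ↔
      ∀ z ∈ closedBall (0 : ℂ) 1, ev z (dfn x) Complex.I = j (ev z (fn x)) (ev z (dfn x) 1) := by
  have hev : ∀ z ∈ closedBall (0 : ℂ) 1, ev z (cauchyRiemannOp N x) =
      ev z (dfn x) Complex.I - j (ev z (fn x)) (ev z (dfn x) 1) := fun z hz => by
    rw [cauchyRiemannOp, map_sub, ev_bilin _ _ _ hz, ev_dirDeriv _ _ hz, ev_dirDeriv _ _ hz,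
      hN _ z hz, ContinuousLinearMap.id_apply]
  refine ⟨fun h z hz => ?_, fun h => ext_ev fun z hz => ?_⟩
  · rw [← sub_eq_zero, ← hev z hz, h, map_zero]
  · rw [hev z hz, h z hz, sub_self, map_zero]

lemma ev_cauchyRiemannOpDeriv (hN : IsSuperposition j N) (hN' : IsSuperposition dj N')
    (f h : HolderC1 V) {z : ℂ} (hz : z ∈ closedBall (0 : ℂ) 1) :
    ev z (cauchyRiemannOpDeriv N N' f h) =
      ev z (dfn h) Complex.I - dj (ev z (fn f)) (ev z (fn h)) (ev z (dfn f) 1)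
        - j (ev z (fn f)) (ev z (dfn h) 1) := by
  simp only [cauchyRiemannOpDeriv, _root_.sub_apply, _root_.add_apply,
    ContinuousLinearMap.comp_apply, ContinuousLinearMap.flip_apply, map_sub, map_add,
    ev_bilin _ _ _ hz, ev_dirDeriv _ _ hz, hN _ z hz, hN' _ z hz, ContinuousLinearMap.id_apply]
  abel

lemma hasStrictFDerivAt_cauchyRiemannOp {L : ℝ} (hj : LipC1 L j dj) (hdj : LipC1 L dj d2j)
    (hN : IsSuperposition j N) (hN' : IsSuperposition dj N') (f : HolderC1 V) :
    HasStrictFDerivAt (cauchyRiemannOp N) (cauchyRiemannOpDeriv N N' f) f := by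
  have hNf := hj.hasStrictFDerivAt_superposition hdj hN hN' (fn f)
  have happ := (bilin (ContinuousLinearMap.id ℝ (V →L[ℝ] V))).hasStrictFDerivAt.comp f
    (hNf.comp f fn.hasStrictFDerivAt)
  exact (dirDeriv Complex.I).hasStrictFDerivAt.sub
    (happ.clm_apply (dirDeriv 1).hasStrictFDerivAt)

lemma cauchyRiemannOpDeriv_prod_jet_surjective [FiniteDimensional ℝ V] {L : ℝ}
    (hj : LipC1 L j dj) (hN : IsSuperposition j N) (hN' : IsSuperposition dj N') {f : HolderC1 V}
    (sq : ∀ z ∈ closedBall (0 : ℂ) 1, ∀ v, j (ev z (fn f)) (j (ev z (fn f)) v) = -v) :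
    Function.Surjective ((cauchyRiemannOpDeriv N N' f).prod jet) := by
  rintro ⟨g, a, b⟩
  obtain ⟨h, hh, h0, h1⟩ := exists_linearized_solution hj.hasFDerivAt
    ⟨N (fn f), hN (fn f)⟩ ⟨N' (fn f), hN' (fn f)⟩ sq g a b
  exact ⟨h, Prod.ext (ext_ev fun z hz => (ev_cauchyRiemannOpDeriv hN hN' f h hz).trans (hh z hz))
    (Prod.ext h0 h1)⟩

theorem eventually_exists_jHol [FiniteDimensional ℝ V] {L : ℝ} (hj : LipC1 L j dj)
    (hdj : LipC1 L dj d2j) {f : HolderC1 V}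
    (hf : ∀ z ∈ closedBall (0 : ℂ) 1, ev z (dfn f) Complex.I = j (ev z (fn f)) (ev z (dfn f) 1))
    (sq : ∀ z ∈ closedBall (0 : ℂ) 1, ∀ v, j (ev z (fn f)) (j (ev z (fn f)) v) = -v)
    {U : Set (HolderC1 V)} (hU : U ∈ 𝓝 f) :
    ∀ᶠ p in 𝓝 (jet f), ∃ x ∈ U, jet x = p ∧
      ∀ z ∈ closedBall (0 : ℂ) 1, ev z (dfn x) Complex.I = j (ev z (fn x)) (ev z (dfn x) 1) := by
  have : CompleteSpace V := FiniteDimensional.complete ℝ V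
  obtain ⟨N, hN⟩ := hj.exists_isSuperposition
  obtain ⟨N', hN'⟩ := hdj.exists_isSuperposition
  let Φ : HolderC1 V → HolderSp V × V × V := fun x => (cauchyRiemannOp N x, jet x)
  have hΦ : HasStrictFDerivAt Φ ((cauchyRiemannOpDeriv N N' f).prod jet) f :=
    (hasStrictFDerivAt_cauchyRiemannOp hj hdj hN hN' f).prodMk (jet (V := V)).hasStrictFDerivAt
  have hΦf : Φ f = (0, jet f) := Prod.ext ((cauchyRiemannOp_eq_zero_iff hN).2 hf) rfl
  have hopen : Φ '' U ∈ 𝓝 ((0 : HolderSp V), jet f) := by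
    rw [← hΦf, ← hΦ.map_nhds_eq_of_surj
      (LinearMap.range_eq_top.2 (cauchyRiemannOpDeriv_prod_jet_surjective hj hN hN' sq))]
    exact image_mem_map hU
  filter_upwards [(Continuous.prodMk_right (0 : HolderSp V)).continuousAt hopen]
    with p ⟨x, hxU, hx⟩
  exact ⟨x, hxU, congrArg Prod.snd hx, (cauchyRiemannOp_eq_zero_iff hN).1 (congrArg Prod.fst hx)⟩

lemma exists_of_jHolOn [FiniteDimensional ℝ V] {L R : ℝ} (hj : BddC1 L j dj) (hR : 1 < R)
    {f : ℂ → V} {f' : ℂ → ℂ →L[ℝ] V} (hf : JHolOn j (ball 0 R) f f') :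
    ∃ x : HolderC1 V, (∀ z ∈ closedBall (0 : ℂ) 1, ev z (fn x) = f z) ∧
      ∀ z ∈ closedBall (0 : ℂ) 1, ev z (dfn x) = f' z := by
  obtain ⟨C, hC⟩ := hf.exists_sqrtHolderOn_deriv hj hR
  exact exists_of_sqrtHolderOn (fun z hz =>
    (hf.hasFDerivAt z (closedBall_subset_ball hR hz)).hasFDerivWithinAt) hC

lemma hasFDerivAt (x : HolderC1 V) {z : ℂ} (hz : z ∈ ball (0 : ℂ) 1) :
    HasFDerivAt (fun w => ev w (fn x)) (ev z (dfn x)) z :=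
  (x.hasFDerivWithinAt (ball_subset_closedBall hz)).hasFDerivAt
    (mem_of_superset (isOpen_ball.mem_nhds hz) ball_subset_closedBall)

lemma eventually_forall_ev_mem {x : HolderC1 V} {O : Set V} (hO : IsOpen O)
    (hx : ∀ z ∈ closedBall (0 : ℂ) 1, ev z (fn x) ∈ O) :
    ∀ᶠ y in 𝓝 x, ∀ z ∈ closedBall (0 : ℂ) 1, ev z (fn y) ∈ O := by
  have hcont : ContinuousOn (fun z => ev z (fn x)) (closedBall (0 : ℂ) 1) :=
    (sqrtHolderOn_ev (fn x)).continuousOn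
  obtain ⟨δ, hδ, hδO⟩ := ((isCompact_closedBall (0 : ℂ) 1).image_of_continuousOn hcont)
    |>.exists_thickening_subset_open hO (image_subset_iff.2 hx)
  have hnear : ∀ᶠ y in 𝓝 x, ‖fn (y - x)‖ < δ :=
    (isOpen_lt (by fun_prop) continuous_const).mem_nhds (by simpa using hδ)
  filter_upwards [hnear] with y hy z hz
  refine hδO (mem_thickening_iff.2 ⟨ev z (fn x), mem_image_of_mem _ hz, ?_⟩)
  rw [dist_eq_norm, ← map_sub, ← map_sub]
  exact (norm_ev_le _ _).trans_lt hy

end HolderC1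

theorem JHolOn.eventually_exists_jet [FiniteDimensional ℝ V] {L R : ℝ} {j : V → V →L[ℝ] V}
    {dj : V → V →L[ℝ] V →L[ℝ] V} {d2j : V → V →L[ℝ] V →L[ℝ] V →L[ℝ] V} (hj : LipC1 L j dj)
    (hdj : LipC1 L dj d2j) (hR : 1 < R) {f : ℂ → V} {f' : ℂ → ℂ →L[ℝ] V}
    (hf : JHolOn j (ball 0 R) f f') {O : Set V} (hO : IsOpen O)
    (hfO : ∀ z ∈ closedBall (0 : ℂ) 1, f z ∈ O) :
    ∀ᶠ p : V × V in 𝓝 (f 0, f' 0 1), ∃ (g : ℂ → V) (g' : ℂ → ℂ →L[ℝ] V),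
      (∀ z ∈ ball (0 : ℂ) 1, HasFDerivAt g (g' z) z ∧ g' z Complex.I = j (g z) (g' z 1) ∧ g z ∈ O) ∧
        (g 0, g' 0 1) = p := by
  have h0 : (0 : ℂ) ∈ closedBall (0 : ℂ) 1 := mem_closedBall_self zero_le_one
  have hball : closedBall (0 : ℂ) 1 ⊆ ball 0 R := closedBall_subset_ball hR
  obtain ⟨x, hx, hx'⟩ := HolderC1.exists_of_jHolOn hj.toBddC1 hR hf
  have hjet : x.jet = (f 0, f' 0 1) := Prod.ext (hx 0 h0) (congrArg (· 1) (hx' 0 h0))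
  have hopen := HolderC1.eventually_exists_jHol hj hdj
    (fun z hz => by rw [hx z hz, hx' z hz]; exact hf.eq z (hball hz))
    (fun z hz v => by rw [hx z hz]; exact hf.sq z (hball hz) v)
    (HolderC1.eventually_forall_ev_mem hO fun z hz => (hx z hz).symm ▸ hfO z hz)
  rw [hjet] at hopen
  filter_upwards [hopen] with p ⟨y, hyO, hyp, hy⟩
  refine ⟨fun z => ev z y.fn, fun z => ev z y.dfn, fun z hz => ?_, hyp⟩
  have hz' := ball_subset_closedBall hz
  exact ⟨y.hasFDerivAt hz, hy z hz', hyO z hz'⟩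

end JetOpenness

section GlobalExtension

variable {V Y : Type*} [NormedAddCommGroup V] [NormedSpace ℝ V] [NormedAddCommGroup Y]
  [NormedSpace ℝ Y]

lemma LipC1.mono_const {L L' : ℝ} {φ : V → Y} {φ' : V → V →L[ℝ] Y} (h : LipC1 L φ φ')
    (hL : L ≤ L') : LipC1 L' φ φ' where
  norm_le x := (h.norm_le x).trans hL
  hasFDerivAt := h.hasFDerivAt
  norm_deriv_le x := (h.norm_deriv_le x).trans hL
  norm_deriv_sub_le x y := (h.norm_deriv_sub_le x y).trans (by gcongr)

lemma exists_norm_sub_le_of_hasCompactSupport {ψ : V → Y} (hc : HasCompactSupport ψ)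
    (hψ : ContDiff ℝ 1 ψ) : ∃ C, ∀ x y, ‖ψ x - ψ y‖ ≤ C * ‖x - y‖ := by
  obtain ⟨C, hC⟩ := (hc.fderiv (𝕜 := ℝ)).exists_bound_of_continuous
    (hψ.continuous_fderiv one_ne_zero)
  exact ⟨C, fun x y => convex_univ.norm_image_sub_le_of_norm_fderiv_le
    (fun z _ => (hψ.differentiable one_ne_zero).differentiableAt) (fun z _ => hC z)
    (mem_univ y) (mem_univ x)⟩

lemma exists_lipC1_of_hasCompactSupport {φ : V → Y} (hc : HasCompactSupport φ)
    (hφ : ContDiff ℝ 2 φ) : ∃ L, LipC1 L φ (fderiv ℝ φ) := by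
  have hφ' : ContDiff ℝ 1 (fderiv ℝ φ) := hφ.fderiv_right le_rfl
  have hc' : HasCompactSupport (fderiv ℝ φ) := hc.fderiv (𝕜 := ℝ)
  obtain ⟨A, hA⟩ := hc.exists_bound_of_continuous hφ.continuous
  obtain ⟨B, hB⟩ := hc'.exists_bound_of_continuous hφ'.continuous
  obtain ⟨C, hC⟩ := exists_norm_sub_le_of_hasCompactSupport hc' hφ'
  exact ⟨max A (max B C),
    { norm_le x := (hA x).trans (le_max_left _ _)
      hasFDerivAt x := (hφ.differentiable two_ne_zero x).hasFDerivAt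
      norm_deriv_le x := (hB x).trans (by simp)
      norm_deriv_sub_le x y := (hC x y).trans (by gcongr; simp) }⟩

variable [FiniteDimensional ℝ V] {J : V → Y} {D K : Set V}

lemma exists_contDiff_hasCompactSupport_eqOn {n : ℕ∞} (hD : IsOpen D) (hJ : ContDiffOn ℝ n J D)
    (hK : IsCompact K) (hKD : K ⊆ D) :
    ∃ j : V → Y, ContDiff ℝ n j ∧ HasCompactSupport j ∧
      ∃ O, IsOpen O ∧ K ⊆ O ∧ O ⊆ D ∧ EqOn j J O := by
  have : ProperSpace V := FiniteDimensional.proper ℝ V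
  obtain ⟨t, ht, hKt, htD⟩ := exists_compact_between hK hD hKD
  obtain ⟨χ, hχ_one, hχ_zero, -⟩ := exists_contMDiffMap_one_nhds_of_subset_interior (n := n)
    (modelWithCornersSelf ℝ V) hK.isClosed hKt
  obtain ⟨O, hO, hKO, hχO⟩ := mem_nhdsSet_iff_exists.1 hχ_one
  have hzero : ∀ x ∉ t, χ x • J x = 0 := fun x hx => by rw [hχ_zero x hx, zero_smul]
  refine ⟨fun x => χ x • J x, contDiff_iff_contDiffAt.2 fun x => ?_, .intro ht hzero, O ∩ D,
    hO.inter hD, subset_inter hKO hKD, inter_subset_right, fun x hx => ?_⟩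
  · by_cases hx : x ∈ D
    · exact χ.contMDiff.contDiff.contDiffAt.smul (hJ.contDiffAt (hD.mem_nhds hx))
    · refine (contDiffAt_const (c := (0 : Y))).congr_of_eventuallyEq ?_
      filter_upwards [ht.isClosed.isOpen_compl.mem_nhds fun h => hx (htD h)] with y hy
      exact hzero y hy
  · change χ x • J x = J x
    rw [show χ x = 1 from hχO hx.1, one_smul]

lemma exists_lipC1_eqOn (hD : IsOpen D) (hJ : ContDiffOn ℝ 3 J D) (hK : IsCompact K)
    (hKD : K ⊆ D) :
    ∃ (L : ℝ) (j : V → Y), LipC1 L j (fderiv ℝ j) ∧ LipC1 L (fderiv ℝ j) (fderiv ℝ (fderiv ℝ j)) ∧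
      ∃ O, IsOpen O ∧ K ⊆ O ∧ O ⊆ D ∧ EqOn j J O := by
  obtain ⟨j, hj, hc, hO⟩ := exists_contDiff_hasCompactSupport_eqOn (n := 3) hD hJ hK hKD
  obtain ⟨L₁, h₁⟩ := exists_lipC1_of_hasCompactSupport hc (hj.of_le (by norm_num))
  obtain ⟨L₂, h₂⟩ := exists_lipC1_of_hasCompactSupport (hc.fderiv (𝕜 := ℝ))
    (hj.fderiv_right (m := 2) (by norm_num))
  exact ⟨max L₁ L₂, j, h₁.mono_const (le_max_left _ _), h₂.mono_const (le_max_right _ _), hO⟩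

end GlobalExtension

section KobayashiMetric

variable {V : Type*} [NormedAddCommGroup V]

lemma JHolOn.congr [NormedSpace ℝ V] {J j : V → V →L[ℝ] V} {s : Set ℂ} {f : ℂ → V}
    {f' : ℂ → ℂ →L[ℝ] V} {O : Set V} (hf : JHolOn J s f f') (hj : EqOn j J O)
    (hfO : MapsTo f s O) : JHolOn j s f f' where
  hasFDerivAt := hf.hasFDerivAt
  eq z hz := by rw [hj (hfO hz)]; exact hf.eq z hz
  sq z hz v := by rw [hj (hfO hz)]; exact hf.sq z hz v

variable [NormedSpace ℂ V] {J : V → V →L[ℝ] V} {D : Set V}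

lemma IsJDisc.jHolOn (hsq : ∀ x ∈ D, (J x).comp (J x) = -(ContinuousLinearMap.id ℝ V))
    {f : ℂ → V} (hf : IsJDisc J D f) : JHolOn J (ball 0 1) f (fderiv ℝ f) where
  hasFDerivAt z hz := (hf.2 z hz).1.hasFDerivAt
  eq z hz := by simpa [Jst] using DFunLike.congr_fun (hf.2 z hz).2 1
  sq z hz := DFunLike.congr_fun (hsq _ (hf.1 hz))

lemma isJDisc_of_hasFDerivAt (hsq : ∀ x ∈ D, (J x).comp (J x) = -(ContinuousLinearMap.id ℝ V))
    {g : ℂ → V} {g' : ℂ → ℂ →L[ℝ] V} (hD : MapsTo g (ball 0 1) D)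
    (hg : ∀ z ∈ ball (0 : ℂ) 1, HasFDerivAt g (g' z) z ∧ g' z Complex.I = J (g z) (g' z 1)) :
    IsJDisc J D g := by
  refine ⟨hD, fun z hz => ⟨(hg z hz).1.differentiableAt, ?_⟩⟩
  obtain ⟨hderiv, heq⟩ := hg z hz
  have hsq_apply (v : V) : J (g z) (J (g z) v) = -v := DFunLike.congr_fun (hsq _ (hD hz)) v
  rw [hderiv.fderiv]
  ext x
  change g' z (Complex.I • x) = J (g z) (g' z x)
  rw [apply_eq_re_im (g' z) x, apply_eq_re_im (g' z) (Complex.I • x), map_add, map_smul, map_smul,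
    heq, hsq_apply]
  simp only [smul_eq_mul, Complex.mul_re, Complex.mul_im, Complex.I_re, Complex.I_im]
  module

theorem IsJDisc.eventually_exists_jet [FiniteDimensional ℂ V] (hD : IsOpen D)
    (hJ : ContDiffOn ℝ 3 J D)
    (hsq : ∀ x ∈ D, (J x).comp (J x) = -(ContinuousLinearMap.id ℝ V)) {f : ℂ → V}
    (hf : IsJDisc J D f) {r : ℝ} (hr0 : 0 < r) (hr1 : r < 1) :
    ∀ᶠ p : V × V in 𝓝 (f 0, r • fderiv ℝ f 0 1),
      ∃ g, IsJDisc J D g ∧ (g 0, fderiv ℝ g 0 1) = p := by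
  have hfJ := hf.jHolOn hsq
  obtain ⟨ρ, hrρ, hρ1⟩ := exists_between hr1
  have hρ : closedBall (0 : ℂ) ρ ⊆ ball 0 1 := closedBall_subset_ball hρ1
  have hR : 1 < ρ / r := (one_lt_div hr0).2 hrρ
  have hscale : MapsTo (fun z : ℂ => 0 + r * z) (ball 0 (ρ / r)) (closedBall 0 ρ) := fun z hz => by
    rw [mem_ball_zero_iff, lt_div_iff₀' hr0] at hz
    change (0 + r * z : ℂ) ∈ closedBall 0 ρ
    rw [mem_closedBall_zero_iff, zero_add, norm_mul, Complex.norm_real, Real.norm_of_nonneg hr0.le]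
    exact hz.le
  have hcont : ContinuousOn f (closedBall 0 ρ) := fun z hz =>
    (hfJ.hasFDerivAt z (hρ hz)).continuousAt.continuousWithinAt
  obtain ⟨L, j, hj, hdj, O, hO, hfO, hOD, hjJ⟩ := exists_lipC1_eqOn hD hJ
    ((isCompact_closedBall (0 : ℂ) ρ).image_of_continuousOn hcont)
    (image_subset_iff.2 fun z hz => hf.1 (hρ hz))
  have hmaps : MapsTo (fun z : ℂ => f (0 + r * z)) (ball 0 (ρ / r)) O := fun z hz =>
    hfO (mem_image_of_mem f (hscale hz))
  have hrescaled := (hfJ.comp_affine 0 r fun z hz => hρ (hscale hz)).congr hjJ hmaps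
  have hopen := hrescaled.eventually_exists_jet hj hdj hR hO fun z hz =>
    hmaps (closedBall_subset_ball hR hz)
  simp only [mul_zero, add_zero] at hopen
  filter_upwards [hopen] with p ⟨g, g', hg, hp⟩
  refine ⟨g, isJDisc_of_hasFDerivAt hsq (fun z hz => hOD (hg z hz).2.2) (g' := g') fun z hz => ?_,
    ?_⟩
  · obtain ⟨hderiv, heq, hgO⟩ := hg z hz
    exact ⟨hderiv, by rw [heq, hjJ hgO]⟩
  · rw [(hg 0 (mem_ball_self one_pos)).1.fderiv, hp]

lemma kobayashiMetric_le {f : ℂ → V} (hf : IsJDisc J D f) {v : V} {α : ℝ} (hα : 0 < α)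
    (hv : fderiv ℝ f 0 1 = α⁻¹ • v) : kobayashiMetric J D (f 0) v ≤ α :=
  csInf_le ⟨0, fun _ h => h.1.le⟩ ⟨hα, f, hf, rfl, hv⟩

lemma exists_isJDisc_fderiv_eq [FiniteDimensional ℂ V] (hD : IsOpen D) (hJ : ContDiffOn ℝ 3 J D)
    (hsq : ∀ x ∈ D, (J x).comp (J x) = -(ContinuousLinearMap.id ℝ V)) {p : V} (hp : p ∈ D)
    (v : V) : ∃ α : ℝ, 0 < α ∧ ∃ f : ℂ → V, IsJDisc J D f ∧ f 0 = p ∧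
      fderiv ℝ f 0 1 = α⁻¹ • v := by
  have hconst : IsJDisc J D fun _ : ℂ => p :=
    ⟨fun _ _ => hp, fun _ _ => ⟨differentiableAt_const p, by ext; simp⟩⟩
  have hopen := hconst.eventually_exists_jet hD hJ hsq one_half_pos one_half_lt_one
  have hlim : Tendsto (fun t : ℝ => (p, t • v)) (𝓝[>] 0)
      (𝓝 (p, (1 / 2 : ℝ) • fderiv ℝ (fun _ : ℂ => p) 0 1)) :=
    (Continuous.tendsto' (by fun_prop) _ _ (by simp)).mono_left nhdsWithin_le_nhds
  obtain ⟨t, ⟨g, hg, hjet⟩, ht⟩ := ((hlim.eventually hopen).and self_mem_nhdsWithin).exists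
  obtain ⟨hg0, hg1⟩ := Prod.mk.inj hjet
  exact ⟨t⁻¹, inv_pos.2 ht, g, hg, hg0, by rw [hg1, inv_inv]⟩

theorem statement18_general [FiniteDimensional ℂ V] (hD : IsOpen D) (hJ : ContDiffOn ℝ 3 J D)
    (hsq : ∀ x ∈ D, (J x).comp (J x) = -(ContinuousLinearMap.id ℝ V)) :
    UpperSemicontinuousOn (fun pv : V × V => kobayashiMetric J D pv.1 pv.2) (D ×ˢ univ) := by
  rintro ⟨p, v⟩ ⟨hp, -⟩ y hy
  refine nhdsWithin_le_nhds ?_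
  obtain ⟨α, ⟨hα, f, hf, rfl, hfv⟩, hαy⟩ :=
    exists_lt_of_csInf_lt (exists_isJDisc_fderiv_eq hD hJ hsq hp v) hy
  have hy0 : 0 < y := hα.trans hαy
  obtain ⟨r, hr, hr1⟩ := exists_between ((div_lt_one hy0).2 hαy)
  have hr0 : 0 < r := (div_pos hα hy0).trans hr
  have hopen := hf.eventually_exists_jet hD hJ hsq hr0 hr1
  rw [hfv] at hopen
  have hlim : Tendsto (fun q : V × V => (q.1, r • α⁻¹ • q.2)) (𝓝 (f 0, v))
      (𝓝 (f 0, r • α⁻¹ • v)) := Continuous.tendsto (by fun_prop) (f 0, v)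
  filter_upwards [hlim.eventually hopen] with q ⟨g, hg, hjet⟩
  obtain ⟨hg0, hg1⟩ := Prod.mk.inj hjet
  calc kobayashiMetric J D q.1 q.2 = kobayashiMetric J D (g 0) q.2 := by rw [hg0]
    _ ≤ α / r := kobayashiMetric_le hg (div_pos hα hr0) <| by
      rw [hg1, smul_smul, inv_div, div_eq_mul_inv]
    _ < y := (div_lt_comm₀ hy0 hr0).1 hr

end KobayashiMetric

/-- **Upper semicontinuity of the Kobayashi–Royden infinitesimal pseudometric**
on `D × ℝ^{2n}`. -/
theorem statement18 {n : ℕ}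
    (Ω : Set (EuclideanSpace ℂ (Fin n))) (hΩ : IsOpen Ω)
    (J : EuclideanSpace ℂ (Fin n) →
      EuclideanSpace ℂ (Fin n) →L[ℝ] EuclideanSpace ℂ (Fin n))
    (hJ : IsACS Ω J)
    (D : Set (EuclideanSpace ℂ (Fin n))) (hDopen : IsOpen D)
    (hDconn : IsConnected D) (hDΩ : D ⊆ Ω) :
    UpperSemicontinuousOn
      (fun pv : EuclideanSpace ℂ (Fin n) × EuclideanSpace ℂ (Fin n) =>
        kobayashiMetric J D pv.1 pv.2)
      (D ×ˢ (univ : Set (EuclideanSpace ℂ (Fin n)))) := 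
  statement18_general hDopen (contDiffOn_infty.1 (hJ.smooth.mono hDΩ) 3) fun x hx =>
    hJ.sq x (hDΩ hx)

end
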